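/- arXiv:2411.15308 — 2 statements merged into one kernel-verified Lean document; each statement's English description precedes it below -/
import Mathlib

section
/- Let J(t) = |t|, and let g : ℝ → [0,∞) be a measurable 2π-periodic function with g ∈ L¹(−π,π), g = g^{*per}, and g strictly decreasing on (0,π). Let u, v : (−π,π) → [0,∞) be nonnegative measurable functions with ∫_{−π}^{π}∫_{−π}^{π} |u(x) − v(y)| g(x−y) dx dy finite, and extend u and v to ℝ in a 2π-periodic way. Then equality ∫∫ |u^{*}(x) − v^{*}(y)| g(x−y) dx dy = ∫∫ |u(x) − v(y)| g(x−y) dx dy holds if and only if for every τ ∈ (ess inf u, ess sup u) ∩ (ess inf v, ess sup v) there exists z_τ ∈ ℝ such that {u > τ} = {u^{*per} > τ} − z_τ and {v > τ} = {v^{*per} > τ} − z_τ, up to sets of Lebesgue measure zero. -/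
open MeasureTheory Real

/-- For a measurable set `A ⊂ ℝ` of finite measure, `A^* := (−|A|/2, |A|/2)`. -/
noncomputable def symmSet (A : Set ℝ) : Set ℝ :=
  Set.Ioo (-((volume A).toReal / 2)) ((volume A).toReal / 2)

/-- Symmetric decreasing rearrangement of a (nonnegative) function on `(−π,π)`:
`u^*(x) := ∫₀^∞ χ_{{u>t}^*}(x) dt`. -/
noncomputable def symmRearr (u : ℝ → ℝ) : ℝ → ℝ := fun x =>
  ∫ t in Set.Ioi (0 : ℝ),
    (symmSet {y | y ∈ Set.Ioo (-π) π ∧ t < u y}).indicator (fun _ => (1 : ℝ)) x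

/-- The `2π`-periodic extension of (the restriction to `[−π,π)` of) a function. -/
noncomputable def periodize (f : ℝ → ℝ) : ℝ → ℝ := fun x =>
  f (x - 2 * π * (⌊(x + π) / (2 * π)⌋ : ℝ))

/-- The periodic rearrangement `f^{*per}`: the `2π`-periodic extension of `(f·χ_{(−π,π)})^*`. -/
noncomputable def perRearr (f : ℝ → ℝ) : ℝ → ℝ := periodize (symmRearr f)

/-!
The layer-cake formula applied to `|u(x) - v(y)|` writes the double integral as an integral over
`t` of the mass which `g(x - y) dx dy` gives to the pairs with exactly one of `u(x) > t` and
`v(y) > t`. The marginals of this measure are multiples of Lebesgue measure, so up to a constant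
this mass is `-2` times the interaction energy of the level sets `{u > t}` and `{v > t}`, and
the theorem is the equality case of Riesz's rearrangement inequality for sets on the circle, applied
at almost every level.

Polarizing two sets in a common axis never decreases their interaction. On average over all axes it
also brings them closer to the central arcs of the same lengths, by an amount quadratic in the
remaining distance, so this distance has infimum zero and Riesz's inequality follows.

In the case of equality no polarization can increase the interaction: relative to every axis the two
sets lean to the same side. The side is seen by the first moment of a set. This moment cannot vanish
for a nontrivial set, since otherwise every reflection would preserve one of the two sets, whereas
almost no reflection preserves a nontrivial set. Hence both sets lean towards the same point of the
circle, and each of them is an arc centred there. The interaction of the level sets is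
right-continuous in the level, so equality at almost every level is equality at every level.
-/

namespace CircleRearrangement

open Set Filter
open scoped ENNReal Topology Pointwise symmDiff

section Measure

variable {α β : Type*} [MeasurableSpace α] [MeasurableSpace β] {μ : Measure α}

lemma volume_Iio_symmDiff_Iio (a b : ℝ) :
    volume (Iio a ∆ Iio b) = ENNReal.ofReal |a - b| := by
  wlog hab : a ≤ b generalizing a b
  · rw [symmDiff_comm, abs_sub_comm, this b a (le_of_not_ge hab)]
  · rw [symmDiff_of_le (Iio_subset_Iio hab), Iio_sdiff_Iio, Real.volume_Ico, abs_sub_comm,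
      abs_of_nonneg (sub_nonneg.2 hab)]

lemma lintegral_abs_sub_eq_lintegral_measure_symmDiff [SFinite μ] {f g : α → ℝ}
    (hf : Measurable f) (hg : Measurable g) :
    ∫⁻ x, ENNReal.ofReal |f x - g x| ∂μ = ∫⁻ t : ℝ, μ ({x | t < f x} ∆ {x | t < g x}) := by
  have hS : MeasurableSet ({p : α × ℝ | p.2 < f p.1} ∆ {p | p.2 < g p.1}) :=
    (measurableSet_lt measurable_snd (hf.comp measurable_fst)).symmDiff
      (measurableSet_lt measurable_snd (hg.comp measurable_fst))
  calc ∫⁻ x, ENNReal.ofReal |f x - g x| ∂μ = ∫⁻ x, volume (Iio (f x) ∆ Iio (g x)) ∂μ := by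
        simp only [volume_Iio_symmDiff_Iio]
    _ = μ.prod volume ({p : α × ℝ | p.2 < f p.1} ∆ {p | p.2 < g p.1}) :=
        (Measure.prod_apply hS).symm
    _ = ∫⁻ t : ℝ, μ ({x | t < f x} ∆ {x | t < g x}) := Measure.prod_apply_symm hS

lemma measure_symmDiff_add_two_mul_measure_inter {s t : Set α} (hs : MeasurableSet s)
    (ht : MeasurableSet t) : μ (s ∆ t) + 2 * μ (s ∩ t) = μ s + μ t := by
  rw [measure_symmDiff_eq hs.nullMeasurableSet ht.nullMeasurableSet, ← measure_sdiff_add_inter s ht,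
    ← measure_sdiff_add_inter t hs, inter_comm t s]
  ring

lemma tendsto_measure_setOf_lt_nhdsGT (f : α → ℝ) (a : ℝ) :
    Tendsto (fun t => μ {x | t < f x}) (𝓝[>] a) (𝓝 (μ {x | a < f x})) := by
  have hanti : Antitone fun t : Ioi a => {x | (t : ℝ) < f x} :=
    fun s t (hst : (s : ℝ) ≤ t) x (hx : (t : ℝ) < f x) => hst.trans_lt hx
  have hunion : ⋃ t : Ioi a, {x | (t : ℝ) < f x} = {x | a < f x} := by
    ext x
    simp only [mem_iUnion, mem_ofPred_eq, Subtype.exists, mem_Ioi, exists_prop]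
    exact ⟨fun ⟨t, hat, htx⟩ => hat.trans htx, exists_between⟩
  rw [← tendsto_comp_coe_Ioi_atBot, ← hunion]
  exact tendsto_measure_iUnion_atBot hanti

lemma frequently_nhdsGT_of_ae {p : ℝ → Prop} (hp : ∀ᵐ t, p t) (a : ℝ) :
    ∃ᶠ t in 𝓝[>] a, p t := by
  refine frequently_iff.2 fun {U} hU => ?_
  obtain ⟨b, hab, hbU⟩ := mem_nhdsGT_iff_exists_Ioo_subset.1 hU
  obtain ⟨t, ht, htab⟩ := (Measure.dense_of_ae hp).exists_between hab
  exact ⟨t, hbU htab, ht⟩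

lemma measure_setOf_lt_eq_of_ae {ν : Measure β} {f : α → ℝ} {g : β → ℝ}
    (h : ∀ᵐ t : ℝ, μ {x | t < f x} = ν {y | t < g y}) (a : ℝ) :
    μ {x | a < f x} = ν {y | a < g y} :=
  tendsto_nhds_unique_of_frequently_eq (tendsto_measure_setOf_lt_nhdsGT f a)
    (tendsto_measure_setOf_lt_nhdsGT g a) (frequently_nhdsGT_of_ae h a)

lemma measurePreserving_withDensity_comp {ν : Measure β} {φ : α → β} (hφ : MeasurePreserving φ μ ν)
    {k : β → ℝ≥0∞} (hk : Measurable k) :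
    MeasurePreserving φ (μ.withDensity (k ∘ φ)) (ν.withDensity k) := by
  refine ⟨hφ.measurable, Measure.ext fun s hs => ?_⟩
  rw [Measure.map_apply hφ.measurable hs, withDensity_apply _ hs,
    withDensity_apply _ (hφ.measurable hs)]
  exact hφ.setLIntegral_comp_preimage hs hk

lemma measure_union_prod {ν : Measure (α × β)} {s s' : Set α} {t : Set β} (hd : Disjoint s s')
    (hs' : MeasurableSet s') (ht : MeasurableSet t) :
    ν ((s ∪ s') ×ˢ t) = ν (s ×ˢ t) + ν (s' ×ˢ t) := by
  rw [union_prod, measure_union (hd.set_prod_left t t) (hs'.prod ht)]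

lemma measure_prod_union {ν : Measure (α × β)} {s : Set α} {t t' : Set β} (hd : Disjoint t t')
    (hs : MeasurableSet s) (ht' : MeasurableSet t') :
    ν (s ×ˢ (t ∪ t')) = ν (s ×ˢ t) + ν (s ×ˢ t') := by
  rw [prod_union, measure_union (hd.set_prod_right s s) (hs.prod ht')]

lemma measure_union_union_prod_union_union {ν : Measure (α × β)} {s₁ s₂ s₃ : Set α}
    {t₁ t₂ t₃ : Set β} (hs₁ : MeasurableSet s₁) (hs₂ : MeasurableSet s₂) (hs₃ : MeasurableSet s₃)
    (ht₁ : MeasurableSet t₁) (ht₂ : MeasurableSet t₂) (ht₃ : MeasurableSet t₃)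
    (hs : Disjoint s₁ s₂) (hs' : Disjoint (s₁ ∪ s₂) s₃)
    (ht : Disjoint t₁ t₂) (ht' : Disjoint (t₁ ∪ t₂) t₃) :
    ν ((s₁ ∪ s₂ ∪ s₃) ×ˢ (t₁ ∪ t₂ ∪ t₃)) =
      ν (s₁ ×ˢ t₁) + ν (s₁ ×ˢ t₂) + ν (s₁ ×ˢ t₃) +
      (ν (s₂ ×ˢ t₁) + ν (s₂ ×ˢ t₂) + ν (s₂ ×ˢ t₃)) +
      (ν (s₃ ×ˢ t₁) + ν (s₃ ×ˢ t₂) + ν (s₃ ×ˢ t₃)) := by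
  have hT : MeasurableSet (t₁ ∪ t₂ ∪ t₃) := (ht₁.union ht₂).union ht₃
  rw [measure_union_prod hs' hs₃ hT, measure_union_prod hs hs₂ hT,
    measure_prod_union ht' hs₁ ht₃, measure_prod_union ht hs₁ ht₂,
    measure_prod_union ht' hs₂ ht₃, measure_prod_union ht hs₂ ht₂,
    measure_prod_union ht' hs₃ ht₃, measure_prod_union ht hs₃ ht₂]

lemma sInf_eq_zero_of_forall_exists_add_mul_sq_le {S : Set ℝ≥0∞} {c : ℝ≥0∞} (hc : c ≠ 0)
    (hfin : ∃ a ∈ S, a ≠ ⊤) (hstep : ∀ a ∈ S, ∃ b ∈ S, b + c * a ^ 2 ≤ a) : sInf S = 0 := by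
  have hne : sInf S ≠ ⊤ := by
    obtain ⟨a, ha, ha'⟩ := hfin
    exact ne_top_of_le_ne_top ha' (sInf_le ha)
  have hle : ∀ a ∈ S, sInf S + c * sInf S ^ 2 ≤ a := fun a ha => by
    obtain ⟨b, hb, hba⟩ := hstep a ha
    calc sInf S + c * sInf S ^ 2 ≤ b + c * a ^ 2 := by gcongr; exacts [sInf_le hb, sInf_le ha]
      _ ≤ a := hba
  have hself : sInf S + c * sInf S ^ 2 ≤ sInf S + 0 := by simpa using le_sInf hle
  have hzero := nonpos_iff_eq_zero.1 ((ENNReal.add_le_add_iff_left hne).1 hself)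
  simpa [hc] using hzero

end Measure

section Circle

instance : Fact (0 < 2 * π) := ⟨two_pi_pos⟩

noncomputable instance : MeasureSpace Angle :=
  inferInstanceAs (MeasureSpace (AddCircle (2 * π)))

instance : BorelSpace Angle := inferInstanceAs (BorelSpace (AddCircle (2 * π)))

instance : CompactSpace Angle := inferInstanceAs (CompactSpace (AddCircle (2 * π)))

instance : (volume : Measure Angle).IsAddHaarMeasure :=
  inferInstanceAs (volume : Measure (AddCircle (2 * π))).IsAddHaarMeasure

instance : ConnectedSpace Angle := inferInstanceAs (ConnectedSpace (AddCircle (2 * π)))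

instance : Nontrivial Angle := ⟨⟨π, 0, Angle.pi_ne_zero⟩⟩

/-- Reflection of the circle in the line through the points `h` and `h + π`. -/
noncomputable def reflect (h x : Angle) : Angle := h + h - x

variable {h x : Angle} {U V : Set Angle}

@[simp] lemma reflect_reflect (h x : Angle) : reflect h (reflect h x) = x := by simp [reflect]

lemma reflect_sub_reflect (h x y : Angle) : reflect h x - reflect h y = -(x - y) := by
  simp only [reflect]; abel

lemma reflect_sub_axis (h x : Angle) : reflect h x - h = -(x - h) := by
  simp only [reflect]; abel

lemma reflect_add_pi (h : Angle) : reflect (h + π) = reflect h := by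
  funext x
  simp only [reflect, add_add_add_comm, Angle.coe_pi_add_coe_pi, add_zero]

lemma cos_sub_sub_cos_sub_reflect (h x y : Angle) :
    (x - y).cos - (x - reflect h y).cos = 2 * ((x - h).sin * (y - h).sin) := by
  rw [show x - y = (x - h) + -(y - h) by abel,
    show x - reflect h y = (x - h) + (y - h) by simp only [reflect]; abel,
    Angle.cos_add, Angle.cos_add, Angle.cos_neg, Angle.sin_neg]
  ring

lemma cos_sub_cos_reflect (h x : Angle) :
    x.cos - (reflect h x).cos = 2 * ((-h).sin * (x - h).sin) := by
  have hzero := cos_sub_sub_cos_sub_reflect h 0 x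
  rwa [zero_sub, zero_sub, zero_sub, Angle.cos_neg, Angle.cos_neg] at hzero

lemma reflect_eq_self_of_sin_sub_eq_zero (hx : (x - h).sin = 0) : reflect h x = x := by
  have hdouble : (x - h) + (x - h) = 0 := by
    rcases Angle.sin_eq_zero_iff.1 hx with hx | hx <;> simp [hx]
  rw [← sub_eq_zero, ← neg_eq_zero, ← hdouble, reflect]
  abel

lemma measurePreserving_reflect (h : Angle) : MeasurePreserving (reflect h) :=
  Measure.measurePreserving_sub_left volume (h + h)

lemma measurePreserving_reflect_axis (x : Angle) :
    MeasurePreserving fun h : Angle => reflect h x := by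
  have hdouble : MeasurePreserving fun h : Angle => 2 • h + -x :=
    (AddCircle.ergodic_nsmul_add (T := 2 * π) (-x) one_lt_two).toMeasurePreserving
  simpa only [reflect, two_nsmul, sub_eq_add_neg] using hdouble

lemma measurable_reflect (h : Angle) : Measurable (reflect h) :=
  (measurePreserving_reflect h).measurable

lemma measurableEmbedding_reflect (h : Angle) : MeasurableEmbedding (reflect h) :=
  (Homeomorph.subLeft (h + h)).measurableEmbedding

lemma volume_preimage_reflect (h : Angle) (hU : MeasurableSet U) :
    volume (reflect h ⁻¹' U) = volume U :=
  (measurePreserving_reflect h).measure_preimage hU.nullMeasurableSet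

lemma ae_sin_neg_ne_zero : ∀ᵐ h : Angle, (-h).sin ≠ 0 := by
  have hfin : ({0, (π : Angle)} : Set Angle).Countable := (Set.toFinite _).countable
  filter_upwards [hfin.ae_notMem volume] with h hh
  simpa [Angle.sin_neg, Angle.sin_eq_zero_iff] using hh

lemma lintegral_volume_inter_preimage_reflect (hU : MeasurableSet U) (hV : MeasurableSet V) :
    ∫⁻ h, volume (U ∩ reflect h ⁻¹' V) = volume U * volume V := by
  have hmeas : MeasurableSet {p : Angle × Angle | p.2 ∈ U ∧ reflect p.1 p.2 ∈ V} :=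
    (measurable_snd hU).inter
      (((measurable_fst.add measurable_fst).sub measurable_snd) hV)
  calc ∫⁻ h, volume (U ∩ reflect h ⁻¹' V)
      = (volume.prod volume) {p : Angle × Angle | p.2 ∈ U ∧ reflect p.1 p.2 ∈ V} :=
        (Measure.prod_apply hmeas).symm
    _ = ∫⁻ x, volume {h | x ∈ U ∧ reflect h x ∈ V} := Measure.prod_apply_symm hmeas
    _ = ∫⁻ x, U.indicator (fun _ => volume V) x := by
        refine lintegral_congr fun x => ?_
        by_cases hx : x ∈ U
        · simp only [hx, true_and, indicator_of_mem]
          exact (measurePreserving_reflect_axis x).measure_preimage hV.nullMeasurableSet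
        · simp [hx]
    _ = volume U * volume V := by rw [lintegral_indicator_const hU, mul_comm]

end Circle

/-- Integrable convolution kernels on the circle that are even and strictly decreasing in the
distance to `0`; both are expressed through the cosine, which avoids choosing representatives. -/
structure IsDecreasingKernel (k : Angle → ℝ≥0∞) : Prop where
  measurable : Measurable k
  lt_iff_cos_lt : ∀ {x y}, k x < k y ↔ x.cos < y.cos
  lintegral_ne_top : ∫⁻ x, k x ≠ ⊤

/-- The measure `k (x - y) dx dy` on the torus; its value on `U ×ˢ V` is the interaction energy of
`U` and `V`. -/
noncomputable def interaction (k : Angle → ℝ≥0∞) : Measure (Angle × Angle) :=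
  volume.withDensity fun p => k (p.1 - p.2)

section Interaction

variable {k : Angle → ℝ≥0∞} {U V U' V' : Set Angle}

lemma interaction_absolutelyContinuous : interaction k ≪ volume :=
  withDensity_absolutelyContinuous _ _

lemma interaction_prod_congr (hU : U =ᵐ[volume] U') (hV : V =ᵐ[volume] V') :
    interaction k (U ×ˢ V) = interaction k (U' ×ˢ V') :=
  measure_congr <| interaction_absolutelyContinuous.ae_eq <| Measure.set_prod_ae_eq hU hV

lemma measurable_comp_sub (hk : Measurable k) :
    Measurable fun p : Angle × Angle => k (p.1 - p.2) :=
  hk.comp (measurable_fst.sub measurable_snd)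

lemma measurePreserving_interaction (hk : Measurable k) {φ : Angle → Angle}
    (hφ : MeasurePreserving φ) (hkφ : ∀ x y, k (φ x - φ y) = k (x - y)) :
    MeasurePreserving (Prod.map φ φ) (interaction k) (interaction k) := by
  have hcomp : (fun p : Angle × Angle => k (p.1 - p.2)) ∘ Prod.map φ φ =
      fun p => k (p.1 - p.2) := funext fun p => hkφ p.1 p.2
  have := measurePreserving_withDensity_comp (hφ.prod hφ) (measurable_comp_sub hk)
  rwa [hcomp] at this

lemma interaction_preimage_prod_preimage (hk : Measurable k) {φ : Angle → Angle}
    (hφ : MeasurePreserving φ) (hkφ : ∀ x y, k (φ x - φ y) = k (x - y))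
    (hU : MeasurableSet U) (hV : MeasurableSet V) :
    interaction k ((φ ⁻¹' U) ×ˢ (φ ⁻¹' V)) = interaction k (U ×ˢ V) :=
  (measurePreserving_interaction hk hφ hkφ).measure_preimage (hU.prod hV).nullMeasurableSet

lemma interaction_preimage_add_prod_preimage_add (hk : Measurable k) (hU : MeasurableSet U)
    (hV : MeasurableSet V) (z : Angle) :
    interaction k (((· + z) ⁻¹' U) ×ˢ ((· + z) ⁻¹' V)) = interaction k (U ×ˢ V) :=
  interaction_preimage_prod_preimage hk (measurePreserving_add_right volume z)
    (fun x y => by rw [add_sub_add_right_eq_sub]) hU hV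

lemma interaction_prod_univ (hk : Measurable k) (hU : MeasurableSet U) :
    interaction k (U ×ˢ univ) = volume U * ∫⁻ x, k x := by
  rw [interaction, withDensity_apply _ (hU.prod .univ), Measure.volume_eq_prod,
    ← Measure.prod_restrict, Measure.restrict_univ,
    lintegral_prod _ (measurable_comp_sub hk).aemeasurable]
  simp only [lintegral_sub_left_eq_self k, lintegral_const, Measure.restrict_apply_univ, mul_comm]

end Interaction

namespace IsDecreasingKernel

variable {k : Angle → ℝ≥0∞} {U V X Y : Set Angle} {h : Angle} (hk : IsDecreasingKernel k)
include hk

lemma le_of_cos_le {x y : Angle} (hxy : x.cos ≤ y.cos) : k x ≤ k y :=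
  not_lt.1 fun hlt => hxy.not_gt (hk.lt_iff_cos_lt.1 hlt)

lemma neg (x : Angle) : k (-x) = k x :=
  le_antisymm (hk.le_of_cos_le (x.cos_neg).le) (hk.le_of_cos_le (x.cos_neg).ge)

lemma interaction_prod_comm (hU : MeasurableSet U) (hV : MeasurableSet V) :
    interaction k (U ×ˢ V) = interaction k (V ×ˢ U) := by
  have hcomp : (fun p : Angle × Angle => k (p.1 - p.2)) ∘ Prod.swap = fun p => k (p.1 - p.2) :=
    funext fun p => by
      rw [Function.comp_apply, Prod.fst_swap, Prod.snd_swap, ← neg_sub, hk.neg]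
  have hswap := measurePreserving_withDensity_comp (μ := volume) (ν := volume)
    (Measure.measurePreserving_swap (α := Angle) (β := Angle)) (measurable_comp_sub hk.measurable)
  rw [hcomp] at hswap
  rw [← preimage_swap_prod]
  exact hswap.measure_preimage (hV.prod hU).nullMeasurableSet

lemma interaction_univ_prod (hU : MeasurableSet U) :
    interaction k (univ ×ˢ U) = volume U * ∫⁻ x, k x := by
  rw [hk.interaction_prod_comm .univ hU, interaction_prod_univ hk.measurable hU]

lemma isFiniteMeasure_interaction : IsFiniteMeasure (interaction k) := by
  refine ⟨?_⟩
  rw [← univ_prod_univ, interaction_prod_univ hk.measurable .univ]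
  exact ENNReal.mul_lt_top (measure_lt_top _ _) hk.lintegral_ne_top.lt_top

lemma interaction_prod_ne_top : interaction k (U ×ˢ V) ≠ ⊤ :=
  have := hk.isFiniteMeasure_interaction
  measure_ne_top _ _

lemma interaction_preimage_reflect (hU : MeasurableSet U) (hV : MeasurableSet V) :
    interaction k ((reflect h ⁻¹' U) ×ˢ (reflect h ⁻¹' V)) = interaction k (U ×ˢ V) :=
  interaction_preimage_prod_preimage hk.measurable (measurePreserving_reflect h)
    (fun x y => by rw [reflect_sub_reflect, hk.neg]) hU hV

lemma apply_sub_lt_apply_sub_reflect {x y : Angle} (hx : 0 < (x - h).sin) (hy : (y - h).sin < 0) :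
    k (x - y) < k (x - reflect h y) := by
  rw [hk.lt_iff_cos_lt, ← sub_neg, cos_sub_sub_cos_sub_reflect]
  linarith [mul_neg_of_pos_of_neg hx hy]

lemma interaction_prod_preimage_reflect_right (hX : MeasurableSet X) (hY : MeasurableSet Y) :
    interaction k (X ×ˢ (reflect h ⁻¹' Y)) = ∫⁻ p in X ×ˢ Y, k (p.1 - reflect h p.2) := by
  have hmp : MeasurePreserving (Prod.map id (reflect h)) (volume : Measure (Angle × Angle))
    volume := (MeasurePreserving.id volume).prod (measurePreserving_reflect h)
  have hpre : Prod.map id (reflect h) ⁻¹' (X ×ˢ (reflect h ⁻¹' Y)) = X ×ˢ Y := by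
    ext p; simp
  rw [interaction, withDensity_apply _ (hX.prod (measurable_reflect h hY)),
    ← hmp.setLIntegral_comp_preimage (hX.prod (measurable_reflect h hY))
      (measurable_comp_sub hk.measurable), hpre]
  rfl

lemma interaction_prod_le_interaction_prod_preimage_reflect (hX : MeasurableSet X)
    (hY : MeasurableSet Y) (hXpos : ∀ x ∈ X, 0 < (x - h).sin) (hYneg : ∀ y ∈ Y, (y - h).sin < 0) :
    interaction k (X ×ˢ Y) ≤ interaction k (X ×ˢ (reflect h ⁻¹' Y)) := by
  rw [hk.interaction_prod_preimage_reflect_right hX hY, interaction,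
    withDensity_apply _ (hX.prod hY)]
  exact setLIntegral_mono' (hX.prod hY) fun p hp =>
    (hk.apply_sub_lt_apply_sub_reflect (hXpos _ hp.1) (hYneg _ hp.2)).le

lemma interaction_prod_lt_interaction_prod_preimage_reflect (hX : MeasurableSet X)
    (hY : MeasurableSet Y) (hXpos : ∀ x ∈ X, 0 < (x - h).sin) (hYneg : ∀ y ∈ Y, (y - h).sin < 0)
    (hX0 : volume X ≠ 0) (hY0 : volume Y ≠ 0) :
    interaction k (X ×ˢ Y) < interaction k (X ×ˢ (reflect h ⁻¹' Y)) := by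
  have hfin := hk.interaction_prod_ne_top (U := X) (V := Y)
  rw [interaction, withDensity_apply _ (hX.prod hY)] at hfin
  rw [hk.interaction_prod_preimage_reflect_right hX hY, interaction,
    withDensity_apply _ (hX.prod hY)]
  refine setLIntegral_strict_mono (hX.prod hY) ?_ ?_ hfin (ae_of_all _ fun p hp =>
    hk.apply_sub_lt_apply_sub_reflect (hXpos _ hp.1) (hYneg _ hp.2))
  · rw [Measure.volume_eq_prod, Measure.prod_prod]
    exact mul_ne_zero hX0 hY0
  · exact hk.measurable.comp (measurable_fst.sub ((measurable_reflect h).comp measurable_snd))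

end IsDecreasingKernel

section Polarization

/-- The points of `U` on the positive side `0 < sin (x - h)` whose mirror image is not in `U`. -/
def aligned (h : Angle) (U : Set Angle) : Set Angle :=
  (U \ reflect h ⁻¹' U) ∩ {x | 0 < (x - h).sin}

/-- The points of `U` on the negative side `sin (x - h) < 0` whose mirror image is not in `U`;
these are the points which polarization moves. -/
def misaligned (h : Angle) (U : Set Angle) : Set Angle :=
  (U \ reflect h ⁻¹' U) ∩ {x | (x - h).sin < 0}

/-- The polarization (two-point rearrangement) of `U`: every point of `U` on the negative side of
the axis through `h` is moved to its mirror image, unless the latter already lies in `U`. -/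
def polarize (h : Angle) (U : Set Angle) : Set Angle :=
  (U ∩ reflect h ⁻¹' U) ∪ aligned h U ∪ reflect h ⁻¹' misaligned h U

variable {h : Angle} {U V : Set Angle} {k : Angle → ℝ≥0∞}

lemma measurableSet_setOf_sin_sub_pos (h : Angle) : MeasurableSet {x : Angle | 0 < (x - h).sin} :=
  (isOpen_lt continuous_const <| Angle.continuous_sin.comp <|
    continuous_id.sub continuous_const).measurableSet

lemma measurableSet_setOf_sin_sub_neg (h : Angle) : MeasurableSet {x : Angle | (x - h).sin < 0} :=
  (isOpen_lt (Angle.continuous_sin.comp <| continuous_id.sub continuous_const)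
    continuous_const).measurableSet

lemma measurableSet_matched (h : Angle) (hU : MeasurableSet U) :
    MeasurableSet (U ∩ reflect h ⁻¹' U) :=
  hU.inter (measurable_reflect h hU)

lemma measurableSet_aligned (h : Angle) (hU : MeasurableSet U) : MeasurableSet (aligned h U) :=
  (hU.diff (measurable_reflect h hU)).inter (measurableSet_setOf_sin_sub_pos h)

lemma measurableSet_misaligned (h : Angle) (hU : MeasurableSet U) :
    MeasurableSet (misaligned h U) :=
  (hU.diff (measurable_reflect h hU)).inter (measurableSet_setOf_sin_sub_neg h)

lemma measurableSet_polarize (h : Angle) (hU : MeasurableSet U) : MeasurableSet (polarize h U) :=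
  ((measurableSet_matched h hU).union (measurableSet_aligned h hU)).union
    (measurable_reflect h (measurableSet_misaligned h hU))

lemma aligned_add_pi (h : Angle) (U : Set Angle) : aligned (h + π) U = misaligned h U := by
  simp only [aligned, misaligned, reflect_add_pi, ← sub_sub, Angle.sin_sub_pi, Left.neg_pos_iff]

lemma misaligned_add_pi (h : Angle) (U : Set Angle) : misaligned (h + π) U = aligned h U := by
  simp only [aligned, misaligned, reflect_add_pi, ← sub_sub, Angle.sin_sub_pi, Left.neg_neg_iff]

lemma aligned_union_misaligned (h : Angle) (U : Set Angle) :
    aligned h U ∪ misaligned h U = U \ reflect h ⁻¹' U := by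
  rw [aligned, misaligned, ← inter_union_distrib_left, inter_eq_left]
  intro x hx
  refine (lt_or_gt_of_ne fun hsin : (x - h).sin = 0 => hx.2 ?_).symm
  rw [mem_preimage, reflect_eq_self_of_sin_sub_eq_zero hsin]
  exact hx.1

lemma matched_union_aligned_union_misaligned (h : Angle) (U : Set Angle) :
    (U ∩ reflect h ⁻¹' U) ∪ aligned h U ∪ misaligned h U = U := by
  rw [union_assoc, aligned_union_misaligned, inter_union_sdiff]

lemma preimage_preimage_reflect (h : Angle) (U : Set Angle) :
    reflect h ⁻¹' reflect h ⁻¹' U = U := by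
  rw [preimage_preimage]
  simp only [reflect_reflect, preimage_id']

lemma preimage_reflect_matched (h : Angle) (U : Set Angle) :
    reflect h ⁻¹' (U ∩ reflect h ⁻¹' U) = U ∩ reflect h ⁻¹' U := by
  rw [preimage_inter, preimage_preimage_reflect, inter_comm]

lemma disjoint_matched_aligned (h : Angle) (U : Set Angle) :
    Disjoint (U ∩ reflect h ⁻¹' U) (aligned h U) :=
  disjoint_left.2 fun _ hx hx' => hx'.1.2 hx.2

lemma disjoint_matched_union_aligned_misaligned (h : Angle) (U : Set Angle) :
    Disjoint ((U ∩ reflect h ⁻¹' U) ∪ aligned h U) (misaligned h U) := by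
  refine disjoint_union_left.2 ⟨disjoint_left.2 fun _ hx hx' => hx'.1.2 hx.2, ?_⟩
  exact disjoint_left.2 fun _ hx hx' => lt_asymm (mem_ofPred.1 hx.2) hx'.2

lemma disjoint_matched_union_aligned_preimage_misaligned (h : Angle) (U : Set Angle) :
    Disjoint ((U ∩ reflect h ⁻¹' U) ∪ aligned h U) (reflect h ⁻¹' misaligned h U) := by
  refine disjoint_left.2 fun x hx hx' => hx'.1.2 ?_
  rw [mem_preimage, reflect_reflect]
  exact hx.elim And.left fun hx => hx.1.1

lemma volume_polarize (h : Angle) (hU : MeasurableSet U) :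
    volume (polarize h U) = volume U := by
  conv_rhs => rw [← matched_union_aligned_union_misaligned h U]
  rw [polarize, measure_union (disjoint_matched_union_aligned_preimage_misaligned h U)
      (measurable_reflect h (measurableSet_misaligned h hU)),
    measure_union (disjoint_matched_union_aligned_misaligned h U) (measurableSet_misaligned h hU),
    volume_preimage_reflect h (measurableSet_misaligned h hU)]

namespace IsDecreasingKernel

variable (hk : IsDecreasingKernel k)
include hk

lemma interaction_polarize_add (h : Angle) (hU : MeasurableSet U) (hV : MeasurableSet V) :
    interaction k (polarize h U ×ˢ polarize h V) +
        (interaction k (aligned h U ×ˢ misaligned h V) +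
          interaction k (misaligned h U ×ˢ aligned h V)) =
      interaction k (U ×ˢ V) +
        (interaction k (aligned h U ×ˢ (reflect h ⁻¹' misaligned h V)) +
          interaction k ((reflect h ⁻¹' misaligned h U) ×ˢ aligned h V)) := by
  set S := U ∩ reflect h ⁻¹' U with hS
  set T := V ∩ reflect h ⁻¹' V with hT
  have mS : MeasurableSet S := measurableSet_matched h hU
  have mT : MeasurableSet T := measurableSet_matched h hV
  have mAU := measurableSet_aligned h hU
  have mAV := measurableSet_aligned h hV
  have mBU := measurableSet_misaligned h hU
  have mBV := measurableSet_misaligned h hV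
  have mBU' := measurable_reflect h mBU
  have mBV' := measurable_reflect h mBV
  have hST : interaction k (S ×ˢ (reflect h ⁻¹' misaligned h V)) =
      interaction k (S ×ˢ misaligned h V) := by
    rw [← hk.interaction_preimage_reflect (h := h) mS mBV, hS, preimage_reflect_matched]
  have hTS : interaction k ((reflect h ⁻¹' misaligned h U) ×ˢ T) =
      interaction k (misaligned h U ×ˢ T) := by
    rw [← hk.interaction_preimage_reflect (h := h) mBU mT, hT, preimage_reflect_matched]
  have hBB := hk.interaction_preimage_reflect (h := h) mBU mBV
  have hexpand := measure_union_union_prod_union_union (ν := interaction k) mS mAU mBU mT mAV mBV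
    (disjoint_matched_aligned h U) (disjoint_matched_union_aligned_misaligned h U)
    (disjoint_matched_aligned h V) (disjoint_matched_union_aligned_misaligned h V)
  rw [matched_union_aligned_union_misaligned, matched_union_aligned_union_misaligned] at hexpand
  rw [polarize, polarize, hexpand, measure_union_union_prod_union_union mS mAU mBU' mT mAV mBV'
    (disjoint_matched_aligned h U) (disjoint_matched_union_aligned_preimage_misaligned h U)
    (disjoint_matched_aligned h V) (disjoint_matched_union_aligned_preimage_misaligned h V),
    hST, hTS, hBB]
  ring

lemma interaction_misaligned_prod_aligned_le (h : Angle) (hU : MeasurableSet U)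
    (hV : MeasurableSet V) : interaction k (misaligned h U ×ˢ aligned h V) ≤
      interaction k ((reflect h ⁻¹' misaligned h U) ×ˢ aligned h V) := by
  have mAV := measurableSet_aligned h hV
  have mBU := measurableSet_misaligned h hU
  rw [hk.interaction_prod_comm mBU mAV,
    hk.interaction_prod_comm (measurable_reflect h mBU) mAV]
  exact hk.interaction_prod_le_interaction_prod_preimage_reflect mAV mBU (fun _ hx => hx.2)
    fun _ hx => hx.2

theorem interaction_le_interaction_polarize (h : Angle) (hU : MeasurableSet U)
    (hV : MeasurableSet V) :
    interaction k (U ×ˢ V) ≤ interaction k (polarize h U ×ˢ polarize h V) := by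
  have hle := add_le_add
    (hk.interaction_prod_le_interaction_prod_preimage_reflect (measurableSet_aligned h hU)
      (measurableSet_misaligned h hV) (fun _ hx => hx.2) fun _ hx => hx.2)
    (hk.interaction_misaligned_prod_aligned_le h hU hV)
  by_contra! hlt
  exact (hk.interaction_polarize_add h hU hV).not_lt <| ENNReal.add_lt_add_of_lt_of_le
    (ENNReal.add_ne_top.2 ⟨hk.interaction_prod_ne_top, hk.interaction_prod_ne_top⟩) hlt hle

theorem interaction_lt_interaction_polarize (hU : MeasurableSet U)
    (hV : MeasurableSet V) (hA : volume (aligned h U) ≠ 0) (hB : volume (misaligned h V) ≠ 0) :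
    interaction k (U ×ˢ V) < interaction k (polarize h U ×ˢ polarize h V) := by
  have hlt := ENNReal.add_lt_add_of_lt_of_le hk.interaction_prod_ne_top
    (hk.interaction_prod_lt_interaction_prod_preimage_reflect (measurableSet_aligned h hU)
      (measurableSet_misaligned h hV) (fun _ hx => hx.2) (fun _ hx => hx.2) hA hB)
    (hk.interaction_misaligned_prod_aligned_le h hU hV)
  by_contra! hle
  exact (hk.interaction_polarize_add h hU hV).not_lt <|
    ENNReal.add_lt_add_of_le_of_lt hk.interaction_prod_ne_top hle hlt

end IsDecreasingKernel
end Polarization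

section CentralArc

/-- The circle counterpart of `A^*`: the open arc centred at `0` with the same length as `U`. -/
def centralArc (U : Set Angle) : Set Angle := {x | |x.toReal| < (volume U).toReal / 2}

variable {h x y : Angle} {U V C : Set Angle} {k : Angle → ℝ≥0∞}

lemma cos_lt_cos_iff : x.cos < y.cos ↔ |y.toReal| < |x.toReal| := by
  rw [← Angle.cos_toReal x, ← Angle.cos_toReal y, ← cos_abs x.toReal, ← cos_abs y.toReal]
  exact strictAntiOn_cos.lt_iff_gt ⟨abs_nonneg _, Angle.abs_toReal_le_pi x⟩
    ⟨abs_nonneg _, Angle.abs_toReal_le_pi y⟩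

lemma measurePreserving_coe_angle :
    MeasurePreserving ((↑) : ℝ → Angle) (volume.restrict (Ioc (-π) π)) volume := by
  have hmk := AddCircle.measurePreserving_mk (2 * π) (-π)
  rwa [show -π + 2 * π = π by ring] at hmk

lemma measurePreserving_toReal :
    MeasurePreserving Angle.toReal volume (volume.restrict (Ioc (-π) π)) := by
  have hcoe : Angle.toReal = Subtype.val ∘ AddCircle.equivIoc (2 * π) (-π) := by
    funext x
    induction x using Angle.induction_on with | _ x
    rfl
  have hcomp := (measurePreserving_subtype_coe (μa := volume) measurableSet_Ioc).comp
    (AddCircle.measurePreserving_equivIoc (2 * π) (a := -π))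
  rw [← hcoe] at hcomp
  rwa [show -π + 2 * π = π by ring] at hcomp

lemma measurable_toReal : Measurable Angle.toReal := measurePreserving_toReal.measurable

lemma measurableSet_centralArc (U : Set Angle) : MeasurableSet (centralArc U) :=
  measurableSet_lt (_root_.continuous_abs.measurable.comp measurable_toReal) measurable_const

lemma volume_univ_angle : volume (univ : Set Angle) = ENNReal.ofReal (2 * π) :=
  AddCircle.measure_univ _

lemma volume_centralArc (U : Set Angle) : volume (centralArc U) = volume U := by
  have hle : (volume U).toReal / 2 ≤ π := by
    have hU := ENNReal.toReal_mono (measure_ne_top volume univ) (measure_mono (subset_univ U))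
    rw [volume_univ_angle, ENNReal.toReal_ofReal two_pi_pos.le] at hU
    linarith
  have hIoo : Ioo (-((volume U).toReal / 2)) ((volume U).toReal / 2) ⊆ Ioc (-π) π := fun x hx =>
    ⟨by linarith [hx.1], by linarith [hx.2]⟩
  have hpre : centralArc U =
      Angle.toReal ⁻¹' Ioo (-((volume U).toReal / 2)) ((volume U).toReal / 2) := by
    ext x; simp only [centralArc, mem_ofPred_eq, mem_preimage, mem_Ioo, abs_lt]
  rw [hpre, measurePreserving_toReal.measure_preimage measurableSet_Ioo.nullMeasurableSet,
    Measure.restrict_apply measurableSet_Ioo, inter_eq_left.2 hIoo, Real.volume_Ioo,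
    sub_neg_eq_add, add_halves, ENNReal.ofReal_toReal (measure_ne_top _ _)]

lemma centralArc_congr (hUV : volume U = volume V) : centralArc U = centralArc V := by
  rw [centralArc, centralArc, hUV]

lemma centralArc_ae_eq_univ (hU : U =ᵐ[volume] univ) : centralArc U =ᵐ[volume] univ :=
  ae_eq_of_subset_of_measure_ge (subset_univ _) ((volume_centralArc U).trans (measure_congr hU)).ge
    (measurableSet_centralArc U).nullMeasurableSet (measure_ne_top _ _)

lemma mem_centralArc_of_cos_lt (hx : x ∈ centralArc U) (hxy : x.cos < y.cos) : y ∈ centralArc U :=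
  (cos_lt_cos_iff.1 hxy).trans hx

lemma volume_centralArc_sdiff (hU : MeasurableSet U) :
    volume (centralArc U \ U) = volume (U \ centralArc U) :=
  measure_sdiff_symm (measurableSet_centralArc U).nullMeasurableSet hU.nullMeasurableSet
    (volume_centralArc U) (measure_ne_top _ _)

/-- The part of `C \ U` which reflection maps into `U \ C`. Polarization of `U` moves mass into
this set, and thereby makes `U` more similar to `C` when `C` is a central arc. -/
def gain (h : Angle) (U : Set Angle) (C : Set Angle) : Set Angle :=
  (C \ U) ∩ reflect h ⁻¹' (U \ C)

lemma gain_add_pi (h : Angle) (U C : Set Angle) : gain (h + π) U C = gain h U C := by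
  rw [gain, gain, reflect_add_pi]

lemma measurableSet_gain (h : Angle) (hU : MeasurableSet U) (hC : MeasurableSet C) :
    MeasurableSet (gain h U C) :=
  (hC.diff hU).inter (measurable_reflect h (hU.diff hC))

lemma reflect_mem_misaligned_of_mem_gain (hh : 0 < (-h).sin)
    (hCcos : ∀ x ∈ C, ∀ y : Angle, x.cos < y.cos → y ∈ C) (hx : x ∈ gain h U C) :
    reflect h x ∈ misaligned h U := by
  obtain ⟨⟨hxC, hxU⟩, hσU, hσC⟩ := hx
  refine ⟨⟨hσU, by rwa [mem_preimage, reflect_reflect]⟩, ?_⟩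
  rw [mem_ofPred_eq, reflect_sub_axis, Angle.sin_neg, neg_lt_zero]
  by_contra! hneg
  rcases hneg.lt_or_eq with hneg | hzero
  · have hcos := cos_sub_cos_reflect h x
    exact hσC <| hCcos x hxC _ <| by nlinarith
  · exact hσC <| by rwa [reflect_eq_self_of_sin_sub_eq_zero hzero]

lemma reflect_notMem_of_mem_preimage_misaligned (hh : 0 < (-h).sin)
    (hCcos : ∀ x ∈ C, ∀ y : Angle, x.cos < y.cos → y ∈ C) (hx : x ∈ reflect h ⁻¹' misaligned h U)
    (hxC : x ∉ C) : reflect h x ∉ C := fun hσC => by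
  have hneg : (reflect h x - h).sin < 0 := hx.2
  rw [reflect_sub_axis, Angle.sin_neg] at hneg
  have hcos := cos_sub_cos_reflect h x
  exact hxC <| hCcos _ hσC _ <| by nlinarith

lemma volume_preimage_misaligned_sdiff_add_gain_le (hh : 0 < (-h).sin) (hU : MeasurableSet U)
    (hC : MeasurableSet C) (hCcos : ∀ x ∈ C, ∀ y : Angle, x.cos < y.cos → y ∈ C) :
    volume ((reflect h ⁻¹' misaligned h U) \ C) + volume (gain h U C) ≤
      volume (misaligned h U \ C) := by
  have hdisj : Disjoint ((reflect h ⁻¹' misaligned h U) \ C) (gain h U C) :=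
    disjoint_left.2 fun _ hx hx' => hx.2 hx'.1.1
  rw [← measure_union hdisj (measurableSet_gain h hU hC),
    ← volume_preimage_reflect h ((measurableSet_misaligned h hU).diff hC)]
  refine measure_mono (union_subset (fun x hx => ⟨hx.1, ?_⟩) fun x hx => ⟨?_, hx.2.2⟩)
  · exact reflect_notMem_of_mem_preimage_misaligned hh hCcos hx.1 hx.2
  · exact reflect_mem_misaligned_of_mem_gain hh hCcos hx

lemma volume_polarize_sdiff_add_gain_le (hh : 0 < (-h).sin) (hU : MeasurableSet U)
    (hC : MeasurableSet C) (hCcos : ∀ x ∈ C, ∀ y : Angle, x.cos < y.cos → y ∈ C) :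
    volume (polarize h U \ C) + volume (gain h U C) ≤ volume (U \ C) := by
  set M := (U ∩ reflect h ⁻¹' U) ∪ aligned h U
  have hMU : M ∪ misaligned h U = U := matched_union_aligned_union_misaligned h U
  have hUC : volume (U \ C) = volume (M \ C) + volume (misaligned h U \ C) := by
    rw [← measure_union ((disjoint_matched_union_aligned_misaligned h U).mono sdiff_subset
      sdiff_subset) ((measurableSet_misaligned h hU).diff hC), ← union_sdiff_distrib, hMU]
  calc volume (polarize h U \ C) + volume (gain h U C)
      ≤ volume (M \ C) + volume ((reflect h ⁻¹' misaligned h U) \ C) + volume (gain h U C) := by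
        rw [polarize, union_sdiff_distrib]
        gcongr
        exact measure_union_le _ _
    _ ≤ volume (U \ C) := by
        rw [hUC, add_assoc]
        gcongr
        exact volume_preimage_misaligned_sdiff_add_gain_le hh hU hC hCcos

lemma measurable_volume_gain (hU : MeasurableSet U) (hC : MeasurableSet C) :
    Measurable fun h => volume (gain h U C) :=
  measurable_measure_prodMk_left <| (measurable_snd (hC.diff hU)).inter <|
    ((measurable_fst.add measurable_fst).sub measurable_snd) (hU.diff hC)

lemma lintegral_volume_gain_centralArc (hU : MeasurableSet U) :
    ∫⁻ h, volume (gain h U (centralArc U)) = volume (U \ centralArc U) ^ 2 := by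
  have hC := measurableSet_centralArc U
  simp only [gain, lintegral_volume_inter_preimage_reflect (hC.diff hU) (hU.diff hC),
    volume_centralArc_sdiff hU, sq]

/-- The pairs of sets which have the same volumes as `U` and `V` and at least their interaction. -/
def competitors (k : Angle → ℝ≥0∞) (U V : Set Angle) : Set (Set Angle × Set Angle) :=
  {p | MeasurableSet p.1 ∧ MeasurableSet p.2 ∧ volume p.1 = volume U ∧ volume p.2 = volume V ∧
    interaction k (U ×ˢ V) ≤ interaction k (p.1 ×ˢ p.2)}

lemma exists_sin_neg_pos_le_volume_gain_add (hU : MeasurableSet U) (hV : MeasurableSet V) :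
    ∃ h : Angle, 0 < (-h).sin ∧
      (2 * volume (univ : Set Angle))⁻¹ *
          (volume (U \ centralArc U) + volume (V \ centralArc V)) ^ 2 ≤
        volume (gain h U (centralArc U)) + volume (gain h V (centralArc V)) := by
  set a := volume (U \ centralArc U)
  set b := volume (V \ centralArc V)
  have hmeas : Measurable fun h => volume (gain h U (centralArc U)) :=
    measurable_volume_gain hU (measurableSet_centralArc U)
  have hint : ∫⁻ h, (volume (gain h U (centralArc U)) + volume (gain h V (centralArc V))) =
      a ^ 2 + b ^ 2 := by
    rw [lintegral_add_left hmeas, lintegral_volume_gain_centralArc hU,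
      lintegral_volume_gain_centralArc hV]
  have hsq : (a + b) ^ 2 ≤ 2 * (a ^ 2 + b ^ 2) := by
    have := ENNReal.rpow_add_le_mul_rpow_add_rpow a b one_le_two
    norm_num at this
    exact this
  obtain ⟨h, hh, hle⟩ := exists_notMem_null_laverage_le (NeZero.ne volume)
    (by rw [hint]; finiteness) (ae_iff.1 ae_sin_neg_ne_zero)
  rw [laverage_eq, hint] at hle
  replace hle := calc
    (2 * volume (univ : Set Angle))⁻¹ * (a + b) ^ 2
      ≤ (2 * volume (univ : Set Angle))⁻¹ * (2 * (a ^ 2 + b ^ 2)) := by gcongr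
    _ = (a ^ 2 + b ^ 2) / volume (univ : Set Angle) := by
      rw [← ENNReal.div_eq_inv_mul, ENNReal.mul_div_mul_left _ _ two_ne_zero ENNReal.ofNat_ne_top]
    _ ≤ _ := hle
  rcases lt_or_gt_of_ne (not_not.1 hh) with hneg | hpos
  · refine ⟨h + π, ?_, by simpa only [gain_add_pi] using hle⟩
    rw [neg_add', Angle.sin_sub_pi]
    exact neg_pos.2 hneg
  · exact ⟨h, hpos, hle⟩

namespace IsDecreasingKernel

variable (hk : IsDecreasingKernel k)
include hk

lemma exists_mem_competitors_add_mul_sq_le {p : Set Angle × Set Angle}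
    (hp : p ∈ competitors k U V) : ∃ q ∈ competitors k U V,
      volume (q.1 \ centralArc U) + volume (q.2 \ centralArc V) +
          (2 * volume (univ : Set Angle))⁻¹ *
            (volume (p.1 \ centralArc U) + volume (p.2 \ centralArc V)) ^ 2 ≤
        volume (p.1 \ centralArc U) + volume (p.2 \ centralArc V) := by
  obtain ⟨hp₁, hp₂, hU, hV, hle⟩ := hp
  obtain ⟨h, hh, hgain⟩ := exists_sin_neg_pos_le_volume_gain_add hp₁ hp₂
  rw [← centralArc_congr hU, ← centralArc_congr hV]
  refine ⟨(polarize h p.1, polarize h p.2), ⟨measurableSet_polarize h hp₁,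
    measurableSet_polarize h hp₂, (volume_polarize h hp₁).trans hU,
    (volume_polarize h hp₂).trans hV,
    hle.trans (hk.interaction_le_interaction_polarize h hp₁ hp₂)⟩, ?_⟩
  have hU' := volume_polarize_sdiff_add_gain_le hh hp₁ (measurableSet_centralArc p.1)
    fun _ hx _ hxy => mem_centralArc_of_cos_lt hx hxy
  have hV' := volume_polarize_sdiff_add_gain_le hh hp₂ (measurableSet_centralArc p.2)
    fun _ hx _ hxy => mem_centralArc_of_cos_lt hx hxy
  calc _ ≤ _ := add_le_add_right hgain _
    _ = _ := add_add_add_comm _ _ _ _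
    _ ≤ _ := add_le_add hU' hV'

lemma interaction_prod_le_add_sdiff_left (hU : MeasurableSet U) (hC : MeasurableSet C) :
    interaction k (U ×ˢ V) ≤ interaction k (C ×ˢ V) + volume (U \ C) * ∫⁻ x, k x := by
  have hsub : U ×ˢ V ⊆ C ×ˢ V ∪ (U \ C) ×ˢ univ := fun p hp => by
    by_cases hpC : p.1 ∈ C
    exacts [.inl ⟨hpC, hp.2⟩, .inr ⟨⟨hp.1, hpC⟩, mem_univ _⟩]
  rw [← interaction_prod_univ hk.measurable (hU.diff hC)]
  exact (measure_mono hsub).trans (measure_union_le _ _)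

lemma interaction_prod_le_add_sdiff (hU : MeasurableSet U) (hV : MeasurableSet V)
    {D : Set Angle} (hC : MeasurableSet C) (hD : MeasurableSet D) :
    interaction k (U ×ˢ V) ≤
      interaction k (C ×ˢ D) + (volume (U \ C) + volume (V \ D)) * ∫⁻ x, k x :=
  calc interaction k (U ×ˢ V)
      ≤ interaction k (C ×ˢ V) + volume (U \ C) * ∫⁻ x, k x :=
        hk.interaction_prod_le_add_sdiff_left hU hC
    _ ≤ interaction k (C ×ˢ D) + volume (V \ D) * (∫⁻ x, k x) +
          volume (U \ C) * ∫⁻ x, k x := by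
        refine add_le_add_left ?_ _
        rw [hk.interaction_prod_comm hC hV, hk.interaction_prod_comm hC hD]
        exact hk.interaction_prod_le_add_sdiff_left hV hD
    _ = interaction k (C ×ˢ D) + (volume (U \ C) + volume (V \ D)) * ∫⁻ x, k x := by ring

theorem interaction_le_interaction_centralArc (hU : MeasurableSet U) (hV : MeasurableSet V) :
    interaction k (U ×ˢ V) ≤ interaction k (centralArc U ×ˢ centralArc V) := by
  set δ : Set Angle × Set Angle → ℝ≥0∞ :=
    fun p => volume (p.1 \ centralArc U) + volume (p.2 \ centralArc V)
  have hUV : δ (U, V) ∈ δ '' competitors k U V :=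
    ⟨(U, V), ⟨hU, hV, rfl, rfl, le_rfl⟩, rfl⟩
  have hInf : sInf (δ '' competitors k U V) = 0 := by
    refine sInf_eq_zero_of_forall_exists_add_mul_sq_le
      (c := (2 * volume (univ : Set Angle))⁻¹) ?_ ?_ ?_
    · exact ENNReal.inv_ne_zero.2 (by finiteness)
    · exact ⟨_, hUV, by finiteness⟩
    · rintro _ ⟨p, hp, rfl⟩
      obtain ⟨q, hq, hqp⟩ := hk.exists_mem_competitors_add_mul_sq_le hp
      exact ⟨_, ⟨q, hq, rfl⟩, hqp⟩
  have hlim : Tendsto (fun d : ℝ≥0∞ => interaction k (centralArc U ×ˢ centralArc V) +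
      d * ∫⁻ x, k x) (𝓝 0) (𝓝 (interaction k (centralArc U ×ˢ centralArc V) + 0 * ∫⁻ x, k x)) :=
    (ENNReal.Tendsto.mul_const tendsto_id (.inr hk.lintegral_ne_top)).const_add _
  rw [zero_mul, add_zero] at hlim
  have hfreq : ∃ᶠ d in 𝓝 0, d ∈ δ '' competitors k U V := by
    rw [← mem_closure_iff_frequently, ← hInf]
    exact sInf_mem_closure ⟨_, hUV⟩
  refine ge_of_tendsto_of_frequently hlim <| hfreq.mono ?_
  rintro _ ⟨p, ⟨hp₁, hp₂, -, -, hle⟩, rfl⟩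
  exact hle.trans <| hk.interaction_prod_le_add_sdiff hp₁ hp₂ (measurableSet_centralArc U)
    (measurableSet_centralArc V)

end IsDecreasingKernel
end CentralArc

section Moments

variable {h : Angle} {U : Set Angle}

lemma integrableOn_of_continuous {f : Angle → ℝ} (hf : Continuous f) (U : Set Angle) :
    IntegrableOn f U :=
  (hf.integrable_of_hasCompactSupport (.of_compactSpace f)).integrableOn

lemma continuous_sin_sub (h : Angle) : Continuous fun x : Angle => (x - h).sin :=
  Angle.continuous_sin.comp (continuous_id.sub continuous_const)

lemma exists_forall_setIntegral_sin_sub_eq (U : Set Angle) :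
    ∃ R : ℝ, 0 ≤ R ∧ ∃ θ : Angle, ∀ h : Angle, ∫ x in U, (x - h).sin = R * (θ - h).sin := by
  set w : ℂ := ⟨∫ x in U, x.cos, ∫ x in U, x.sin⟩
  have hre : ‖w‖ * Real.cos w.arg = ∫ x in U, x.cos := Complex.norm_mul_cos_arg w
  have him : ‖w‖ * Real.sin w.arg = ∫ x in U, x.sin := Complex.norm_mul_sin_arg w
  refine ⟨‖w‖, norm_nonneg w, (w.arg : Angle), fun h => ?_⟩
  simp only [sub_eq_add_neg, Angle.sin_add, Angle.cos_neg, Angle.sin_neg, Angle.cos_coe,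
    Angle.sin_coe]
  rw [integral_add ((integrableOn_of_continuous Angle.continuous_sin U).mul_const _)
      ((integrableOn_of_continuous Angle.continuous_cos U).mul_const _),
    integral_mul_const, integral_mul_const, ← hre, ← him]
  ring

lemma setIntegral_sin_sub_add_pi (h : Angle) (U : Set Angle) :
    ∫ x in U, (x - (h + π)).sin = -∫ x in U, (x - h).sin := by
  simp only [← sub_sub, Angle.sin_sub_pi, integral_neg]

lemma setIntegral_matched_sin_sub (h : Angle) (U : Set Angle) :
    ∫ x in U ∩ reflect h ⁻¹' U, (x - h).sin = 0 := by
  have hpre := (measurePreserving_reflect h).setIntegral_preimage_emb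
    (measurableEmbedding_reflect h) (fun x => (x - h).sin) (U ∩ reflect h ⁻¹' U)
  simp only [preimage_reflect_matched, reflect_sub_axis, Angle.sin_neg, integral_neg] at hpre
  linarith

lemma setIntegral_sin_sub (h : Angle) (hU : MeasurableSet U) :
    ∫ x in U, (x - h).sin =
      (∫ x in aligned h U, (x - h).sin) + ∫ x in misaligned h U, (x - h).sin := by
  have hint := integrableOn_of_continuous (continuous_sin_sub h)
  conv_lhs => rw [← matched_union_aligned_union_misaligned h U]
  rw [setIntegral_union (disjoint_matched_union_aligned_misaligned h U)
      (measurableSet_misaligned h hU) (hint _) (hint _),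
    setIntegral_union (disjoint_matched_aligned h U) (measurableSet_aligned h hU) (hint _) (hint _),
    setIntegral_matched_sin_sub, zero_add]

lemma setIntegral_aligned_sin_sub_pos_iff (h : Angle) (hU : MeasurableSet U) :
    0 < ∫ x in aligned h U, (x - h).sin ↔ volume (aligned h U) ≠ 0 := by
  have hpos : ∀ x ∈ aligned h U, 0 < (x - h).sin := fun x hx => hx.2
  have hsupp : aligned h U ⊆ Function.support fun x : Angle => (x - h).sin :=
    fun x hx => (hpos x hx).ne'
  rw [setIntegral_pos_iff_support_of_nonneg_ae
      (ae_restrict_of_forall_mem (measurableSet_aligned h hU) fun x hx => (hpos x hx).le)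
      (integrableOn_of_continuous (continuous_sin_sub h) _),
    inter_eq_right.2 hsupp, pos_iff_ne_zero]

lemma setIntegral_aligned_sin_sub_nonneg (h : Angle) (hU : MeasurableSet U) :
    0 ≤ ∫ x in aligned h U, (x - h).sin :=
  setIntegral_nonneg (measurableSet_aligned h hU) fun _ hx => le_of_lt hx.2

lemma setIntegral_misaligned_sin_sub_neg_iff (h : Angle) (hU : MeasurableSet U) :
    ∫ x in misaligned h U, (x - h).sin < 0 ↔ volume (misaligned h U) ≠ 0 := by
  rw [← aligned_add_pi, ← setIntegral_aligned_sin_sub_pos_iff _ hU, setIntegral_sin_sub_add_pi,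
    neg_pos]

lemma setIntegral_misaligned_sin_sub_nonpos (h : Angle) (hU : MeasurableSet U) :
    ∫ x in misaligned h U, (x - h).sin ≤ 0 :=
  setIntegral_nonpos (measurableSet_misaligned h hU) fun _ hx => le_of_lt hx.2

lemma volume_aligned_ne_zero_of_setIntegral_pos (hU : MeasurableSet U)
    (hpos : 0 < ∫ x in U, (x - h).sin) : volume (aligned h U) ≠ 0 := by
  rw [← setIntegral_aligned_sin_sub_pos_iff h hU]
  rw [setIntegral_sin_sub h hU] at hpos
  linarith [setIntegral_misaligned_sin_sub_nonpos h hU]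

lemma setIntegral_nonneg_of_volume_misaligned_eq_zero (hU : MeasurableSet U)
    (hmis : volume (misaligned h U) = 0) : 0 ≤ ∫ x in U, (x - h).sin := by
  rw [setIntegral_sin_sub h hU, setIntegral_measure_zero _ hmis, add_zero]
  exact setIntegral_aligned_sin_sub_nonneg h hU

lemma volume_aligned_eq_zero_iff (hU : MeasurableSet U) (hzero : ∫ x in U, (x - h).sin = 0) :
    volume (aligned h U) = 0 ↔ volume (misaligned h U) = 0 := by
  rw [← not_iff_not, ← ne_eq, ← ne_eq, ← setIntegral_aligned_sin_sub_pos_iff h hU,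
    ← setIntegral_misaligned_sin_sub_neg_iff h hU]
  rw [setIntegral_sin_sub h hU] at hzero
  constructor <;> intro <;> linarith

end Moments

section Equality

variable {h x θ : Angle} {U V : Set Angle} {k : Angle → ℝ≥0∞}

lemma measurable_volume_sdiff_preimage_sub (hV : MeasurableSet V) :
    Measurable fun a : Angle => volume (V \ (a - ·) ⁻¹' V) :=
  measurable_measure_prodMk_left <|
    (measurable_snd hV).diff <| (measurable_fst.sub measurable_snd) hV

lemma preimage_sub_ae_eq (hV : MeasurableSet V) {a : Angle}
    (ha : volume (V \ (a - ·) ⁻¹' V) = 0) : (a - ·) ⁻¹' V =ᵐ[volume] V := by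
  have hmp := Measure.measurePreserving_sub_left (volume : Measure Angle) a
  exact (ae_eq_of_ae_subset_of_measure_ge (ae_le_set.2 ha)
    (hmp.measure_preimage hV.nullMeasurableSet).le hV.nullMeasurableSet (measure_ne_top _ _)).symm

/-- By Steinhaus, the composites of two of the given reflections contain all rotations by small
angles, and these generate the circle. -/
lemma eventuallyConst_of_volume_setOf_reflect_ne_zero (hV : MeasurableSet V)
    (hZ : volume {h | volume (V \ reflect h ⁻¹' V) = 0} ≠ 0) :
    EventuallyConst V (ae volume) := by
  set Z : Set Angle := {a | volume (V \ (a - ·) ⁻¹' V) = 0}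
  have hZm : MeasurableSet Z :=
    measurable_volume_sdiff_preimage_sub hV (measurableSet_singleton 0)
  have hZpos : volume Z ≠ 0 := by
    rw [← (measurePreserving_reflect_axis 0).measure_preimage hZm.nullMeasurableSet]
    simp only [reflect, sub_zero]
    exact hZ
  have hstab : Z - Z ⊆ AddAction.aestabilizer Angle volume V := by
    rintro _ ⟨a, ha, b, hb, rfl⟩
    have hcomp : (a - b) +ᵥ V = (a - ·) ⁻¹' ((b - ·) ⁻¹' V) := by
      ext x
      rw [mem_vadd_set_iff_neg_vadd_mem, mem_preimage, mem_preimage, vadd_eq_add,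
        show -(a - b) + x = b - (a - x) by abel]
    rw [SetLike.mem_coe, AddAction.mem_aestabilizer, hcomp]
    exact ((Measure.measurePreserving_sub_left volume a).quasiMeasurePreserving.preimage_ae_eq
      (preimage_sub_ae_eq hV hb)).trans (preimage_sub_ae_eq hV ha)
  have hopen : IsOpen (AddAction.aestabilizer Angle volume V : Set Angle) :=
    AddSubgroup.isOpen_of_mem_nhds _ <| mem_of_superset
      (Measure.sub_mem_nhds_zero_of_addHaar_pos volume Z hZm (pos_iff_ne_zero.2 hZpos)) hstab
  have huniv : (AddAction.aestabilizer Angle volume V : Set Angle) = univ :=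
    IsClopen.eq_univ ⟨AddSubgroup.isClosed_of_isOpen _ hopen, hopen⟩ ⟨0, zero_mem _⟩
  exact aeconst_of_dense_aestabilizer_vadd hV.nullMeasurableSet (huniv ▸ dense_univ)

/-- `U` and `V` lean to the same side of every axis, so that no polarization strictly increases
their interaction. -/
def Coherent (U V : Set Angle) : Prop :=
  ∀ h, volume (aligned h U) = 0 ∨ volume (misaligned h V) = 0

lemma Coherent.symm (hUV : Coherent U V) : Coherent V U := fun h => by
  have hπ := hUV (h + π)
  rw [aligned_add_pi, misaligned_add_pi] at hπ
  exact hπ.symm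

lemma volume_sdiff_preimage_reflect_eq_zero (hA : volume (aligned h U) = 0)
    (hB : volume (misaligned h U) = 0) : volume (U \ reflect h ⁻¹' U) = 0 := by
  rw [← aligned_union_misaligned]
  exact measure_union_null hA hB

lemma eventuallyConst_of_forall_reflect (hU : MeasurableSet U)
    (h : ∀ᵐ h, volume (U \ reflect h ⁻¹' U) = 0) : EventuallyConst U (ae volume) := by
  have hprod := lintegral_volume_inter_preimage_reflect hU hU.compl
  simp only [preimage_compl, ← sdiff_eq] at hprod
  rw [lintegral_congr_ae (g := 0) h, Pi.zero_def, lintegral_zero, eq_comm, mul_eq_zero] at hprod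
  exact eventuallyConst_set'.2 <| hprod.imp ae_eq_empty.2 ae_eq_univ.2

lemma Coherent.exists_setIntegral_ne_zero (hUV : Coherent U V) (hU : MeasurableSet U)
    (hV : MeasurableSet V) (hU' : ¬EventuallyConst U (ae volume))
    (hV' : ¬EventuallyConst V (ae volume)) : ∃ h, ∫ x in U, (x - h).sin ≠ 0 := by
  by_contra! hzero
  have halt : ∀ h, volume (U \ reflect h ⁻¹' U) = 0 ∨ volume (V \ reflect h ⁻¹' V) = 0 := by
    intro h
    have hiff := volume_aligned_eq_zero_iff hU (hzero h)
    by_cases hA : volume (aligned h U) = 0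
    · exact .inl (volume_sdiff_preimage_reflect_eq_zero hA (hiff.1 hA))
    · exact .inr (volume_sdiff_preimage_reflect_eq_zero
        ((hUV.symm h).resolve_right (mt hiff.2 hA)) ((hUV h).resolve_left hA))
  refine hU' (eventuallyConst_of_forall_reflect hU ?_)
  have hnull := not_not.1 (mt (eventuallyConst_of_volume_setOf_reflect_ne_zero hV) hV')
  filter_upwards [measure_eq_zero_iff_ae_notMem.1 hnull] with h hh
  exact (halt h).resolve_right hh

lemma eq_zero_of_forall_sin_add_nonneg (h : ∀ t : Angle, 0 < t.sin → 0 ≤ (x + t).sin) :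
    x = 0 := by
  rw [← Angle.toReal_eq_zero_iff]
  obtain ⟨hlb, hub⟩ := Angle.toReal_mem_Ioc x
  have hx : x = (x.toReal : Angle) := (Angle.coe_toReal x).symm
  set r := x.toReal
  rcases lt_trichotomy r 0 with hr | hr | hr
  · have hpos : 0 < Real.sin (-(r / 2)) := sin_pos_of_pos_of_lt_pi (by linarith) (by linarith)
    have hle := h (↑(-(r / 2))) hpos
    rw [hx, ← Angle.coe_add, Angle.sin_coe, show r + -(r / 2) = -(-(r / 2)) by ring,
      Real.sin_neg] at hle
    linarith
  · exact hr
  · have hpos : 0 < Real.sin (r / 2) := sin_pos_of_pos_of_lt_pi (by linarith) (by linarith)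
    have hle := h (↑(π - r / 2)) (by rwa [Angle.sin_coe, Real.sin_pi_sub])
    rw [hx, ← Angle.coe_add, Angle.sin_coe, show r + (π - r / 2) = r / 2 + π by ring,
      Real.sin_add_pi] at hle
    linarith

lemma ae_eq_centralArc (hU : MeasurableSet U)
    (hmis : ∀ h : Angle, 0 < (-h).sin → volume (misaligned h U) = 0) :
    U =ᵐ[volume] centralArc U := by
  obtain ⟨h, hh, hle⟩ := exists_sin_neg_pos_le_volume_gain_add hU hU
  have hgain : volume (gain h U (centralArc U)) = 0 :=
    measure_mono_null (fun x hx => reflect_mem_misaligned_of_mem_gain hh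
      (fun _ hx _ hxy => mem_centralArc_of_cos_lt hx hxy) hx)
      ((measurePreserving_reflect h).quasiMeasurePreserving.preimage_null (hmis h hh))
  have hdiff : volume (U \ centralArc U) = 0 := by
    simpa [hgain, ENNReal.mul_eq_top, measure_ne_top] using hle
  exact (ae_le_set.2 hdiff).antisymm (ae_le_set.2 ((volume_centralArc_sdiff hU).trans hdiff))

lemma misaligned_preimage_add (h θ : Angle) (U : Set Angle) :
    misaligned h ((· + θ) ⁻¹' U) = (· + θ) ⁻¹' misaligned (h + θ) U := by
  ext x
  simp only [misaligned, reflect, mem_inter_iff, Set.mem_sdiff, mem_preimage, mem_ofPred_eq,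
    add_sub_add_right_eq_sub, show h + θ + (h + θ) - (x + θ) = h + h - x + θ by abel]

lemma ae_eq_preimage_add_neg_centralArc (hU : MeasurableSet U)
    (hmis : ∀ h : Angle, 0 < (θ - h).sin → volume (misaligned h U) = 0) :
    U =ᵐ[volume] (· + -θ) ⁻¹' centralArc U := by
  have hmp := measurePreserving_add_right (volume : Measure Angle)
  have hshift := ae_eq_centralArc (measurable_add_const θ hU) fun h hh => by
    rw [misaligned_preimage_add, (hmp θ).measure_preimage
      (measurableSet_misaligned (h + θ) hU).nullMeasurableSet]
    exact hmis _ (by rwa [sub_add_cancel_right])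
  rw [centralArc_congr ((hmp θ).measure_preimage hU.nullMeasurableSet)] at hshift
  simpa [preimage_preimage] using (hmp (-θ)).quasiMeasurePreserving.preimage_ae_eq hshift

lemma Coherent.volume_misaligned_eq_zero {R : ℝ} (hUV : Coherent U V) (hU : MeasurableSet U)
    (hR : 0 < R) (hθ : ∀ h : Angle, ∫ x in U, (x - h).sin = R * (θ - h).sin)
    (hh : 0 < (θ - h).sin) : volume (misaligned h V) = 0 := by
  refine (hUV h).resolve_left (volume_aligned_ne_zero_of_setIntegral_pos hU ?_)
  rw [hθ]
  positivity

theorem Coherent.exists_ae_eq_preimage_centralArc (hUV : Coherent U V) (hU : MeasurableSet U)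
    (hV : MeasurableSet V) (hU' : ¬EventuallyConst U (ae volume))
    (hV' : ¬EventuallyConst V (ae volume)) :
    ∃ z : Angle, U =ᵐ[volume] (· + z) ⁻¹' centralArc U ∧ V =ᵐ[volume] (· + z) ⁻¹' centralArc V := by
  obtain ⟨R, hR, θ, hθ⟩ := exists_forall_setIntegral_sin_sub_eq U
  obtain ⟨S, hS, φ, hφ⟩ := exists_forall_setIntegral_sin_sub_eq V
  have hR' : 0 < R := by
    obtain ⟨h, hh⟩ := hUV.exists_setIntegral_ne_zero hU hV hU' hV'
    exact hR.lt_of_ne' (left_ne_zero_of_mul (hθ h ▸ hh))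
  have hS' : 0 < S := by
    obtain ⟨h, hh⟩ := hUV.symm.exists_setIntegral_ne_zero hV hU hV' hU'
    exact hS.lt_of_ne' (left_ne_zero_of_mul (hφ h ▸ hh))
  have hmisV : ∀ h : Angle, 0 < (θ - h).sin → volume (misaligned h V) = 0 :=
    fun h => hUV.volume_misaligned_eq_zero hU hR' hθ
  have hφθ : φ - θ = 0 := eq_zero_of_forall_sin_add_nonneg fun t ht => by
    have hnonneg := setIntegral_nonneg_of_volume_misaligned_eq_zero hV
      (hmisV (θ - t) (by rwa [sub_sub_cancel]))
    rw [hφ, mul_nonneg_iff_of_pos_left hS', ← sub_add] at hnonneg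
    exact hnonneg
  have hmisU : ∀ h : Angle, 0 < (θ - h).sin → volume (misaligned h U) = 0 := fun h hh =>
    hUV.symm.volume_misaligned_eq_zero hV hS' hφ (by rwa [sub_eq_zero.1 hφθ])
  exact ⟨-θ, ae_eq_preimage_add_neg_centralArc hU hmisU, ae_eq_preimage_add_neg_centralArc hV hmisV⟩

namespace IsDecreasingKernel

variable (hk : IsDecreasingKernel k)
include hk

lemma coherent_of_interaction_eq (hU : MeasurableSet U) (hV : MeasurableSet V)
    (heq : interaction k (U ×ˢ V) = interaction k (centralArc U ×ˢ centralArc V)) :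
    Coherent U V := by
  intro h
  by_contra! hne
  have hle := hk.interaction_le_interaction_centralArc (measurableSet_polarize h hU)
    (measurableSet_polarize h hV)
  rw [centralArc_congr (volume_polarize h hU), centralArc_congr (volume_polarize h hV),
    ← heq] at hle
  exact hle.not_gt (hk.interaction_lt_interaction_polarize hU hV hne.1 hne.2)

theorem interaction_eq_interaction_centralArc_iff (hU : MeasurableSet U) (hV : MeasurableSet V)
    (hU' : ¬EventuallyConst U (ae volume)) (hV' : ¬EventuallyConst V (ae volume)) :
    interaction k (U ×ˢ V) = interaction k (centralArc U ×ˢ centralArc V) ↔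
      ∃ z : Angle, U =ᵐ[volume] (· + z) ⁻¹' centralArc U ∧
        V =ᵐ[volume] (· + z) ⁻¹' centralArc V := by
  refine ⟨fun heq => (hk.coherent_of_interaction_eq hU hV heq).exists_ae_eq_preimage_centralArc
    hU hV hU' hV', fun ⟨z, hUz, hVz⟩ => ?_⟩
  rw [interaction_prod_congr hUz hVz]
  exact interaction_preimage_add_prod_preimage_add hk.measurable (measurableSet_centralArc U)
    (measurableSet_centralArc V) z

end IsDecreasingKernel
end Equality

section Functions

variable {U V : Set Angle} {f f' w w' : Angle → ℝ} {k : Angle → ℝ≥0∞}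

/-- `f'` is, up to null sets, the symmetric decreasing rearrangement of `f` on the circle. -/
def IsCentralRearrangement (f' f : Angle → ℝ) : Prop :=
  ∀ t, {x | t < f' x} =ᵐ[volume] centralArc {x | t < f x}

lemma measurableSet_setOf_lt (hf : Measurable f) (t : ℝ) : MeasurableSet {x | t < f x} :=
  measurableSet_lt measurable_const hf

/-- The pairs `(x, y)` for which exactly one of `x ∈ U` and `y ∈ V` holds. -/
def mismatch (U V : Set Angle) : Set (Angle × Angle) := (U ×ˢ univ) ∆ (univ ×ˢ V)

lemma interaction_mismatch_congr {U' V' : Set Angle} (hU : U =ᵐ[volume] U')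
    (hV : V =ᵐ[volume] V') : interaction k (mismatch U V) = interaction k (mismatch U' V') :=
  measure_congr <| interaction_absolutelyContinuous.ae_eq <|
    (Measure.set_prod_ae_eq hU .rfl).symmDiff (Measure.set_prod_ae_eq .rfl hV)

lemma measurable_interaction_mismatch (k : Angle → ℝ≥0∞) [SFinite (interaction k)]
    (hf : Measurable f) (hw : Measurable w) :
    Measurable fun t => interaction k (mismatch {x | t < f x} {x | t < w x}) := by
  have hS : MeasurableSet ({q : (Angle × Angle) × ℝ | q.2 < f q.1.1} ∆ {q | q.2 < w q.1.2}) :=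
    (measurableSet_lt (by fun_prop) (by fun_prop)).symmDiff
      (measurableSet_lt (by fun_prop) (by fun_prop))
  convert measurable_measure_prodMk_right (μ := interaction k) hS using 4
  ext p
  simp [mismatch, mem_symmDiff]

lemma lintegral_abs_sub_interaction (k : Angle → ℝ≥0∞) [SFinite (interaction k)]
    (hf : Measurable f) (hw : Measurable w) :
    ∫⁻ p, ENNReal.ofReal |f p.1 - w p.2| ∂interaction k =
      ∫⁻ t : ℝ, interaction k (mismatch {x | t < f x} {x | t < w x}) := by
  refine (lintegral_abs_sub_eq_lintegral_measure_symmDiff (hf.comp measurable_fst)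
    (hw.comp measurable_snd)).trans (lintegral_congr fun t => congrArg _ ?_)
  ext p
  simp [mismatch, mem_symmDiff]

lemma setOf_lt_prod_setOf_lt (f w : Angle → ℝ) (t : ℝ) :
    {x | t < f x} ×ˢ {x | t < w x} = {p : Angle × Angle | t < min (f p.1) (w p.2)} := by
  ext p
  simp only [mem_prod, mem_ofPred_eq, lt_inf_iff]

lemma forall_interaction_eq_of_ae (hff' : IsCentralRearrangement f' f)
    (hww' : IsCentralRearrangement w' w)
    (h : ∀ᵐ t : ℝ, interaction k ({x | t < f x} ×ˢ {x | t < w x}) =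
      interaction k (centralArc {x | t < f x} ×ˢ centralArc {x | t < w x})) (t : ℝ) :
    interaction k ({x | t < f x} ×ˢ {x | t < w x}) =
      interaction k (centralArc {x | t < f x} ×ˢ centralArc {x | t < w x}) := by
  simp only [← interaction_prod_congr (hff' _) (hww' _), setOf_lt_prod_setOf_lt] at h ⊢
  exact measure_setOf_lt_eq_of_ae h t

/-- Unless one of the superlevel sets `{τ < f}` and `{τ < w}` is trivial, a single translation
carries both of them, up to null sets, to the corresponding superlevel sets of `f'` and `w'`. -/
def CommonTranslation {G : Type*} [MeasureSpace G] [Add G] (f w f' w' : G → ℝ) (τ : ℝ) : Prop :=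
  ¬EventuallyConst {x | τ < f x} (ae volume) → ¬EventuallyConst {x | τ < w x} (ae volume) →
    ∃ z : G, {x | τ < f x} =ᵐ[volume] {x | τ < f' (x + z)} ∧
      {x | τ < w x} =ᵐ[volume] {x | τ < w' (x + z)}

namespace IsDecreasingKernel

variable (hk : IsDecreasingKernel k)
include hk

lemma interaction_mismatch_add (hU : MeasurableSet U) (hV : MeasurableSet V) :
    interaction k (mismatch U V) + 2 * interaction k (U ×ˢ V) =
      (volume U + volume V) * ∫⁻ x, k x := by
  have hadd := measure_symmDiff_add_two_mul_measure_inter (μ := interaction k) (hU.prod .univ)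
    (MeasurableSet.univ.prod hV)
  rwa [prod_inter_prod, inter_univ, univ_inter, interaction_prod_univ hk.measurable hU,
    hk.interaction_univ_prod hV, ← add_mul] at hadd

lemma interaction_mismatch_centralArc_add (hU : MeasurableSet U) (hV : MeasurableSet V) :
    interaction k (mismatch (centralArc U) (centralArc V)) +
        2 * interaction k (centralArc U ×ˢ centralArc V) =
      interaction k (mismatch U V) + 2 * interaction k (U ×ˢ V) := by
  rw [hk.interaction_mismatch_add hU hV, hk.interaction_mismatch_add
    (measurableSet_centralArc U) (measurableSet_centralArc V), volume_centralArc, volume_centralArc]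

lemma interaction_mismatch_centralArc_le (hU : MeasurableSet U) (hV : MeasurableSet V) :
    interaction k (mismatch (centralArc U) (centralArc V)) ≤ interaction k (mismatch U V) := by
  have hne : 2 * interaction k (U ×ˢ V) ≠ ⊤ :=
    ENNReal.mul_ne_top ENNReal.ofNat_ne_top hk.interaction_prod_ne_top
  refine (ENNReal.add_le_add_iff_right hne).1 ?_
  rw [← hk.interaction_mismatch_centralArc_add hU hV]
  exact add_le_add le_rfl (mul_le_mul' le_rfl (hk.interaction_le_interaction_centralArc hU hV))

lemma interaction_mismatch_centralArc_eq_iff (hU : MeasurableSet U) (hV : MeasurableSet V) :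
    interaction k (mismatch (centralArc U) (centralArc V)) = interaction k (mismatch U V) ↔
      interaction k (U ×ˢ V) = interaction k (centralArc U ×ˢ centralArc V) := by
  have hfin := hk.isFiniteMeasure_interaction
  have hadd := hk.interaction_mismatch_centralArc_add hU hV
  refine ⟨fun heq => ?_, fun heq => ?_⟩
  · rw [heq, ENNReal.add_right_inj (measure_ne_top _ _)] at hadd
    exact ((ENNReal.mul_right_inj two_ne_zero ENNReal.ofNat_ne_top).1 hadd).symm
  · rwa [heq, ENNReal.add_left_inj
      (ENNReal.mul_ne_top ENNReal.ofNat_ne_top (measure_ne_top _ _))] at hadd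

lemma interaction_eq_interaction_centralArc_of_eventuallyConst_left (hV : MeasurableSet V)
    (hconst : EventuallyConst U (ae volume)) :
    interaction k (U ×ˢ V) = interaction k (centralArc U ×ˢ centralArc V) := by
  rcases eventuallyConst_set'.1 hconst with hU | hU
  · have hU' : centralArc U =ᵐ[volume] (∅ : Set Angle) :=
      ae_eq_empty.2 ((volume_centralArc U).trans (ae_eq_empty.1 hU))
    rw [interaction_prod_congr hU (ae_eq_refl V),
      interaction_prod_congr hU' (ae_eq_refl (centralArc V)), empty_prod, empty_prod]
  · rw [interaction_prod_congr hU (ae_eq_refl V),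
      interaction_prod_congr (centralArc_ae_eq_univ hU) (ae_eq_refl (centralArc V)),
      hk.interaction_univ_prod hV, hk.interaction_univ_prod (measurableSet_centralArc V),
      volume_centralArc]

lemma interaction_eq_interaction_centralArc_of_eventuallyConst_right (hU : MeasurableSet U)
    (hV : MeasurableSet V) (hconst : EventuallyConst V (ae volume)) :
    interaction k (U ×ˢ V) = interaction k (centralArc U ×ˢ centralArc V) := by
  rw [hk.interaction_prod_comm hU hV, hk.interaction_prod_comm (measurableSet_centralArc U)
    (measurableSet_centralArc V)]
  exact hk.interaction_eq_interaction_centralArc_of_eventuallyConst_left hU hconst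

lemma interaction_eq_interaction_centralArc_iff_commonTranslation (hf : Measurable f)
    (hw : Measurable w) (hff' : IsCentralRearrangement f' f) (hww' : IsCentralRearrangement w' w)
    (τ : ℝ) :
    interaction k ({x | τ < f x} ×ˢ {x | τ < w x}) =
        interaction k (centralArc {x | τ < f x} ×ˢ centralArc {x | τ < w x}) ↔
      CommonTranslation f w f' w' τ := by
  have hU := measurableSet_setOf_lt hf τ
  have hV := measurableSet_setOf_lt hw τ
  by_cases hU' : EventuallyConst {x | τ < f x} (ae volume)
  · exact iff_of_true (hk.interaction_eq_interaction_centralArc_of_eventuallyConst_left hV hU')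
      fun h => absurd hU' h
  by_cases hV' : EventuallyConst {x | τ < w x} (ae volume)
  · exact iff_of_true
      (hk.interaction_eq_interaction_centralArc_of_eventuallyConst_right hU hV hV')
      fun _ h => absurd hV' h
  have hshift : ∀ {f f' : Angle → ℝ}, IsCentralRearrangement f' f → ∀ z : Angle,
      ({x | τ < f x} =ᵐ[volume] {x | τ < f' (x + z)} ↔
        {x | τ < f x} =ᵐ[volume] (· + z) ⁻¹' centralArc {x | τ < f x}) := fun hff' z =>
    ((measurePreserving_add_right volume z).quasiMeasurePreserving.preimage_ae_eq
      (hff' τ)).congr_right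
  rw [hk.interaction_eq_interaction_centralArc_iff hU hV hU' hV', CommonTranslation]
  simp only [hU', hV', not_false_eq_true, forall_const, hshift hff', hshift hww']

lemma lintegral_abs_sub_eq_iff_ae (hf : Measurable f) (hw : Measurable w) (hf' : Measurable f')
    (hw' : Measurable w') (hff' : IsCentralRearrangement f' f) (hww' : IsCentralRearrangement w' w)
    (hfin : ∫⁻ p, ENNReal.ofReal |f p.1 - w p.2| ∂interaction k ≠ ⊤) :
    ∫⁻ p, ENNReal.ofReal |f' p.1 - w' p.2| ∂interaction k =
        ∫⁻ p, ENNReal.ofReal |f p.1 - w p.2| ∂interaction k ↔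
      ∀ᵐ t, interaction k ({x | t < f x} ×ˢ {x | t < w x}) =
        interaction k (centralArc {x | t < f x} ×ˢ centralArc {x | t < w x}) := by
  have hfinite := hk.isFiniteMeasure_interaction
  have hlevel := fun t => hk.interaction_mismatch_centralArc_eq_iff (measurableSet_setOf_lt hf t)
    (measurableSet_setOf_lt hw t)
  simp only [← hlevel]
  rw [lintegral_abs_sub_interaction k hf hw] at hfin ⊢
  simp only [lintegral_abs_sub_interaction k hf' hw', interaction_mismatch_congr (hff' _) (hww' _)]
  refine ⟨fun heq => ?_, lintegral_congr_ae⟩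
  exact ae_eq_of_ae_le_of_lintegral_le (ae_of_all _ fun t =>
    hk.interaction_mismatch_centralArc_le (measurableSet_setOf_lt hf t)
      (measurableSet_setOf_lt hw t)) (heq ▸ hfin)
    (measurable_interaction_mismatch k hf hw).aemeasurable heq.ge

theorem lintegral_abs_sub_tfae (hf : Measurable f) (hw : Measurable w) (hf' : Measurable f')
    (hw' : Measurable w') (hff' : IsCentralRearrangement f' f) (hww' : IsCentralRearrangement w' w)
    (hfin : ∫⁻ p, ENNReal.ofReal |f p.1 - w p.2| ∂interaction k ≠ ⊤) :
    [∫⁻ p, ENNReal.ofReal |f' p.1 - w' p.2| ∂interaction k =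
        ∫⁻ p, ENNReal.ofReal |f p.1 - w p.2| ∂interaction k,
      ∀ τ, CommonTranslation f w f' w' τ,
      ∀ᵐ τ, CommonTranslation f w f' w' τ].TFAE := by
  rw [hk.lintegral_abs_sub_eq_iff_ae hf hw hf' hw' hff' hww' hfin]
  simp only [← hk.interaction_eq_interaction_centralArc_iff_commonTranslation hf hw hff' hww']
  tfae_have 1 → 2 := forall_interaction_eq_of_ae hff' hww'
  tfae_have 2 → 3 := ae_of_all _
  tfae_have 3 → 1 := id
  tfae_finish

end IsDecreasingKernel
end Functions

section Level

variable {α : Type*} {m : ℝ → ℝ} {a : ℝ}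

lemma exists_forall_nonneg_lt_iff (hm : Antitone m) (hbdd : ∃ s, m s ≤ a)
    (hright : ∀ t, a < m t → ∃ s > t, a < m s) : ∃ b, ∀ t, 0 ≤ t → (t < b ↔ a < m t) := by
  obtain ⟨c, hc⟩ := hbdd
  have hbdd : BddAbove {t | 0 ≤ t ∧ a < m t} :=
    ⟨c, fun t ht => le_of_not_ge fun hct => ht.2.not_ge ((hm hct).trans hc)⟩
  refine ⟨sSup {t | 0 ≤ t ∧ a < m t}, fun t ht => ⟨fun hlt => ?_, fun hlt => ?_⟩⟩
  · have hne : {t | 0 ≤ t ∧ a < m t}.Nonempty := by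
      by_contra! hempty
      rw [hempty, Real.sSup_empty] at hlt
      exact hlt.not_ge ht
    obtain ⟨s, hs, hts⟩ := exists_lt_of_lt_csSup hne hlt
    exact hs.2.trans_le (hm hts.le)
  · obtain ⟨s, hts, hs⟩ := hright t hlt
    exact hts.trans_le (le_csSup hbdd ⟨ht.trans hts.le, hs⟩)

lemma antitone_measureReal_setOf_lt [MeasurableSpace α] (μ : Measure α) [IsFiniteMeasure μ]
    (f : α → ℝ) : Antitone fun t => μ.real {x | t < f x} :=
  fun _ _ hst => measureReal_mono fun _ hx => lt_of_le_of_lt hst hx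

lemma exists_measureReal_setOf_lt_lt [MeasurableSpace α] (μ : Measure α) [IsFiniteMeasure μ]
    {f : α → ℝ} (hf : Measurable f) (ha : 0 < a) : ∃ t, μ.real {x | t < f x} < a := by
  have hanti : Antitone fun t : ℝ => {x | t < f x} := fun _ _ hst _ hx => lt_of_le_of_lt hst hx
  have hlim := tendsto_measure_iInter_atTop (μ := μ)
    (fun t => (measurableSet_lt measurable_const hf).nullMeasurableSet) hanti
    ⟨0, measure_ne_top _ _⟩
  have hempty : ⋂ t : ℝ, {x | t < f x} = ∅ :=
    eq_empty_of_forall_notMem fun x hx => lt_irrefl (f x) (mem_iInter.1 hx (f x))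
  rw [hempty, measure_empty] at hlim
  obtain ⟨t, ht⟩ := (hlim.eventually (gt_mem_nhds (ENNReal.ofReal_pos.2 ha))).exists
  exact ⟨t, (ENNReal.lt_ofReal_iff_toReal_lt (measure_ne_top _ _)).1 ht⟩

lemma exists_gt_lt_measureReal_setOf_lt [MeasurableSpace α] (μ : Measure α) [IsFiniteMeasure μ]
    (f : α → ℝ) {t : ℝ} (h : a < μ.real {x | t < f x}) : ∃ s > t, a < μ.real {x | s < f x} := by
  have hlim := (ENNReal.tendsto_toReal (measure_ne_top μ _)).comp
    (tendsto_measure_setOf_lt_nhdsGT (μ := μ) f t)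
  obtain ⟨s, hs, hts⟩ := ((hlim.eventually (lt_mem_nhds h)).and self_mem_nhdsWithin).exists
  exact ⟨s, hts, hs⟩

end Level

section SymmRearr

variable {u : ℝ → ℝ} {x t : ℝ}

lemma volume_setOf_mem_Ioo_and (u : ℝ → ℝ) (t : ℝ) :
    volume {y | y ∈ Ioo (-π) π ∧ t < u y} = volume.restrict (Ioo (-π) π) {y | t < u y} := by
  rw [Measure.restrict_apply' measurableSet_Ioo, inter_comm]
  rfl

lemma symmRearr_eq_setIntegral (u : ℝ → ℝ) (x : ℝ) :
    symmRearr u x = ∫ t in Ioi (0 : ℝ),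
      {t | |x| < (volume.restrict (Ioo (-π) π)).real {y | t < u y} / 2}.indicator 1 t := by
  classical
  refine integral_congr_ae (ae_of_all _ fun t => ?_)
  have hmem : x ∈ symmSet {y | y ∈ Ioo (-π) π ∧ t < u y} ↔
      |x| < (volume.restrict (Ioo (-π) π)).real {y | t < u y} / 2 := by
    rw [symmSet, volume_setOf_mem_Ioo_and, mem_Ioo, ← abs_lt, measureReal_def]
  simp only [indicator_apply, hmem, mem_ofPred_eq, Pi.one_apply]

lemma measurableSet_setOf_lt_distribution (u : ℝ → ℝ) :
    MeasurableSet {p : ℝ × ℝ |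
      |p.1| < (volume.restrict (Ioo (-π) π)).real {y | p.2 < u y} / 2} := by
  have hm := (antitone_measureReal_setOf_lt (volume.restrict (Ioo (-π) π)) u).measurable
  exact measurableSet_lt (by fun_prop) ((hm.comp measurable_snd).div_const 2)

lemma measurable_symmRearr (u : ℝ → ℝ) : Measurable (symmRearr u) := by
  have hind : Measurable fun p : ℝ × ℝ =>
      {p : ℝ × ℝ | |p.1| < (volume.restrict (Ioo (-π) π)).real {y | p.2 < u y} / 2}.indicator
        (1 : ℝ × ℝ → ℝ) p :=
    measurable_one.indicator (measurableSet_setOf_lt_distribution u)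
  rw [funext (symmRearr_eq_setIntegral u)]
  exact (hind.stronglyMeasurable.integral_prod_right' (ν := volume.restrict (Ioi 0))).measurable

lemma symmRearr_nonneg (u : ℝ → ℝ) (x : ℝ) : 0 ≤ symmRearr u x :=
  integral_nonneg fun _ => indicator_nonneg (fun _ _ => zero_le_one) x

lemma symmRearr_neg (u : ℝ → ℝ) (x : ℝ) : symmRearr u (-x) = symmRearr u x := by
  rw [symmRearr_eq_setIntegral, symmRearr_eq_setIntegral, abs_neg]

lemma measureReal_restrict_Ioo_le (s : Set ℝ) :
    (volume.restrict (Ioo (-π) π)).real s ≤ 2 * π := by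
  refine (measureReal_mono (subset_univ s)).trans_eq ?_
  rw [measureReal_restrict_apply_univ, Real.volume_real_Ioo_of_le (by linarith [pi_pos])]
  ring

lemma symmRearr_pi (u : ℝ → ℝ) : symmRearr u π = 0 := by
  have hempty : ∀ t, π ∉ symmSet {y | y ∈ Ioo (-π) π ∧ t < u y} := fun t ht => by
    have hle := measureReal_restrict_Ioo_le {y | t < u y}
    rw [measureReal_def, ← volume_setOf_mem_Ioo_and] at hle
    linarith [ht.2]
  simp only [symmRearr, indicator_of_notMem (hempty _), integral_zero]

-- At `x = 0` the right side can hold for every `t`, and then the integral defining `u^* 0` has the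
-- junk value `0`.
lemma lt_symmRearr_iff (hu : Measurable u) (hx : x ≠ 0) (ht : 0 ≤ t) :
    t < symmRearr u x ↔ |x| < (volume.restrict (Ioo (-π) π)).real {y | t < u y} / 2 := by
  set μ := volume.restrict (Ioo (-π) π)
  obtain ⟨c, hc⟩ := exists_measureReal_setOf_lt_lt μ hu (mul_pos two_pos (abs_pos.2 hx))
  obtain ⟨b, hb⟩ := exists_forall_nonneg_lt_iff (antitone_measureReal_setOf_lt μ u) ⟨c, hc.le⟩
    fun t => exists_gt_lt_measureReal_setOf_lt μ u
  have hb' : ∀ t, 0 ≤ t → (t < b ↔ |x| < μ.real {y | t < u y} / 2) := fun t ht => by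
    rw [hb t ht, lt_div_iff₀' two_pos]
  have hset : {t | |x| < μ.real {y | t < u y} / 2} ∩ Ioi 0 = Ioo 0 b := by
    ext t
    simp only [mem_inter_iff, mem_ofPred_eq, mem_Ioi, mem_Ioo]
    exact ⟨fun h => ⟨h.2, (hb' t h.2.le).2 h.1⟩, fun h => ⟨(hb' t h.1.le).1 h.2, h.1⟩⟩
  have hmeas : MeasurableSet {t | |x| < μ.real {y | t < u y} / 2} :=
    measurable_prodMk_left (measurableSet_setOf_lt_distribution u)
  have hval : symmRearr u x = max b 0 := by
    rw [symmRearr_eq_setIntegral, integral_indicator_one hmeas, measureReal_restrict_apply hmeas,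
      hset, Real.volume_real_Ioo, sub_zero]
  rw [hval, lt_max_iff, or_iff_left ht.not_gt, hb' t ht]

end SymmRearr

section Periodic

variable {f : ℝ → ℝ} {x : ℝ}

lemma measurable_periodize (hf : Measurable f) : Measurable (periodize f) :=
  hf.comp (by fun_prop)

lemma periodize_periodic (f : ℝ → ℝ) : Function.Periodic (periodize f) (2 * π) := fun x => by
  have hfloor : ⌊(x + 2 * π + π) / (2 * π)⌋ = ⌊(x + π) / (2 * π)⌋ + 1 := by
    rw [add_right_comm, add_div, div_self two_pi_pos.ne', Int.floor_add_one]
  rw [periodize, periodize, hfloor]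
  congr 1
  push_cast
  ring

lemma periodize_of_mem (f : ℝ → ℝ) (hx : x ∈ Ico (-π) π) : periodize f x = f x := by
  have hfloor : ⌊(x + π) / (2 * π)⌋ = 0 :=
    Int.floor_eq_zero_iff.2 ⟨div_nonneg (by linarith [hx.1]) two_pi_pos.le,
      (div_lt_one two_pi_pos).2 (by linarith [hx.2])⟩
  rw [periodize, hfloor, Int.cast_zero, mul_zero, sub_zero]

lemma apply_toReal_coe (hf : Function.Periodic f (2 * π)) (x : ℝ) :
    f (x : Angle).toReal = f x := by
  rw [Angle.toReal_coe, toIocMod]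
  exact hf.sub_zsmul_eq _

/-- The `2π`-periodic extension of `f|_{[-π,π)}`, as a function on the circle. -/
noncomputable def circleLift (f : ℝ → ℝ) (x : Angle) : ℝ := periodize f x.toReal

lemma measurable_circleLift (hf : Measurable f) : Measurable (circleLift f) :=
  (measurable_periodize hf).comp measurable_toReal

lemma circleLift_comp_coe (f : ℝ → ℝ) : circleLift f ∘ (↑) = periodize f :=
  funext (apply_toReal_coe (periodize_periodic f))

lemma circleLift_coe_of_mem (f : ℝ → ℝ) (hx : x ∈ Ioo (-π) π) : circleLift f x = f x :=
  (congrFun (circleLift_comp_coe f) x).trans (periodize_of_mem f (Ioo_subset_Ico_self hx))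

end Periodic

section Coe

lemma ae_toReal_mem_Ioo : ∀ᵐ x : Angle, x.toReal ∈ Ioo (-π) π := by
  have h : ∀ᵐ x ∂volume.restrict (Ioc (-π) π), x ∈ Ioo (-π) π := by
    rw [← Measure.restrict_congr_set (Ioo_ae_eq_Ioc (μ := volume))]
    exact ae_restrict_mem measurableSet_Ioo
  exact measurePreserving_toReal.quasiMeasurePreserving.ae h

lemma map_coe_ae_volume : map ((↑) : ℝ → Angle) (ae volume) = ae volume := by
  refine Filter.ext fun s => ⟨fun h => ?_, fun h => ?_⟩
  · have h' := measurePreserving_toReal.quasiMeasurePreserving.ae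
      (ae_restrict_of_ae (s := Ioc (-π) π) (mem_map.1 h))
    filter_upwards [h'] with x hx
    rwa [← Angle.coe_toReal x]
  · change ∀ᵐ x : ℝ, (x : Angle) ∈ s
    rw [← Measure.restrict_univ (μ := (volume : Measure ℝ)),
      ← iUnion_Ioc_add_zsmul two_pi_pos 0, ae_restrict_iUnion_iff]
    intro n
    rw [add_zsmul, one_zsmul, ← add_assoc]
    exact (AddCircle.measurePreserving_mk (2 * π) (0 + n • (2 * π))).quasiMeasurePreserving.ae h

lemma preimage_coe_ae_eq_iff {s t : Set Angle} :
    ((↑) : ℝ → Angle) ⁻¹' s =ᵐ[volume] ((↑) : ℝ → Angle) ⁻¹' t ↔ s =ᵐ[volume] t := by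
  rw [← map_coe_ae_volume]
  rfl

lemma commonTranslation_comp_coe_iff {f w f' w' : Angle → ℝ} {τ : ℝ} :
    CommonTranslation (f ∘ ((↑) : ℝ → Angle)) (w ∘ (↑)) (f' ∘ (↑)) (w' ∘ (↑)) τ ↔
      CommonTranslation f w f' w' τ := by
  have hconst : ∀ f : Angle → ℝ, EventuallyConst {x : ℝ | τ < f x} (ae volume) ↔
      EventuallyConst {x | τ < f x} (ae volume) := fun f => by
    rw [← map_coe_ae_volume, ← eventuallyConst_preimage]
    rfl
  have hshift : ∀ (f f' : Angle → ℝ) (z : ℝ),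
      {x : ℝ | τ < f x} =ᵐ[volume] {x : ℝ | τ < f' (x + z : ℝ)} ↔
        {x | τ < f x} =ᵐ[volume] {x | τ < f' (x + z)} := fun f f' z =>
    preimage_coe_ae_eq_iff (s := {x | τ < f x}) (t := {x | τ < f' (x + z)})
  simp only [CommonTranslation, Function.comp_apply, hconst, hshift]
  refine imp_congr_right fun _ => imp_congr_right fun _ => ?_
  exact ⟨fun ⟨z, hz⟩ => ⟨z, hz⟩, fun ⟨z, hz⟩ => ⟨z.toReal, by rwa [Angle.coe_toReal]⟩⟩

end Coe

section Rearrangement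

variable {u : ℝ → ℝ} {x : ℝ}

lemma volume_setOf_lt_circleLift (hu : Measurable u) (t : ℝ) :
    volume {x | t < circleLift u x} = volume.restrict (Ioo (-π) π) {x | t < u x} := by
  have hlift := measurePreserving_coe_angle.measure_preimage
    (measurableSet_setOf_lt (measurable_circleLift hu) t).nullMeasurableSet
  rw [← hlift, ← Measure.restrict_congr_set (Ioo_ae_eq_Ioc (μ := volume))]
  refine measure_congr (eventuallyEq_set.2 ?_)
  filter_upwards [ae_restrict_mem measurableSet_Ioo] with x hx
  simp only [mem_preimage, mem_ofPred_eq, circleLift_coe_of_mem u hx]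

lemma circleLift_ae_eq (f : ℝ → ℝ) : circleLift f =ᵐ[volume] fun x => f x.toReal := by
  filter_upwards [ae_toReal_mem_Ioo] with x hx
  exact periodize_of_mem f (Ioo_subset_Ico_self hx)

lemma perRearr_of_mem (u : ℝ → ℝ) (hx : x ∈ Icc (-π) π) : perRearr u x = symmRearr u x := by
  rcases hx.2.eq_or_lt with rfl | hlt
  · rw [perRearr, ← (periodize_periodic _).sub_eq, show π - 2 * π = -π by ring,
      periodize_of_mem _ ⟨le_rfl, by linarith [pi_pos]⟩, symmRearr_neg]
  · exact periodize_of_mem _ ⟨hx.1, hlt⟩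

lemma perRearr_pi (u : ℝ → ℝ) : perRearr u π = 0 :=
  (perRearr_of_mem u ⟨by linarith [pi_pos], le_rfl⟩).trans (symmRearr_pi u)

lemma even_perRearr (u : ℝ → ℝ) : Function.Even (perRearr u) := fun x => by
  have hx := Ioc_subset_Icc_self (Angle.toReal_mem_Ioc x)
  have hneg : perRearr u (-x) = perRearr u (-(x : Angle).toReal) := by
    rw [perRearr, ← circleLift_comp_coe, Function.comp_apply, Function.comp_apply, Angle.coe_neg,
      Angle.coe_neg, Angle.coe_toReal]
  rw [hneg, perRearr_of_mem u ⟨neg_le_neg hx.2, neg_le.1 hx.1⟩, symmRearr_neg,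
    ← perRearr_of_mem u hx, perRearr, apply_toReal_coe (periodize_periodic _)]

lemma isCentralRearrangement_circleLift_symmRearr (hu : Measurable u) (hu0 : ∀ x, 0 ≤ u x) :
    IsCentralRearrangement (circleLift (symmRearr u)) (circleLift u) := fun t => by
  rcases lt_or_ge t 0 with ht | ht
  · have hlevel : ∀ {f : ℝ → ℝ}, (∀ x, 0 ≤ f x) → {x | t < circleLift f x} = univ := fun hf =>
      eq_univ_of_forall fun _ => ht.trans_le (hf _)
    rw [hlevel hu0, hlevel (symmRearr_nonneg u)]
    exact (centralArc_ae_eq_univ (ae_eq_refl univ)).symm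
  · refine eventuallyEq_set.2 ?_
    filter_upwards [circleLift_ae_eq (symmRearr u), Measure.ae_ne volume 0] with x hx hx0
    rw [hx, lt_symmRearr_iff hu (Angle.toReal_eq_zero_iff.not.2 hx0) ht, centralArc,
      volume_setOf_lt_circleLift hu]
    rfl

end Rearrangement

section Integrals

lemma lintegral_angle {f : Angle → ℝ≥0∞} (hf : Measurable f) :
    ∫⁻ x, f x = ∫⁻ x in Ioo (-π) π, f (x : Angle) := by
  rw [Measure.restrict_congr_set Ioo_ae_eq_Ioc, measurePreserving_coe_angle.lintegral_comp hf]

lemma lintegral_angle_prod {f : Angle × Angle → ℝ≥0∞} (hf : Measurable f) :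
    ∫⁻ p, f p = ∫⁻ x in Ioo (-π) π, ∫⁻ y in Ioo (-π) π, f (x, y) := by
  rw [Measure.volume_eq_prod, lintegral_prod _ hf.aemeasurable,
    lintegral_angle hf.lintegral_prod_right']
  exact lintegral_congr fun x => lintegral_angle (hf.comp measurable_prodMk_left)

lemma coe_sub_ne_zero {x y : ℝ} (hx : x ∈ Ioo (-π) π) (hy : y ∈ Ioo (-π) π) (hxy : x ≠ y) :
    ((x - y : ℝ) : Angle) ≠ 0 := fun h => hxy <| by
  rw [Angle.coe_sub, sub_eq_zero] at h
  rw [← Angle.toReal_coe_eq_self_iff_mem_Ioc.2 (Ioo_subset_Ioc_self hx), h,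
    Angle.toReal_coe_eq_self_iff_mem_Ioc.2 (Ioo_subset_Ioc_self hy)]

end Integrals

section Kernel

variable {g : ℝ → ℝ}

/-- The function `g` with values in `[0, ∞]` and with the value `∞` at the origin, which makes it
strictly decreasing up to the origin. -/
noncomputable def peakedProfile (g : ℝ → ℝ) (r : ℝ) : ℝ≥0∞ :=
  if r = 0 then ⊤ else ENNReal.ofReal (g r)

lemma measurable_peakedProfile (hg : Measurable g) : Measurable (peakedProfile g) :=
  .ite (measurableSet_singleton 0) measurable_const hg.ennreal_ofReal

lemma strictAntiOn_peakedProfile {b : ℝ} (hg : ∀ x, 0 ≤ g x) (hanti : StrictAntiOn g (Ioc 0 b)) :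
    StrictAntiOn (peakedProfile g) (Icc 0 b) := fun r hr s hs hrs => by
  have hs0 : 0 < s := hr.1.trans_lt hrs
  rw [peakedProfile, if_neg hs0.ne', peakedProfile]
  split_ifs with hr0
  · exact ENNReal.ofReal_lt_top
  · have hlt : g s < g r := hanti ⟨hr.1.lt_of_ne' hr0, hr.2⟩ ⟨hs0, hs.2⟩ hrs
    exact (ENNReal.ofReal_lt_ofReal_iff ((hg s).trans_lt hlt)).2 hlt

/-- The kernel on the circle induced by an even `2π`-periodic function. -/
noncomputable def circleKernel (g : ℝ → ℝ) (x : Angle) : ℝ≥0∞ := peakedProfile g |x.toReal|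

lemma measurable_circleKernel (hg : Measurable g) : Measurable (circleKernel g) :=
  (measurable_peakedProfile hg).comp (measurable_norm.comp measurable_toReal)

lemma circleKernel_coe {x : ℝ} (hper : Function.Periodic g (2 * π)) (heven : Function.Even g)
    (hx : (x : Angle) ≠ 0) : circleKernel g x = ENNReal.ofReal (g x) := by
  have habs : g |(x : Angle).toReal| = g (x : Angle).toReal :=
    abs_by_cases (fun r => g r = g (x : Angle).toReal) rfl (heven _)
  rw [circleKernel, peakedProfile, if_neg (abs_ne_zero.2 (Angle.toReal_eq_zero_iff.not.2 hx)), habs,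
    apply_toReal_coe hper]

lemma isDecreasingKernel_circleKernel (hg : Measurable g) (hg0 : ∀ x, 0 ≤ g x)
    (hper : Function.Periodic g (2 * π)) (heven : Function.Even g)
    (hanti : StrictAntiOn g (Ioc 0 π)) (hint : IntegrableOn g (Ioo (-π) π)) :
    IsDecreasingKernel (circleKernel g) where
  measurable := measurable_circleKernel hg
  lt_iff_cos_lt {x y} := by
    rw [cos_lt_cos_iff]
    exact (strictAntiOn_peakedProfile hg0 hanti).lt_iff_gt
      ⟨abs_nonneg _, Angle.abs_toReal_le_pi x⟩ ⟨abs_nonneg _, Angle.abs_toReal_le_pi y⟩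
  lintegral_ne_top := by
    rw [lintegral_angle (measurable_circleKernel hg)]
    refine ne_of_eq_of_ne (setLIntegral_congr_fun_ae measurableSet_Ioo ?_) hint.lintegral_lt_top.ne
    filter_upwards [Measure.ae_ne volume 0] with x hx0 hx
    have hne := coe_sub_ne_zero hx ⟨neg_lt_zero.2 pi_pos, pi_pos⟩ hx0
    rw [sub_zero] at hne
    exact circleKernel_coe hper heven hne

lemma lintegral_interaction_circleKernel {f w : ℝ → ℝ} (hg : Measurable g)
    (hper : Function.Periodic g (2 * π)) (heven : Function.Even g) (hf : Measurable f)
    (hw : Measurable w) :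
    ∫⁻ p, ENNReal.ofReal |circleLift f p.1 - circleLift w p.2| ∂interaction (circleKernel g) =
      ∫⁻ x in Ioo (-π) π, ∫⁻ y in Ioo (-π) π, ENNReal.ofReal (|f x - w y| * g (x - y)) := by
  have hk := measurable_comp_sub (measurable_circleKernel hg)
  have hdiff : Measurable fun p : Angle × Angle =>
      ENNReal.ofReal |circleLift f p.1 - circleLift w p.2| := by
    have := measurable_circleLift hf
    have := measurable_circleLift hw
    fun_prop
  rw [interaction, lintegral_withDensity_eq_lintegral_mul _ hk hdiff,
    lintegral_angle_prod (hk.mul hdiff)]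
  refine setLIntegral_congr_fun measurableSet_Ioo fun x hx =>
    setLIntegral_congr_fun_ae measurableSet_Ioo ?_
  filter_upwards [Measure.ae_ne volume x] with y hyx hy
  rw [Pi.mul_apply, circleLift_coe_of_mem f hx, circleLift_coe_of_mem w hy, ← Angle.coe_sub,
    circleKernel_coe hper heven (coe_sub_ne_zero hx hy hyx.symm), mul_comm,
    ENNReal.ofReal_mul (abs_nonneg _)]

end Kernel

section Line

variable {g u v : ℝ → ℝ}

theorem lintegral_abs_symmRearr_sub_tfae (hk : IsDecreasingKernel (circleKernel g))
    (hg : Measurable g) (hper : Function.Periodic g (2 * π)) (heven : Function.Even g)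
    (hu : Measurable u) (hv : Measurable v) (hu0 : ∀ x, 0 ≤ u x) (hv0 : ∀ x, 0 ≤ v x)
    (hfin : (∫⁻ x in Ioo (-π) π, ∫⁻ y in Ioo (-π) π,
      ENNReal.ofReal (|u x - v y| * g (x - y))) ≠ ⊤) :
    [(∫⁻ x in Ioo (-π) π, ∫⁻ y in Ioo (-π) π,
        ENNReal.ofReal (|symmRearr u x - symmRearr v y| * g (x - y))) =
        ∫⁻ x in Ioo (-π) π, ∫⁻ y in Ioo (-π) π, ENNReal.ofReal (|u x - v y| * g (x - y)),
      ∀ τ, CommonTranslation (periodize u) (periodize v) (perRearr u) (perRearr v) τ,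
      ∀ᵐ τ, CommonTranslation (periodize u) (periodize v) (perRearr u) (perRearr v) τ].TFAE := by
  simp only [perRearr, ← circleLift_comp_coe, commonTranslation_comp_coe_iff]
  rw [← lintegral_interaction_circleKernel hg hper heven hu hv] at hfin ⊢
  rw [← lintegral_interaction_circleKernel hg hper heven (measurable_symmRearr u)
    (measurable_symmRearr v)]
  exact hk.lintegral_abs_sub_tfae (measurable_circleLift hu) (measurable_circleLift hv)
    (measurable_circleLift (measurable_symmRearr u))
    (measurable_circleLift (measurable_symmRearr v))
    (isCentralRearrangement_circleLift_symmRearr hu hu0)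
    (isCentralRearrangement_circleLift_symmRearr hv hv0) hfin

lemma periodic_of_eq_perRearr (hg : ∀ x, g x = perRearr g x) : Function.Periodic g (2 * π) := by
  rw [funext hg]
  exact periodize_periodic _

lemma even_of_eq_perRearr (hg : ∀ x, g x = perRearr g x) : Function.Even g := by
  rw [funext hg]
  exact even_perRearr g

lemma isDecreasingKernel_circleKernel_of_eq_perRearr (hg : Measurable g) (hg0 : ∀ x, 0 ≤ g x)
    (hsymm : ∀ x, g x = perRearr g x) (hanti : StrictAntiOn g (Ioo 0 π))
    (hint : IntegrableOn g (Ioo (-π) π)) : IsDecreasingKernel (circleKernel g) := by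
  have hanti' : StrictAntiOn g (Ioc 0 π) := fun x hx y hy hxy => by
    rcases hy.2.eq_or_lt with rfl | hyπ
    · obtain ⟨z, hxz, hzπ⟩ := exists_between hxy
      have hlt := hanti ⟨hx.1, hxy⟩ ⟨hx.1.trans hxz, hzπ⟩ hxz
      rw [hsymm π, perRearr_pi]
      exact (hg0 z).trans_lt hlt
    · exact hanti ⟨hx.1, hxy.trans hyπ⟩ ⟨hy.1, hyπ⟩ hxy
  exact isDecreasingKernel_circleKernel hg hg0 (periodic_of_eq_perRearr hsymm)
    (even_of_eq_perRearr hsymm) hanti' hint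

end Line

section EssBounds

variable {α : Type*} [MeasurableSpace α] {μ : Measure α} {f : α → ℝ} {τ : ℝ}

lemma not_eventuallyConst_setOf_lt
    (hinf : essInf (fun x => ENNReal.ofReal (f x)) μ < ENNReal.ofReal τ)
    (hsup : ENNReal.ofReal τ < essSup (fun x => ENNReal.ofReal (f x)) μ) :
    ¬EventuallyConst {x | τ < f x} (ae μ) := by
  rw [eventuallyConst_set]
  rintro (h | h)
  · refine hinf.not_ge (le_essInf_of_ae_le _ ?_)
    filter_upwards [h] with x hx using ENNReal.ofReal_le_ofReal hx.le
  · refine hsup.not_ge (essSup_le_of_ae_le _ ?_)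
    filter_upwards [h] with x hx using ENNReal.ofReal_le_ofReal (not_lt.1 hx)

lemma essInf_lt_and_lt_essSup (hf : ∀ x, 0 ≤ f x)
    (hτ : τ ≠ (essInf (fun x => ENNReal.ofReal (f x)) μ).toReal)
    (hconst : ¬EventuallyConst {x | τ < f x} (ae μ)) :
    essInf (fun x => ENNReal.ofReal (f x)) μ < ENNReal.ofReal τ ∧
      ENNReal.ofReal τ < essSup (fun x => ENNReal.ofReal (f x)) μ := by
  simp only [eventuallyConst_set, not_or] at hconst
  have hτ0 : 0 ≤ τ := by
    by_contra! h
    exact hconst.1 (.of_forall fun x => h.trans_le (hf x))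
  refine ⟨lt_of_le_of_ne (le_of_not_gt fun h => hconst.1 ?_) fun h => hτ ?_,
    lt_of_not_ge fun h => hconst.2 ?_⟩
  · filter_upwards [ae_lt_of_lt_essInf h] with x hx
    exact ((ENNReal.ofReal_lt_ofReal_iff').1 hx).1
  · rw [h, ENNReal.toReal_ofReal hτ0]
  · filter_upwards [ENNReal.ae_le_essSup fun x => ENNReal.ofReal (f x)] with x hx
    exact not_lt.2 ((ENNReal.ofReal_le_ofReal_iff hτ0).1 (hx.trans h))

end EssBounds

end CircleRearrangement

open CircleRearrangement

theorem stmt_5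
    (g : ℝ → ℝ) (hgmeas : Measurable g) (hgnonneg : ∀ x, 0 ≤ g x)
    (hgper : ∀ x, g (x + 2 * π) = g x) (hgint : IntegrableOn g (Set.Ioo (-π) π))
    (hgsymm : ∀ x, g x = perRearr g x) (hgdec : StrictAntiOn g (Set.Ioo 0 π))
    (u v : ℝ → ℝ) (humeas : Measurable u) (hvmeas : Measurable v)
    (hu0 : ∀ x, 0 ≤ u x) (hv0 : ∀ x, 0 ≤ v x)
    (hfin : (∫⁻ x in Set.Ioo (-π) π, ∫⁻ y in Set.Ioo (-π) π,
        ENNReal.ofReal (|u x - v y| * g (x - y))) ≠ ⊤) :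
    ((∫⁻ x in Set.Ioo (-π) π, ∫⁻ y in Set.Ioo (-π) π,
        ENNReal.ofReal (|symmRearr u x - symmRearr v y| * g (x - y))) =
      ∫⁻ x in Set.Ioo (-π) π, ∫⁻ y in Set.Ioo (-π) π,
        ENNReal.ofReal (|u x - v y| * g (x - y))) ↔
      ∀ τ : ℝ,
        essInf (fun x => ENNReal.ofReal (periodize u x)) (volume : Measure ℝ) <
          ENNReal.ofReal τ →
        ENNReal.ofReal τ <
          essSup (fun x => ENNReal.ofReal (periodize u x)) (volume : Measure ℝ) →
        essInf (fun x => ENNReal.ofReal (periodize v x)) (volume : Measure ℝ) <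
          ENNReal.ofReal τ →
        ENNReal.ofReal τ <
          essSup (fun x => ENNReal.ofReal (periodize v x)) (volume : Measure ℝ) →
        ∃ z : ℝ,
          ({x | τ < periodize u x} : Set ℝ) =ᵐ[volume] {x | τ < perRearr u (x + z)} ∧
          ({y | τ < periodize v y} : Set ℝ) =ᵐ[volume] {y | τ < perRearr v (y + z)} := by
  have hk := isDecreasingKernel_circleKernel_of_eq_perRearr hgmeas hgnonneg hgsymm hgdec hgint
  have htfae := lintegral_abs_symmRearr_sub_tfae hk hgmeas hgper (even_of_eq_perRearr hgsymm)
    humeas hvmeas hu0 hv0 hfin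
  refine ⟨fun heq τ huinf husup hvinf hvsup => ?_, fun h => (htfae.out 0 2).2 ?_⟩
  · have htranslation := (htfae.out 0 1).1 heq
    exact htranslation τ (not_eventuallyConst_setOf_lt huinf husup)
      (not_eventuallyConst_setOf_lt hvinf hvsup)
  · filter_upwards [
      Measure.ae_ne volume (essInf (fun x => ENNReal.ofReal (periodize u x)) volume).toReal,
      Measure.ae_ne volume (essInf (fun x => ENNReal.ofReal (periodize v x)) volume).toReal]
      with τ huτ hvτ huconst hvconst
    obtain ⟨huinf, husup⟩ := essInf_lt_and_lt_essSup (fun _ => hu0 _) huτ huconst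
    obtain ⟨hvinf, hvsup⟩ := essInf_lt_and_lt_essSup (fun _ => hv0 _) hvτ hvconst
    exact h τ huinf husup hvinf hvsup
end

section
/- Let n ≥ 1 be an integer, 0 < s < 1, 1 ≤ p < ∞, and let u : ℝⁿ → ℝ be a measurable function that is 2π-periodic in the variable x₁ and has finite periodic Gagliardo seminorm [u]^{per}_{W^{s,p}}. Then [u^{*per}]^{per}_{W^{s,p}} ≤ [u]^{per}_{W^{s,p}}. -/
open MeasureTheory Real
open scoped ENNReal

/-- `([u]^{per}_{W^{s,p}})^p`, the `p`-th power of the periodic Gagliardo seminorm on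
`ℝⁿ = ℝ × ℝ^{n−1}` (so `n = m + 1`), for a function which is `2π`-periodic in the first
variable. -/
noncomputable def gagP (m : ℕ) (s p : ℝ) (u : ℝ × EuclideanSpace ℝ (Fin m) → ℝ) : ℝ≥0∞ :=
  ∫⁻ x in {x : ℝ × EuclideanSpace ℝ (Fin m) | x.1 ∈ Set.Ioo (-π) π},
    ∫⁻ y : ℝ × EuclideanSpace ℝ (Fin m),
      ENNReal.ofReal (|u x - u y| ^ p /
        Real.sqrt ((x.1 - y.1) ^ 2 + ‖x.2 - y.2‖ ^ 2) ^ ((m : ℝ) + 1 + s * p))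

/-- The periodic Gagliardo seminorm `[u]^{per}_{W^{s,p}}`. -/
noncomputable def gagSeminorm (m : ℕ) (s p : ℝ) (u : ℝ × EuclideanSpace ℝ (Fin m) → ℝ) :
    ℝ≥0∞ :=
  gagP m s p u ^ (1 / p)
/-- The periodic rearrangement in the first variable:
`u^{*per}(x₁,x') := (|u(·,x')|)^{*per}(x₁)`. -/
noncomputable def perRearr1 (m : ℕ) (u : ℝ × EuclideanSpace ℝ (Fin m) → ℝ) :
    ℝ × EuclideanSpace ℝ (Fin m) → ℝ := fun x =>
  perRearr (fun t => |u (t, x.2)|) x.1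

/-!
Slicing in `x'` and `y'` and summing the kernel over periods turns the seminorm into an average of
energies `∬ |f(x) - g(y)|^p K(x - y) dx dy` on the circle `ℝ / 2πℤ`, so it suffices to rearrange
`f = u(·, x')` and `g = u(·, y')` for each pair of slices.

The periodized kernel `K` is symmetric decreasing: by the Gamma integral it is a positive mixture of
periodized Gaussians, that is of theta functions `θ_t(a)`. For `θ_t` the monotonicity is visible
from the cosine series after Poisson summation when `t ≤ 1`, and the duplication formula
`θ_t(a)² = θ_{2t}(0) θ_{2t}(a) + θ_{2t}(1/2) θ_{2t}(a + 1/2)` carries it from `t` to `2t`.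

Splitting `|s|^p` into its two one-sided parts and applying the layer-cake formula to the cost, to
`f`, `g` and to `K` reduces the claim to Riesz's rearrangement inequality on the circle for the
indicators of two sets `A`, `B` and of an arc. There the overlap `y ↦ |A ∩ (y - r, y + r)|` is
1-Lipschitz and periodic, so its superlevel sets lose length at rate at least `2`, which is exactly
the rate for an arc. This handles every level above a threshold, provided the superlevel set at
the threshold is no longer than `B`; otherwise the same argument applies to the complements.
-/

section PeriodizedGaussian

open HurwitzZeta

theorem hasSum_int_even_add_odd {α : Type*} [AddCommMonoid α] [TopologicalSpace α]
    [ContinuousAdd α] {f : ℤ → α} {a b : α} (he : HasSum (fun k => f (2 * k)) a)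
    (ho : HasSum (fun k => f (2 * k + 1)) b) : HasSum f (a + b) := by
  have hinj : Function.Injective fun k : ℤ => 2 * k := mul_right_injective₀ two_ne_zero
  have ho' := ((add_left_injective 1).comp hinj).hasSum_range_iff.2 ho
  refine (hinj.hasSum_range_iff.2 he).add_isCompl ?_ ho'
  simpa [Function.comp_def] using Int.isCompl_even_odd

theorem evenKernel_coe_add_int (a : ℝ) (k : ℤ) (t : ℝ) :
    evenKernel ((a + k : ℝ) : UnitAddCircle) t = evenKernel (a : UnitAddCircle) t := by
  congr 1
  simp

-- Sum over the difference `d = m - n` first: `(m + a)² + (n + a)² = 2 (m + a - d/2)² + 2 (d/2)²`.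
theorem hasSum_int_evenKernel_sq (a : ℝ) {t : ℝ} (ht : 0 < t) :
    HasSum (fun d : ℤ => rexp (-π * (d / 2) ^ 2 * (2 * t)) *
      evenKernel ((a - d / 2 : ℝ) : UnitAddCircle) (2 * t)) (evenKernel a t ^ 2) := by
  have h := hasSum_int_evenKernel a ht
  have hprod : HasSum
      (fun q : ℤ × ℤ => rexp (-π * (q.1 + a) ^ 2 * t) * rexp (-π * (q.2 + a) ^ 2 * t))
      (evenKernel a t ^ 2) := by
    rw [sq]
    exact h.mul h (h.summable.mul_of_nonneg h.summable (fun _ => by positivity)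
      (fun _ => by positivity))
  let byDifference : ℤ × ℤ ≃ ℤ × ℤ :=
    (Equiv.prodComm ℤ ℤ).trans (Equiv.prodShear (Equiv.refl ℤ) Equiv.subLeft)
  refine (byDifference.hasSum_iff.2 hprod).prod_fiberwise fun d => ?_
  have hd := (hasSum_int_evenKernel (a - d / 2) (t := 2 * t) (by positivity)).mul_left
    (rexp (-π * (d / 2) ^ 2 * (2 * t)))
  refine hd.congr_fun fun m => ?_
  simp only [byDifference, Function.comp_apply, Equiv.trans_apply, Equiv.prodComm_apply,
    Prod.swap_prod_mk, Equiv.prodShear_apply, Equiv.refl_apply, Equiv.subLeft_apply,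
    Int.cast_sub, ← Real.exp_add]
  ring_nf

theorem evenKernel_sq (a : ℝ) {t : ℝ} (ht : 0 < t) :
    evenKernel a t ^ 2 =
      evenKernel ((0 : ℝ) : UnitAddCircle) (2 * t) * evenKernel a (2 * t) +
      evenKernel ((1 / 2 : ℝ) : UnitAddCircle) (2 * t) *
        evenKernel ((a + 1 / 2 : ℝ) : UnitAddCircle) (2 * t) := by
  have h2t : 0 < 2 * t := by positivity
  refine (hasSum_int_evenKernel_sq a ht).unique (hasSum_int_even_add_odd ?_ ?_)
  · refine ((hasSum_int_evenKernel 0 h2t).mul_right _).congr_fun fun k => ?_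
    rw [← evenKernel_coe_add_int a (-k)]
    push_cast
    ring_nf
  · refine ((hasSum_int_evenKernel (1 / 2) h2t).mul_right _).congr_fun fun k => ?_
    rw [← evenKernel_coe_add_int (a + 1 / 2) (-k - 1)]
    push_cast
    ring_nf

theorem abs_sin_nat_mul_le (n : ℕ) (x : ℝ) : |sin (n * x)| ≤ n * |sin x| := by
  induction n with
  | zero => simp
  | succ k ih =>
    rw [Nat.cast_succ, add_mul, one_mul, sin_add]
    calc |sin (k * x) * cos x + cos (k * x) * sin x|
        ≤ |sin (k * x)| * |cos x| + |cos (k * x)| * |sin x| := by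
          simpa only [abs_mul] using abs_add_le (sin (k * x) * cos x) (cos (k * x) * sin x)
      _ ≤ |sin (k * x)| * 1 + 1 * |sin x| := by
          gcongr <;> exact abs_cos_le_one _
      _ ≤ (k + 1) * |sin x| := by linarith

theorem abs_cos_nat_mul_sub_cos_nat_mul_le (n : ℕ) (x y : ℝ) :
    |cos (n * x) - cos (n * y)| ≤ n ^ 2 * |cos x - cos y| := by
  rw [cos_sub_cos, cos_sub_cos, ← mul_add, ← mul_sub, mul_div_assoc, mul_div_assoc]
  simp only [abs_mul, abs_neg]
  calc |2| * |sin (n * ((x + y) / 2))| * |sin (n * ((x - y) / 2))|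
      ≤ |2| * (n * |sin ((x + y) / 2)|) * (n * |sin ((x - y) / 2)|) := by
        gcongr <;> exact abs_sin_nat_mul_le _ _
    _ = n ^ 2 * (|2| * |sin ((x + y) / 2)| * |sin ((x - y) / 2)|) := by ring

theorem succ_sq_le_four_pow (n : ℕ) : (n + 1) ^ 2 ≤ 4 ^ n := by
  calc (n + 1) ^ 2 ≤ (2 ^ n) ^ 2 := by gcongr; exact Nat.lt_two_pow_self
    _ = 4 ^ n := by rw [← pow_mul, mul_comm, pow_mul]; norm_num

theorem exp_neg_pi_mul_sq_le {t : ℝ} (ht : 1 ≤ t) (n : ℕ) :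
    rexp (-π * (n + 1) ^ 2 * t) ≤ rexp (-π * t) * (1 / 8) ^ n := by
  have hq : rexp (-π * t) ≤ 1 / 2 :=
    (exp_le_exp.2 (by nlinarith [pi_gt_three])).trans exp_neg_one_lt_half.le
  calc rexp (-π * (n + 1) ^ 2 * t) = rexp (-π * t) ^ ((n + 1) ^ 2) := by
        rw [← exp_nat_mul]; push_cast; ring_nf
    _ ≤ rexp (-π * t) ^ (1 + 3 * n) :=
        pow_le_pow_of_le_one (exp_pos _).le (by linarith)
          (by nlinarith [Nat.le_self_pow two_ne_zero n])
    _ = rexp (-π * t) * (rexp (-π * t) ^ 3) ^ n := by rw [pow_add, pow_mul, pow_one]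
    _ ≤ rexp (-π * t) * ((1 / 2) ^ 3) ^ n := by gcongr
    _ = rexp (-π * t) * (1 / 8) ^ n := by norm_num

-- For `t ≥ 1` the first mode of the cosine series dominates all the others together.
theorem cosKernel_le_of_cos_le {t : ℝ} (ht : 1 ≤ t) {a b : ℝ}
    (hab : cos (2 * π * a) ≤ cos (2 * π * b)) :
    cosKernel (a : UnitAddCircle) t ≤ cosKernel (b : UnitAddCircle) t := by
  set D := cos (2 * π * b) - cos (2 * π * a) with hD
  have hD0 : 0 ≤ D := sub_nonneg.2 hab
  set q := rexp (-π * t) with hq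
  have ht0 : 0 < t := by linarith
  have hsum := (hasSum_nat_cosKernel₀ b ht0).sub (hasSum_nat_cosKernel₀ a ht0)
  have htail := (hasSum_nat_add_iff' 1).2 hsum
  have hgeom := (hasSum_nat_add_iff' 1).2 (hasSum_geometric_two.mul_left (2 * q * D))
  have hmode : ∀ n : ℕ, |cos (2 * π * b * (n + 1)) - cos (2 * π * a * (n + 1))| ≤ 4 ^ n * D := by
    intro n
    have h := abs_cos_nat_mul_sub_cos_nat_mul_le (n + 1) (2 * π * b) (2 * π * a)
    rw [← hD, abs_of_nonneg hD0, mul_comm _ (2 * π * b), mul_comm _ (2 * π * a)] at h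
    push_cast at h
    exact h.trans (mul_le_mul_of_nonneg_right (mod_cast succ_sq_le_four_pow n) hD0)
  have hterm : ∀ n : ℕ, -(2 * q * D * (1 / 2) ^ n) ≤
      2 * cos (2 * π * b * (n + 1)) * rexp (-π * (n + 1) ^ 2 * t) -
        2 * cos (2 * π * a * (n + 1)) * rexp (-π * (n + 1) ^ 2 * t) := by
    intro n
    calc -(2 * q * D * (1 / 2) ^ n) = -(2 * (4 ^ n * D) * (q * (1 / 8) ^ n)) := by
          rw [show (1 / 2 : ℝ) = 4 * (1 / 8) by norm_num, mul_pow]; ring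
      _ ≤ -(2 * |cos (2 * π * b * (n + 1)) - cos (2 * π * a * (n + 1))| *
            rexp (-π * (n + 1) ^ 2 * t)) := by
          gcongr
          · exact hmode n
          · exact exp_neg_pi_mul_sq_le ht n
      _ ≤ _ := by
          have := mul_le_mul_of_nonneg_right
            (neg_abs_le (cos (2 * π * b * (n + 1)) - cos (2 * π * a * (n + 1))))
            (exp_pos (-π * (n + 1) ^ 2 * t)).le
          linarith
  have hle := hasSum_le (fun n => hterm (n + 1)) hgeom.neg htail
  simp only [Finset.sum_range_one, pow_zero, CharP.cast_eq_zero, zero_add, mul_one, one_pow] at hle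
  rw [← hq] at hle
  linarith

theorem evenKernel_nonneg (a : ℝ) {t : ℝ} (ht : 0 < t) : 0 ≤ evenKernel a t :=
  (hasSum_int_evenKernel a ht).nonneg fun _ => by positivity

theorem evenKernel_half_lt_evenKernel_zero {t : ℝ} (ht : 0 < t) :
    evenKernel ((1 / 2 : ℝ) : UnitAddCircle) t < evenKernel ((0 : ℝ) : UnitAddCircle) t := by
  rw [evenKernel_functional_equation, evenKernel_functional_equation]
  refine mul_lt_mul_of_pos_left (sub_lt_sub_iff_right 1 |>.1 ?_) (by positivity)
  have ht' : 0 < 1 / t := by positivity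
  refine hasSum_lt (i := 0) (fun n => ?_) ?_ (hasSum_nat_cosKernel₀ (1 / 2) ht')
    (hasSum_nat_cosKernel₀ 0 ht')
  · simp only [mul_zero, zero_mul, cos_zero]
    gcongr
    exact cos_le_one _
  · have hcos : cos (2 * π * (1 / 2)) = -1 := by
      rw [mul_one_div, mul_div_cancel_left₀ π two_ne_zero, cos_pi]
    simp only [hcos, CharP.cast_eq_zero, zero_add, mul_one, mul_zero, cos_zero]
    gcongr
    norm_num

theorem evenKernel_le_of_cos_le {a b : ℝ} (hab : cos (2 * π * a) ≤ cos (2 * π * b)) {t : ℝ}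
    (ht : 0 < t) : evenKernel a t ≤ evenKernel b t := by
  obtain ⟨k, hk⟩ := pow_unbounded_of_one_lt t one_lt_two
  replace hk := hk.le
  induction k generalizing a b t with
  | zero =>
    rw [evenKernel_functional_equation, evenKernel_functional_equation]
    gcongr
    exact cosKernel_le_of_cos_le ((one_le_div ht).2 (by simpa using hk)) hab
  | succ k ih =>
    obtain ⟨t, rfl⟩ : ∃ r, t = 2 * r := ⟨t / 2, by ring⟩
    replace ht : 0 < t := by linarith
    replace hk : t ≤ 2 ^ k := by rw [pow_succ] at hk; linarith
    have hab' : cos (2 * π * (b + 1 / 2)) ≤ cos (2 * π * (a + 1 / 2)) := by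
      simp only [mul_add, mul_one_div, mul_div_cancel_left₀ π two_ne_zero, cos_add_pi]
      linarith
    have hsq := pow_le_pow_left₀ (evenKernel_nonneg a ht) (ih hab ht hk) 2
    have hsq' := pow_le_pow_left₀ (evenKernel_nonneg (b + 1 / 2) ht) (ih hab' ht hk) 2
    have hshift (x : ℝ) : evenKernel ((x + 1 / 2 + 1 / 2 : ℝ) : UnitAddCircle) (2 * t) =
        evenKernel x (2 * t) := by
      rw [← evenKernel_coe_add_int x 1]; push_cast; ring_nf
    rw [evenKernel_sq a ht, evenKernel_sq b ht] at hsq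
    rw [evenKernel_sq _ ht, evenKernel_sq _ ht, hshift, hshift] at hsq'
    have hlt := evenKernel_half_lt_evenKernel_zero (t := 2 * t) (by positivity)
    have hhalf := evenKernel_nonneg (1 / 2) (t := 2 * t) (by positivity)
    set c₀ := evenKernel ((0 : ℝ) : UnitAddCircle) (2 * t)
    set c₁ := evenKernel ((1 / 2 : ℝ) : UnitAddCircle) (2 * t)
    -- Eliminates the half-translates from the two duplication formulas.
    have helim : (c₀ ^ 2 - c₁ ^ 2) * evenKernel a (2 * t) ≤
        (c₀ ^ 2 - c₁ ^ 2) * evenKernel b (2 * t) := by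
      have h₀ := mul_le_mul_of_nonneg_left hsq (hhalf.trans hlt.le)
      have h₁ := mul_le_mul_of_nonneg_left hsq' hhalf
      linarith
    exact le_of_mul_le_mul_left helim (by nlinarith)

end PeriodizedGaussian

/-- A kernel `K` on the circle `ℝ / 2πℤ`, written as a function on `ℝ`, is symmetric decreasing:
it is a nondecreasing function of the cosine, hence even, `2π`-periodic and nonincreasing on
`[0, π]`. -/
def CosMonotone {α : Type*} [Preorder α] (K : ℝ → α) : Prop :=
  ∀ ⦃x y⦄, cos x ≤ cos y → K x ≤ K y

section PeriodizedRieszKernel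

open HurwitzZeta in
theorem tsum_ofReal_exp_neg_mul_sq {t : ℝ} (ht : 0 < t) (z : ℝ) :
    ∑' k : ℤ, ENNReal.ofReal (rexp (-(t * (z + 2 * π * k) ^ 2))) =
      ENNReal.ofReal (evenKernel ((z / (2 * π) : ℝ) : UnitAddCircle) (4 * π * t)) := by
  have h := hasSum_int_evenKernel (z / (2 * π)) (t := 4 * π * t) (by positivity)
  rw [← h.tsum_eq, ENNReal.ofReal_tsum_of_nonneg (fun _ => (exp_pos _).le) h.summable]
  congr! 4 with k
  field_simp
  ring

theorem cosMonotone_tsum_ofReal_exp_neg_mul_sq {t : ℝ} (ht : 0 < t) :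
    CosMonotone fun z => ∑' k : ℤ, ENNReal.ofReal (rexp (-(t * (z + 2 * π * k) ^ 2))) := by
  intro x y hxy
  simp only [tsum_ofReal_exp_neg_mul_sq ht]
  refine ENNReal.ofReal_le_ofReal (evenKernel_le_of_cos_le ?_ (by positivity))
  rwa [mul_div_cancel₀ x two_pi_pos.ne', mul_div_cancel₀ y two_pi_pos.ne']

/-- The `2π`-periodization in `z` of `(z² + ρ²)^(-q/2)`, the Gagliardo kernel at transversal
distance `ρ`. The power is taken in `ℝ≥0∞`, so the value is `∞` where the base vanishes. -/
noncomputable def periodizedRieszKernel (q ρ z : ℝ) : ℝ≥0∞ :=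
  ∑' k : ℤ, ENNReal.ofReal ((z + 2 * π * k) ^ 2 + ρ ^ 2) ^ (-(q / 2))

theorem lowerSemicontinuous_periodizedRieszKernel (q ρ : ℝ) :
    LowerSemicontinuous (periodizedRieszKernel q ρ) :=
  lowerSemicontinuous_tsum fun _ => Continuous.lowerSemicontinuous <|
    ENNReal.continuous_rpow_const.comp (ENNReal.continuous_ofReal.comp (by fun_prop))

theorem ofReal_rpow_neg_eq_lintegral {a w : ℝ} (ha : 0 < a) (hw : 0 < w) :
    ENNReal.ofReal w ^ (-a) =
      ∫⁻ t in Set.Ioi 0, ENNReal.ofReal (t ^ (a - 1) / Gamma a) *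
        ENNReal.ofReal (rexp (-(w * t))) := by
  have hint := integral_rpow_mul_exp_neg_mul_Ioi ha hw
  have hintegrable : IntegrableOn (fun t => t ^ (a - 1) * rexp (-(w * t))) (Set.Ioi 0) :=
    .of_integral_ne_zero (hint ▸ by positivity)
  have hmean : w ^ (-a) = ∫ t in Set.Ioi 0, (Gamma a)⁻¹ * (t ^ (a - 1) * rexp (-(w * t))) := by
    rw [integral_const_mul, hint, one_div, inv_rpow hw.le, rpow_neg hw.le]
    field_simp
  rw [ENNReal.ofReal_rpow_of_pos hw, hmean,
    ofReal_integral_eq_lintegral_ofReal (hintegrable.const_mul _)]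
  · refine setLIntegral_congr_fun measurableSet_Ioi fun t (ht : 0 < t) => ?_
    rw [← ENNReal.ofReal_mul (by positivity)]
    ring_nf
  · filter_upwards [ae_restrict_mem measurableSet_Ioi] with t (ht : 0 < t)
    simp only [Pi.zero_apply]
    positivity

theorem periodizedRieszKernel_eq_lintegral {q ρ z : ℝ} (hq : 0 < q)
    (hpos : ∀ k : ℤ, 0 < (z + 2 * π * k) ^ 2 + ρ ^ 2) :
    periodizedRieszKernel q ρ z =
      ∫⁻ t in Set.Ioi 0, ENNReal.ofReal (t ^ (q / 2 - 1) / Gamma (q / 2)) *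
        (ENNReal.ofReal (rexp (-(ρ ^ 2 * t))) *
          ∑' k : ℤ, ENNReal.ofReal (rexp (-(t * (z + 2 * π * k) ^ 2)))) := by
  simp only [periodizedRieszKernel, ← ENNReal.tsum_mul_left]
  rw [lintegral_tsum fun k => by fun_prop]
  refine tsum_congr fun k => ?_
  rw [ofReal_rpow_neg_eq_lintegral (by positivity) (hpos k)]
  refine lintegral_congr fun t => ?_
  rw [← ENNReal.ofReal_mul (exp_pos _).le, ← exp_add]
  ring_nf

theorem periodizedRieszKernel_eq_top {q ρ z : ℝ} (hq : 0 < q) {k : ℤ}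
    (hk : (z + 2 * π * k) ^ 2 + ρ ^ 2 ≤ 0) : periodizedRieszKernel q ρ z = ⊤ := by
  refine ENNReal.tsum_eq_top_of_eq_top ⟨k, ?_⟩
  rw [ENNReal.ofReal_of_nonpos hk, ENNReal.zero_rpow_of_neg (by linarith)]

theorem cosMonotone_periodizedRieszKernel {q : ℝ} (hq : 0 < q) (ρ : ℝ) :
    CosMonotone (periodizedRieszKernel q ρ) := by
  intro x y hxy
  by_cases hy : ∀ k : ℤ, 0 < (y + 2 * π * k) ^ 2 + ρ ^ 2
  swap
  · obtain ⟨k, hk⟩ := not_forall.1 hy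
    simp only [periodizedRieszKernel_eq_top hq (not_lt.1 hk), le_top]
  have hx : ∀ k : ℤ, 0 < (x + 2 * π * k) ^ 2 + ρ ^ 2 := by
    intro k
    by_contra! hk
    have hx0 : x + 2 * π * k = 0 := by nlinarith [sq_nonneg (x + 2 * π * k), sq_nonneg ρ]
    have hρ : ρ = 0 := by nlinarith [sq_nonneg (x + 2 * π * k), sq_nonneg ρ]
    have hcosx : cos x = 1 := (cos_eq_one_iff x).2 ⟨-k, by push_cast; linarith⟩
    obtain ⟨j, hj⟩ := (cos_eq_one_iff y).1 (le_antisymm (cos_le_one y) (hcosx ▸ hxy))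
    have := hy (-j)
    push_cast at this
    simp [hρ, ← hj, mul_comm (2 * π)] at this
  rw [periodizedRieszKernel_eq_lintegral hq hx, periodizedRieszKernel_eq_lintegral hq hy]
  refine setLIntegral_mono' measurableSet_Ioi fun t ht => ?_
  gcongr _ * (_ * ?_)
  exact cosMonotone_tsum_ofReal_exp_neg_mul_sq ht hxy

end PeriodizedRieszKernel

section CircleVolume

theorem setLIntegral_Ioc_eq_of_periodic {T : ℝ} (hT : 0 < T) {h : ℝ → ℝ≥0∞}
    (hper : Function.Periodic h T) (a b : ℝ) :
    ∫⁻ x in Set.Ioc a (a + T), h x = ∫⁻ x in Set.Ioc b (b + T), h x := by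
  refine (isAddFundamentalDomain_Ioc hT a).setLIntegral_eq (isAddFundamentalDomain_Ioc hT b) h ?_
  rintro ⟨_, k, rfl⟩ x
  simpa [AddSubgroup.vadd_def, add_comm] using hper.int_mul k x

/-- Lebesgue measure on the fundamental domain `(-π, π)` of `ℝ / 2πℤ`. Functions and sets on the
circle are represented by their `2π`-periodic lifts to `ℝ`. -/
noncomputable abbrev circleVolume : Measure ℝ := volume.restrict (Set.Ioo (-π) π)

theorem lintegral_circleVolume_of_periodic {h : ℝ → ℝ≥0∞} (hper : Function.Periodic h (2 * π))
    (a : ℝ) : ∫⁻ x, h x ∂circleVolume = ∫⁻ x in Set.Ioc a (a + 2 * π), h x := by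
  rw [setLIntegral_congr Ioo_ae_eq_Ioc, ← setLIntegral_Ioc_eq_of_periodic two_pi_pos hper (-π)]
  ring_nf

theorem lintegral_circleVolume_add_right {h : ℝ → ℝ≥0∞} (hper : Function.Periodic h (2 * π))
    (c : ℝ) : ∫⁻ x, h (x + c) ∂circleVolume = ∫⁻ x, h x ∂circleVolume := by
  have hshift : Function.Periodic (fun x => h (x + c)) (2 * π) := fun x => by
    simpa only [add_right_comm] using hper (x + c)
  have hmp := (measurePreserving_add_right volume c).setLIntegral_comp_preimage_emb
    (MeasurableEquiv.addRight c).measurableEmbedding h (Set.Ioc c (c + 2 * π))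
  rw [lintegral_circleVolume_of_periodic hper c, lintegral_circleVolume_of_periodic hshift 0, ← hmp,
    Set.preimage_add_const_Ioc, sub_self, add_sub_cancel_left, zero_add]

theorem circleVolume_apply_of_periodic {A : Set ℝ} (hA : MeasurableSet A)
    (hper : Function.Periodic (· ∈ A) (2 * π)) (a : ℝ) :
    circleVolume A = volume (A ∩ Set.Ioc a (a + 2 * π)) := by
  have hind : Function.Periodic (A.indicator (1 : ℝ → ℝ≥0∞)) (2 * π) := fun x => by
    classical
    simp only [Set.indicator_apply]
    exact if_congr (hper x).to_iff rfl rfl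
  rw [← lintegral_indicator_one hA, lintegral_circleVolume_of_periodic hind a,
    lintegral_indicator_one hA, Measure.restrict_apply hA]

theorem circleVolume_univ : circleVolume Set.univ = ENNReal.ofReal (2 * π) := by
  rw [Measure.restrict_apply_univ, volume_Ioo]
  ring_nf

end CircleVolume

section Arc

/-- The lift to `ℝ` of the open arc of half-length `r ∈ [0, π]` centred at the origin of
`ℝ / 2πℤ`. -/
def arc (r : ℝ) : Set ℝ := {x | cos r < cos x}

variable {r : ℝ}

theorem measurableSet_arc (r : ℝ) : MeasurableSet (arc r) :=
  measurableSet_lt measurable_const measurable_cos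

theorem periodic_mem_arc (r : ℝ) : Function.Periodic (· ∈ arc r) (2 * π) := fun x => by
  simp only [arc, Set.mem_ofPred_eq, cos_add_two_pi]

theorem mem_arc_iff_abs_lt {x : ℝ} (hr0 : 0 ≤ r) (hrπ : r ≤ π) (hx : |x| ≤ π) :
    x ∈ arc r ↔ |x| < r := by
  rw [arc, Set.mem_ofPred_eq, ← cos_abs x]
  exact strictAntiOn_cos.lt_iff_gt ⟨hr0, hrπ⟩ ⟨abs_nonneg x, hx⟩

theorem arc_inter_Ioo (hr0 : 0 ≤ r) (hrπ : r ≤ π) : arc r ∩ Set.Ioo (-π) π = Set.Ioo (-r) r := by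
  ext x
  simp only [Set.mem_inter_iff, Set.mem_Ioo, ← abs_lt]
  constructor
  · rintro ⟨hx, hxπ⟩
    exact (mem_arc_iff_abs_lt hr0 hrπ hxπ.le).1 hx
  · intro hx
    exact ⟨(mem_arc_iff_abs_lt hr0 hrπ (hx.le.trans hrπ)).2 hx, hx.trans_le hrπ⟩

theorem circleVolume_arc (hr0 : 0 ≤ r) (hrπ : r ≤ π) :
    circleVolume (arc r) = ENNReal.ofReal (2 * r) := by
  rw [Measure.restrict_apply (measurableSet_arc r), arc_inter_Ioo hr0 hrπ, volume_Ioo]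
  ring_nf

end Arc

section ArcOverlap

/-- The length of the part of `A` that lies within distance `r` of `y`. For `A` a `2π`-periodic set
and `r ≤ π` this is the convolution of the indicators of `A` and `arc r` on the circle. -/
noncomputable def arcOverlap (A : Set ℝ) (r y : ℝ) : ℝ :=
  volume.real (A ∩ Set.Ioo (y - r) (y + r))

variable {A : Set ℝ} {r : ℝ}

theorem arcOverlap_nonneg (A : Set ℝ) (r y : ℝ) : 0 ≤ arcOverlap A r y :=
  measureReal_nonneg

theorem measure_inter_Ioo_ne_top (A : Set ℝ) (a b : ℝ) : volume (A ∩ Set.Ioo a b) ≠ ⊤ :=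
  ((measure_mono Set.inter_subset_right).trans_lt measure_Ioo_lt_top).ne

theorem arcOverlap_le_two_mul (A : Set ℝ) (hr : 0 ≤ r) (y : ℝ) : arcOverlap A r y ≤ 2 * r := by
  calc arcOverlap A r y ≤ volume.real (Set.Ioo (y - r) (y + r)) :=
        measureReal_mono Set.inter_subset_right measure_Ioo_lt_top.ne
    _ = 2 * r := by rw [volume_real_Ioo_of_le (by linarith)]; ring

theorem arcOverlap_compl (hA : MeasurableSet A) (hr : 0 ≤ r) (y : ℝ) :
    arcOverlap Aᶜ r y = 2 * r - arcOverlap A r y := by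
  have h := measureReal_inter_add_sdiff (μ := volume) (s := Set.Ioo (y - r) (y + r)) hA
    measure_Ioo_lt_top.ne
  rw [Set.inter_comm, Set.sdiff_eq, Set.inter_comm _ Aᶜ, volume_real_Ioo_of_le (by linarith)] at h
  unfold arcOverlap
  linarith

theorem lipschitzWith_arcOverlap (A : Set ℝ) (r : ℝ) : LipschitzWith 1 (arcOverlap A r) := by
  refine LipschitzWith.of_le_add fun x y => ?_
  obtain ⟨a, b, hab, hcover⟩ : ∃ a b, volume.real (Set.Icc a b) ≤ dist x y ∧
      Set.Ioo (x - r) (x + r) ⊆ Set.Ioo (y - r) (y + r) ∪ Set.Icc a b := by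
    rcases le_total x y with h | h
    · refine ⟨x - r, y - r, ?_, fun z hz => ?_⟩
      · rw [volume_real_Icc_of_le (by linarith), dist_comm, dist_eq, abs_of_nonneg] <;> linarith
      · by_cases hzy : z ≤ y - r
        · exact .inr ⟨hz.1.le, hzy⟩
        · exact .inl ⟨not_le.1 hzy, by linarith [hz.2]⟩
    · refine ⟨y + r, x + r, ?_, fun z hz => ?_⟩
      · rw [volume_real_Icc_of_le (by linarith), dist_eq, abs_of_nonneg] <;> linarith
      · by_cases hzy : y + r ≤ z
        · exact .inr ⟨hzy, hz.2.le⟩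
        · exact .inl ⟨by linarith [hz.1], not_le.1 hzy⟩
  calc arcOverlap A r x ≤ volume.real (A ∩ Set.Ioo (y - r) (y + r) ∪ Set.Icc a b) := by
        refine measureReal_mono (fun z hz => ?_)
          (measure_union_ne_top (measure_inter_Ioo_ne_top A _ _) measure_Icc_lt_top.ne)
        exact (hcover hz.2).imp_left fun hz' => ⟨hz.1, hz'⟩
    _ ≤ arcOverlap A r y + volume.real (Set.Icc a b) := measureReal_union_le _ _
    _ ≤ arcOverlap A r y + dist x y := by gcongr

theorem periodic_arcOverlap (hper : Function.Periodic (· ∈ A) (2 * π)) (r : ℝ) :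
    Function.Periodic (arcOverlap A r) (2 * π) := by
  intro y
  have hpre : (· + 2 * π) ⁻¹' (A ∩ Set.Ioo (y + 2 * π - r) (y + 2 * π + r)) =
      A ∩ Set.Ioo (y - r) (y + r) := by
    rw [Set.preimage_inter, Set.preimage_add_const_Ioo, show (· + 2 * π) ⁻¹' A = A from funext hper]
    congr 2 <;> ring
  rw [arcOverlap, arcOverlap, ← hpre, measureReal_def, measureReal_def, measure_preimage_add_right]

theorem Ioc_inter_sub_mem_arc (hr0 : 0 ≤ r) (hrπ : r ≤ π) (y : ℝ) :
    {x | y - x ∈ arc r} ∩ Set.Ioc (y - π) (y - π + 2 * π) = Set.Ioo (y - r) (y + r) := by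
  ext x
  have hiff (hx : |y - x| ≤ π) : y - x ∈ arc r ↔ x ∈ Set.Ioo (y - r) (y + r) := by
    rw [mem_arc_iff_abs_lt hr0 hrπ hx, abs_sub_comm, abs_sub_lt_iff, Set.mem_Ioo]
    constructor <;> rintro ⟨h, h'⟩ <;> constructor <;> linarith
  constructor
  · rintro ⟨hx, hxy⟩
    exact (hiff (abs_le.2 ⟨by linarith [hxy.2], by linarith [hxy.1]⟩)).1 hx
  · intro hx
    have hxy : |y - x| ≤ π := abs_le.2 ⟨by linarith [hx.2], by linarith [hx.1]⟩
    exact ⟨(hiff hxy).2 hx, by linarith [hx.1], by linarith [hx.2]⟩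

theorem circleVolume_inter_sub_mem_arc (hA : MeasurableSet A)
    (hper : Function.Periodic (· ∈ A) (2 * π)) (hr0 : 0 ≤ r) (hrπ : r ≤ π) (y : ℝ) :
    circleVolume (A ∩ {x | y - x ∈ arc r}) = ENNReal.ofReal (arcOverlap A r y) := by
  have hmeas : MeasurableSet {x | y - x ∈ arc r} :=
    (measurable_const.sub measurable_id) (measurableSet_arc r)
  have hper' : Function.Periodic (· ∈ A ∩ {x | y - x ∈ arc r}) (2 * π) := fun x => by
    have := (periodic_mem_arc r).sub_eq (y - x)
    simp only [Set.mem_inter_iff, Set.mem_ofPred_eq, ← sub_sub, hper x, this]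
  rw [circleVolume_apply_of_periodic (hA.inter hmeas) hper' (y - π), Set.inter_assoc,
    Ioc_inter_sub_mem_arc hr0 hrπ, arcOverlap, ofReal_measureReal (measure_inter_Ioo_ne_top _ _ _)]

theorem le_arcOverlap_arc {α : ℝ} (hα0 : 0 ≤ α) (hαπ : α ≤ π) (r y : ℝ) :
    min (min (2 * α) (2 * r)) (α + r - |y|) ≤ arcOverlap (arc α) r y := by
  calc min (min (2 * α) (2 * r)) (α + r - |y|)
      ≤ min α (y + r) - max (-α) (y - r) := by
        rcases abs_cases y with ⟨h, _⟩ | ⟨h, _⟩ <;> rw [h] <;> grind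
    _ ≤ volume.real (Set.Ioo (max (-α) (y - r)) (min α (y + r))) := by
        rw [volume_real_Ioo]
        exact le_max_left _ _
    _ ≤ arcOverlap (arc α) r y := by
        rw [← Set.Ioo_inter_Ioo, ← arc_inter_Ioo hα0 hαπ]
        exact measureReal_mono (Set.inter_subset_inter_left _ Set.inter_subset_left)
          (measure_inter_Ioo_ne_top _ _ _)

end ArcOverlap

section Coarea

-- The function leaves the level `t + τ` downwards just before the first point `v` with `f v ≤ t`,
-- and comes back up just after the last such point `w`, at unit speed at most.
theorem exists_Ioo_band_of_lipschitzWith_one {f : ℝ → ℝ} (hf : LipschitzWith 1 f) {T : ℝ}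
    (hT : 0 < T) (hper : Function.Periodic f T) {t τ x₀ x₁ : ℝ} (h₀ : f x₀ ≤ t)
    (h₁ : t + τ < f x₁) :
    ∃ v w, x₁ < v - τ ∧ v ≤ w ∧ w + τ < x₁ + T ∧
      ∀ y ∈ Set.Ioo (v - τ) v ∪ Set.Ioo w (w + τ), t < f y ∧ f y ≤ t + τ := by
  have hlip (x y : ℝ) : f x ≤ f y + |x - y| := by
    simpa [dist_eq] using (hf.le_add_mul x y)
  set L : Set ℝ := {y ∈ Set.Icc x₁ (x₁ + T) | f y ≤ t}
  have hL : IsCompact L :=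
    isCompact_Icc.inter_right (isClosed_le hf.continuous continuous_const)
  have hLne : L.Nonempty := by
    obtain ⟨y, hy, hfy⟩ := hper.exists_mem_Ico hT x₀ x₁
    exact ⟨y, Set.Ico_subset_Icc_self hy, hfy ▸ h₀⟩
  obtain ⟨v, ⟨hv, hfv⟩, hvmin⟩ := hL.exists_isLeast hLne
  obtain ⟨w, ⟨hw, hfw⟩, hwmax⟩ := hL.exists_isGreatest hLne
  have hv₁ : x₁ < v - τ := by
    have := hlip x₁ v
    rw [abs_of_nonpos (by linarith [hv.1])] at this
    linarith
  have hw₁ : w + τ < x₁ + T := by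
    have := hlip (x₁ + T) w
    rw [hper, abs_of_nonneg (by linarith [hw.2])] at this
    linarith
  refine ⟨v, w, hv₁, hvmin ⟨hw, hfw⟩, hw₁, ?_⟩
  rintro y (⟨hy₁, hy₂⟩ | ⟨hy₁, hy₂⟩)
  · refine ⟨not_le.1 fun hy => hy₂.not_ge (hvmin ⟨⟨by linarith, by linarith [hv.2]⟩, hy⟩), ?_⟩
    have := hlip y v
    rw [abs_of_neg (by linarith)] at this
    linarith
  · refine ⟨not_le.1 fun hy => hy₁.not_ge (hwmax ⟨⟨by linarith [hw.1], by linarith⟩, hy⟩), ?_⟩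
    have := hlip y w
    rw [abs_of_pos (by linarith)] at this
    linarith

theorem volume_superlevel_add_le_of_lipschitzWith_one {f : ℝ → ℝ} (hf : LipschitzWith 1 f) {T : ℝ}
    (hT : 0 < T) (hper : Function.Periodic f T) {t τ : ℝ} (hτ : 0 ≤ τ) {x₀ x₁ : ℝ}
    (h₀ : f x₀ ≤ t) (h₁ : t + τ < f x₁) :
    volume ({y | t + τ < f y} ∩ Set.Ioc x₁ (x₁ + T)) + ENNReal.ofReal (2 * τ) ≤
      volume ({y | t < f y} ∩ Set.Ioc x₁ (x₁ + T)) := by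
  obtain ⟨v, w, hv, hvw, hw, hband⟩ := exists_Ioo_band_of_lipschitzWith_one hf hT hper h₀ h₁
  set band := Set.Ioo (v - τ) v ∪ Set.Ioo w (w + τ)
  have hband_subset : band ⊆ Set.Ioc x₁ (x₁ + T) := by
    rintro y (⟨hy₁, hy₂⟩ | ⟨hy₁, hy₂⟩) <;> constructor <;> linarith
  have hdisj : Disjoint ({y | t + τ < f y} ∩ Set.Ioc x₁ (x₁ + T)) band :=
    Set.disjoint_left.2 fun y hy hyband => hy.1.not_ge (hband y hyband).2
  have hlen : volume band = ENNReal.ofReal (2 * τ) := by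
    rw [measure_union ?_ measurableSet_Ioo, volume_Ioo, volume_Ioo,
      ← ENNReal.ofReal_add (by linarith) (by linarith)]
    · ring_nf
    · exact Set.disjoint_left.2 fun y hy hy' => by linarith [hy.2, hy'.1]
  rw [← hlen, ← measure_union hdisj (measurableSet_Ioo.union measurableSet_Ioo)]
  refine measure_mono (Set.union_subset ?_ fun y hy => ⟨(hband y hy).1, hband_subset hy⟩)
  exact Set.inter_subset_inter_left _ fun y (hy : t + τ < f y) => (by linarith : t < f y)

end Coarea

section CircleSet

/-- `A` is the lift to `ℝ` of a measurable subset of the circle `ℝ / 2πℤ` of length `2 * α`, so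
that its rearrangement is `arc α`. -/
structure IsCircleSet (A : Set ℝ) (α : ℝ) : Prop where
  measurableSet : MeasurableSet A
  periodic : Function.Periodic (· ∈ A) (2 * π)
  nonneg : 0 ≤ α
  circleVolume_eq : circleVolume A = ENNReal.ofReal (2 * α)

variable {A B : Set ℝ} {α β r t : ℝ}

theorem IsCircleSet.le_pi (hA : IsCircleSet A α) : α ≤ π := by
  have h : circleVolume A ≤ circleVolume Set.univ := measure_mono (Set.subset_univ A)
  rw [hA.circleVolume_eq, circleVolume_univ, ENNReal.ofReal_le_ofReal_iff (by positivity)] at h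
  linarith

theorem isCircleSet_arc (hα0 : 0 ≤ α) (hαπ : α ≤ π) : IsCircleSet (arc α) α :=
  ⟨measurableSet_arc α, periodic_mem_arc α, hα0, circleVolume_arc hα0 hαπ⟩

theorem IsCircleSet.compl (hA : IsCircleSet A α) : IsCircleSet Aᶜ (π - α) where
  measurableSet := hA.measurableSet.compl
  periodic x := by simp only [Set.mem_compl_iff, hA.periodic x]
  nonneg := sub_nonneg.2 hA.le_pi
  circleVolume_eq := by
    rw [measure_compl hA.measurableSet (measure_ne_top _ _), hA.circleVolume_eq, circleVolume_univ,
      ← ENNReal.ofReal_sub _ (by linarith [hA.nonneg])]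
    ring_nf

theorem isCircleSet_circleVolume_div_two (hA : MeasurableSet A)
    (hper : Function.Periodic (· ∈ A) (2 * π)) : IsCircleSet A (circleVolume.real A / 2) where
  measurableSet := hA
  periodic := hper
  nonneg := by positivity
  circleVolume_eq := by
    rw [mul_div_cancel₀ _ two_ne_zero, ofReal_measureReal]

theorem IsCircleSet.arcOverlap_le (hA : IsCircleSet A α) (hr0 : 0 ≤ r) (hrπ : r ≤ π) (y : ℝ) :
    arcOverlap A r y ≤ 2 * α := by
  have hα := hA.nonneg
  rw [← ENNReal.ofReal_le_ofReal_iff (by positivity), ← hA.circleVolume_eq,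
    ← circleVolume_inter_sub_mem_arc hA.measurableSet hA.periodic hr0 hrπ]
  exact measure_mono Set.inter_subset_left

theorem le_circleVolume_superlevel_arcOverlap_arc (hα0 : 0 ≤ α) (hαπ : α ≤ π)
    (hβ0 : 0 ≤ β) (hβπ : β ≤ π) {τ : ℝ} (hτα : τ < 2 * α) (hτr : τ < 2 * r) :
    ENNReal.ofReal (2 * min β (α + r - τ)) ≤
      circleVolume ({y | τ < arcOverlap (arc α) r y} ∩ arc β) := by
  set c := min β (α + r - τ)
  have hc0 : 0 ≤ c := le_min hβ0 (by linarith)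
  have hcβ : c ≤ β := min_le_left _ _
  rw [← circleVolume_arc hc0 (hcβ.trans hβπ)]
  refine measure_mono_ae ((ae_restrict_mem measurableSet_Ioo).mono fun y hy hyc => ?_)
  have hyπ : |y| ≤ π := (abs_lt.2 hy).le
  have hyc' : |y| < c := (mem_arc_iff_abs_lt hc0 (hcβ.trans hβπ) hyπ).1 hyc
  refine ⟨?_, (mem_arc_iff_abs_lt hβ0 hβπ hyπ).2 (hyc'.trans_le hcβ)⟩
  refine lt_of_lt_of_le (lt_min (lt_min hτα hτr) ?_) (le_arcOverlap_arc hα0 hαπ r y)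
  linarith [min_le_right β (α + r - τ)]

theorem IsCircleSet.circleVolume_superlevel_arcOverlap_le (hA : IsCircleSet A α)
    (hB : IsCircleSet B β) (hr0 : 0 ≤ r) (hrπ : r ≤ π)
    (hmin : ∃ y, arcOverlap A r y ≤ α + r - β)
    (hlevel : circleVolume {y | α + r - β < arcOverlap A r y} ≤ ENNReal.ofReal (2 * β)) (τ : ℝ) :
    circleVolume ({y | τ < arcOverlap A r y} ∩ B) ≤
      circleVolume ({y | τ < arcOverlap (arc α) r y} ∩ arc β) := by
  have hmeas (t : ℝ) : MeasurableSet {y | t < arcOverlap A r y} :=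
    measurableSet_lt measurable_const (lipschitzWith_arcOverlap A r).continuous.measurable
  have hper := periodic_arcOverlap hA.periodic r
  have hlevelper (t : ℝ) : Function.Periodic (· ∈ {y | t < arcOverlap A r y}) (2 * π) := fun y => by
    simp only [Set.mem_ofPred_eq, hper y]
  rcases Set.eq_empty_or_nonempty {y | τ < arcOverlap A r y} with hempty | ⟨x₁, hx₁⟩
  · simp [hempty]
  refine le_trans ?_ (le_circleVolume_superlevel_arcOverlap_arc hA.nonneg hA.le_pi hB.nonneg
    hB.le_pi (hx₁.trans_le (hA.arcOverlap_le hr0 hrπ x₁))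
    (hx₁.trans_le (arcOverlap_le_two_mul A hr0 x₁)))
  rcases le_total τ (α + r - β) with hτ | hτ
  · rw [min_eq_left (by linarith), ← hB.circleVolume_eq]
    exact measure_mono Set.inter_subset_right
  · obtain ⟨x₀, hx₀⟩ := hmin
    have hcoarea := volume_superlevel_add_le_of_lipschitzWith_one (lipschitzWith_arcOverlap A r)
      two_pi_pos hper (sub_nonneg.2 hτ) hx₀ (by rwa [add_sub_cancel])
    rw [add_sub_cancel, ← circleVolume_apply_of_periodic (hmeas _) (hlevelper _),
      ← circleVolume_apply_of_periodic (hmeas _) (hlevelper _)] at hcoarea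
    calc circleVolume ({y | τ < arcOverlap A r y} ∩ B)
        ≤ circleVolume {y | τ < arcOverlap A r y} := measure_mono Set.inter_subset_left
      _ ≤ ENNReal.ofReal (2 * β) - ENNReal.ofReal (2 * (τ - (α + r - β))) :=
          ENNReal.le_sub_of_add_le_right ENNReal.ofReal_ne_top (hcoarea.trans hlevel)
      _ = ENNReal.ofReal (2 * min β (α + r - τ)) := by
          rw [← ENNReal.ofReal_sub _ (by linarith), min_eq_right (by linarith)]
          ring_nf

theorem IsCircleSet.setLIntegral_arcOverlap_le (hA : IsCircleSet A α)
    (hB : IsCircleSet B β) (hr0 : 0 ≤ r) (hrπ : r ≤ π)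
    (hmin : ∃ y, arcOverlap A r y ≤ α + r - β)
    (hlevel : circleVolume {y | α + r - β < arcOverlap A r y} ≤ ENNReal.ofReal (2 * β)) :
    ∫⁻ y in B, ENNReal.ofReal (arcOverlap A r y) ∂circleVolume ≤
      ∫⁻ y in arc β, ENNReal.ofReal (arcOverlap (arc α) r y) ∂circleVolume := by
  have hmeas (S : Set ℝ) : Measurable (arcOverlap S r) :=
    (lipschitzWith_arcOverlap S r).continuous.measurable
  rw [lintegral_eq_lintegral_meas_lt _ (ae_of_all _ (arcOverlap_nonneg _ _)) (hmeas _).aemeasurable,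
    lintegral_eq_lintegral_meas_lt _ (ae_of_all _ (arcOverlap_nonneg _ _)) (hmeas _).aemeasurable]
  refine lintegral_mono fun τ => ?_
  rw [Measure.restrict_apply (measurableSet_lt measurable_const (hmeas _)),
    Measure.restrict_apply (measurableSet_lt measurable_const (hmeas _))]
  exact hA.circleVolume_superlevel_arcOverlap_le hB hr0 hrπ hmin hlevel τ

-- The hypotheses of `IsCircleSet.setLIntegral_arcOverlap_le` hold for `(A, B)` or `(Aᶜ, Bᶜ)`,
-- since complementation reflects both the overlap and the threshold in `r`.
theorem IsCircleSet.compl_exists_arcOverlap_le_and_superlevel_le (hA : IsCircleSet A α)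
    (hB : IsCircleSet B β) (hr0 : 0 ≤ r)
    (h : ¬((∃ y, arcOverlap A r y ≤ α + r - β) ∧
      circleVolume {y | α + r - β < arcOverlap A r y} ≤ ENNReal.ofReal (2 * β))) :
    (∃ y, arcOverlap Aᶜ r y ≤ (π - α) + r - (π - β)) ∧
      circleVolume {y | (π - α) + r - (π - β) < arcOverlap Aᶜ r y} ≤
        ENNReal.ofReal (2 * (π - β)) := by
  have hmeas : Measurable (arcOverlap A r) := (lipschitzWith_arcOverlap A r).continuous.measurable
  have hcompl (y : ℝ) : (π - α) + r - (π - β) < arcOverlap Aᶜ r y ↔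
      arcOverlap A r y < α + r - β := by
    rw [arcOverlap_compl hA.measurableSet hr0]
    constructor <;> intro h <;> linarith
  have hle (y : ℝ) (hy : α + r - β < arcOverlap A r y) :
      arcOverlap Aᶜ r y ≤ (π - α) + r - (π - β) :=
    not_lt.1 fun h => ((hcompl y).1 h).not_gt hy
  simp only [hcompl]
  rcases not_and_or.1 h with hmin | hlevel
  · push Not at hmin
    refine ⟨⟨0, hle 0 (hmin 0)⟩, ?_⟩
    have hempty : {y | arcOverlap A r y < α + r - β} = ∅ :=
      Set.eq_empty_of_forall_notMem fun y hy => (hmin y).not_gt hy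
    rw [hempty, measure_empty]
    exact zero_le
  · push Not at hlevel
    obtain ⟨y, hy⟩ := nonempty_of_measure_ne_zero (bot_lt_of_lt hlevel).ne'
    refine ⟨⟨y, hle y hy⟩, ?_⟩
    rw [← hB.compl.circleVolume_eq, measure_compl hB.measurableSet (measure_ne_top _ _)]
    rw [← hB.circleVolume_eq] at hlevel
    calc circleVolume {y | arcOverlap A r y < α + r - β}
        ≤ circleVolume {y | α + r - β < arcOverlap A r y}ᶜ :=
          measure_mono fun y (hy : arcOverlap A r y < α + r - β) => hy.not_gt
      _ = circleVolume Set.univ - circleVolume {y | α + r - β < arcOverlap A r y} :=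
          measure_compl (measurableSet_lt measurable_const hmeas) (measure_ne_top _ _)
      _ ≤ circleVolume Set.univ - circleVolume B := tsub_le_tsub_left hlevel.le _

end CircleSet

section CosMonotone

variable {α : Type*} {K : ℝ → α} {x y : ℝ}

theorem CosMonotone.eq_of_cos_eq [PartialOrder α] (hK : CosMonotone K) (h : cos x = cos y) :
    K x = K y :=
  le_antisymm (hK h.le) (hK h.ge)

theorem CosMonotone.periodic [PartialOrder α] (hK : CosMonotone K) : Function.Periodic K (2 * π) :=
  fun x => hK.eq_of_cos_eq (cos_add_two_pi x)

theorem CosMonotone.sub_comm [PartialOrder α] (hK : CosMonotone K) (x y : ℝ) :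
    K (x - y) = K (y - x) :=
  hK.eq_of_cos_eq (by rw [← neg_sub, cos_neg])

theorem cosMonotone_indicator_arc (r : ℝ) :
    CosMonotone ((arc r).indicator (1 : ℝ → ℝ≥0∞)) := by
  intro x y hxy
  by_cases hx : x ∈ arc r
  · have hy : y ∈ arc r := lt_of_lt_of_le (show cos r < cos x from hx) hxy
    rw [Set.indicator_of_mem hx, Set.indicator_of_mem hy, Pi.one_apply, Pi.one_apply]
  · rw [Set.indicator_of_notMem hx]
    exact zero_le

theorem CosMonotone.superlevel_eq_univ_or_arc [LinearOrder α] (hK : CosMonotone K)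
    (hlsc : LowerSemicontinuous K) (c : α) :
    {x | c < K x} = Set.univ ∨ ∃ r ∈ Set.Icc 0 π, {x | c < K x} = arc r := by
  refine or_iff_not_imp_left.2 fun hne => ?_
  obtain ⟨z, hz⟩ := (Set.ne_univ_iff_exists_notMem _).1 hne
  have hfold (x : ℝ) (hx : K x ≤ c) : arccos (cos x) ∈ Set.Icc 0 π ∩ {x | K x ≤ c} :=
    ⟨⟨arccos_nonneg _, arccos_le_pi _⟩,
      (hK (cos_arccos (neg_one_le_cos x) (cos_le_one x)).le).trans hx⟩
  obtain ⟨r, ⟨hr, hrc⟩, hrmin⟩ :=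
    (isCompact_Icc.inter_right (hlsc.isClosed_preimage c)).exists_isLeast ⟨_, hfold z (not_lt.1 hz)⟩
  refine ⟨r, hr, Set.ext fun x => ⟨fun hx => ?_, fun hx => ?_⟩⟩
  · exact lt_of_not_ge fun hxr => ((hK hxr).trans hrc).not_gt hx
  · refine lt_of_not_ge fun hxc => (show cos r < cos x from hx).not_ge ?_
    rw [← cos_arccos (neg_one_le_cos x) (cos_le_one x)]
    exact cos_le_cos_of_nonneg_of_le_pi hr.1 (arccos_le_pi _) (hrmin (hfold x hxc))

end CosMonotone

section CirclePairing

/-- The interaction `∬ 1_A(x) 1_B(y) K(x - y) dx dy` of two subsets of the circle through the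
kernel `K`. -/
noncomputable def circlePairing (K : ℝ → ℝ≥0∞) (A B : Set ℝ) : ℝ≥0∞ :=
  ∫⁻ x in A, ∫⁻ y in B, K (x - y) ∂circleVolume ∂circleVolume

variable {K : ℝ → ℝ≥0∞} {A B : Set ℝ} {α β r : ℝ}

theorem setLIntegral_circleVolume_preimage_add (hA : MeasurableSet A)
    (hper : Function.Periodic (· ∈ A) (2 * π)) {h : ℝ → ℝ≥0∞} (hh : Function.Periodic h (2 * π))
    (c : ℝ) : ∫⁻ x in (· + c) ⁻¹' A, h (x + c) ∂circleVolume = ∫⁻ x in A, h x ∂circleVolume := by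
  have hind : Function.Periodic (A.indicator h) (2 * π) := fun x => by
    classical
    simp only [Set.indicator_apply]
    exact if_congr (hper x).to_iff (hh x) rfl
  rw [← lintegral_indicator hA, ← lintegral_circleVolume_add_right hind c,
    ← lintegral_indicator (measurable_add_const c hA)]
  rfl

theorem circlePairing_preimage_add (hK : Function.Periodic K (2 * π)) (hA : MeasurableSet A)
    (hAper : Function.Periodic (· ∈ A) (2 * π)) (hB : MeasurableSet B)
    (hBper : Function.Periodic (· ∈ B) (2 * π)) (c : ℝ) :
    circlePairing K ((· + c) ⁻¹' A) ((· + c) ⁻¹' B) = circlePairing K A B := by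
  have hinner (x : ℝ) : ∫⁻ y in (· + c) ⁻¹' B, K (x - y) ∂circleVolume =
      ∫⁻ y in B, K (x + c - y) ∂circleVolume := by
    rw [← setLIntegral_circleVolume_preimage_add hB hBper (fun y => ?_) c]
    · simp only [add_sub_add_right_eq_sub]
    · rw [← sub_sub, hK.sub_eq]
  simp only [circlePairing, hinner]
  refine setLIntegral_circleVolume_preimage_add (h := fun x => ∫⁻ y in B, K (x - y) ∂circleVolume)
    hA hAper (fun x => ?_) c
  simp only [add_sub_right_comm, hK _]

theorem circlePairing_mono {A' B' : Set ℝ} (hA : A ⊆ A') (hB : B ⊆ B') :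
    circlePairing K A B ≤ circlePairing K A' B' :=
  lintegral_mono' (Measure.restrict_mono hA le_rfl) fun _ => lintegral_mono_set hB

theorem circlePairing_univ_right (hK : CosMonotone K) (A : Set ℝ) :
    circlePairing K A Set.univ = (∫⁻ x, K x ∂circleVolume) * circleVolume A := by
  have hinner (x : ℝ) : ∫⁻ y, K (x - y) ∂circleVolume = ∫⁻ y, K y ∂circleVolume := by
    simp only [hK.sub_comm x]
    exact lintegral_circleVolume_add_right hK.periodic (-x)
  simp only [circlePairing, setLIntegral_univ, hinner, setLIntegral_const]

theorem circlePairing_comm (hK : CosMonotone K) (hmeas : Measurable K) (A B : Set ℝ) :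
    circlePairing K A B = circlePairing K B A := by
  have hsub : Measurable fun z : ℝ × ℝ => K (z.1 - z.2) := hmeas.comp measurable_sub
  rw [circlePairing, lintegral_lintegral_swap hsub.aemeasurable]
  simp only [circlePairing, hK.sub_comm]

theorem circlePairing_add_compl_right (hmeas : Measurable K) (A : Set ℝ) (hB : MeasurableSet B) :
    circlePairing K A B + circlePairing K A Bᶜ = circlePairing K A Set.univ := by
  have hsub : Measurable fun z : ℝ × ℝ => K (z.1 - z.2) := hmeas.comp measurable_sub
  rw [circlePairing, circlePairing, circlePairing, ← lintegral_add_left hsub.lintegral_prod_right']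
  simp only [lintegral_add_compl _ hB, setLIntegral_univ]

-- Both sides equal `circlePairing K A B + circlePairing K Aᶜ B + circlePairing K Aᶜ Bᶜ`.
theorem circlePairing_add_univ_eq (hK : CosMonotone K) (hmeas : Measurable K)
    (hA : MeasurableSet A) (hB : MeasurableSet B) :
    circlePairing K A B + circlePairing K Aᶜ Set.univ =
      circlePairing K B Set.univ + circlePairing K Aᶜ Bᶜ := by
  rw [← circlePairing_add_compl_right hmeas Aᶜ hB, ← circlePairing_add_compl_right hmeas B hA,
    circlePairing_comm hK hmeas B A, circlePairing_comm hK hmeas B Aᶜ, add_assoc]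

theorem circlePairing_arc_pi_sub_le (hK : CosMonotone K) (α β : ℝ) :
    circlePairing K (arc (π - α)) (arc (π - β)) ≤ circlePairing K (arc α)ᶜ (arc β)ᶜ := by
  have hsub (γ : ℝ) : arc (π - γ) ⊆ (· + π) ⁻¹' (arc γ)ᶜ := fun x hx => by
    simp only [arc, Set.mem_ofPred_eq, cos_pi_sub] at hx
    simp only [arc, Set.mem_preimage, Set.mem_compl_iff, Set.mem_ofPred_eq, cos_add_pi, not_lt]
    linarith
  have hper (γ : ℝ) : Function.Periodic (· ∈ (arc γ)ᶜ) (2 * π) := fun x => by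
    simp only [Set.mem_compl_iff, periodic_mem_arc γ x]
  calc circlePairing K (arc (π - α)) (arc (π - β))
      ≤ circlePairing K ((· + π) ⁻¹' (arc α)ᶜ) ((· + π) ⁻¹' (arc β)ᶜ) :=
        circlePairing_mono (hsub α) (hsub β)
    _ = circlePairing K (arc α)ᶜ (arc β)ᶜ :=
        circlePairing_preimage_add hK.periodic (measurableSet_arc α).compl (hper α)
          (measurableSet_arc β).compl (hper β) π

theorem measurable_indicator_arc (r : ℝ) : Measurable ((arc r).indicator (1 : ℝ → ℝ≥0∞)) :=
  measurable_one.indicator (measurableSet_arc r)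

theorem IsCircleSet.circlePairing_indicator_arc (hB : IsCircleSet B β) (A : Set ℝ) (hr0 : 0 ≤ r)
    (hrπ : r ≤ π) : circlePairing ((arc r).indicator 1) A B =
      ∫⁻ x in A, ENNReal.ofReal (arcOverlap B r x) ∂circleVolume := by
  have hmeas (x : ℝ) : MeasurableSet {y | x - y ∈ arc r} :=
    (measurable_const.sub measurable_id) (measurableSet_arc r)
  refine lintegral_congr fun x => ?_
  rw [← circleVolume_inter_sub_mem_arc hB.measurableSet hB.periodic hr0 hrπ, Set.inter_comm,
    ← Measure.restrict_apply (hmeas x), ← lintegral_indicator_one (hmeas x)]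
  rfl

theorem circlePairing_indicator_arc_ne_top (r : ℝ) (A B : Set ℝ) :
    circlePairing ((arc r).indicator 1) A B ≠ ⊤ := by
  refine ((circlePairing_mono (Set.Subset.refl A) (Set.subset_univ B)).trans_lt ?_).ne
  rw [circlePairing_univ_right (cosMonotone_indicator_arc r),
    lintegral_indicator_one (measurableSet_arc r)]
  exact ENNReal.mul_lt_top (measure_lt_top _ _) (measure_lt_top _ _)

theorem IsCircleSet.circlePairing_indicator_arc_le (hA : IsCircleSet A α) (hB : IsCircleSet B β)
    (hr0 : 0 ≤ r) (hrπ : r ≤ π) :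
    circlePairing ((arc r).indicator 1) A B ≤
      circlePairing ((arc r).indicator 1) (arc α) (arc β) := by
  have hK := cosMonotone_indicator_arc r
  have hmeas := measurable_indicator_arc r
  have harcα := isCircleSet_arc hA.nonneg hA.le_pi
  have harcβ := isCircleSet_arc hB.nonneg hB.le_pi
  by_cases h : (∃ y, arcOverlap B r y ≤ β + r - α) ∧
      circleVolume {y | β + r - α < arcOverlap B r y} ≤ ENNReal.ofReal (2 * α)
  · rw [hB.circlePairing_indicator_arc A hr0 hrπ, harcβ.circlePairing_indicator_arc _ hr0 hrπ]
    exact hB.setLIntegral_arcOverlap_le hA hr0 hrπ h.1 h.2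
  · obtain ⟨hmin, hlevel⟩ := hB.compl_exists_arcOverlap_le_and_superlevel_le hA hr0 h
    have hcompl : circlePairing ((arc r).indicator 1) Aᶜ Bᶜ ≤
        circlePairing ((arc r).indicator 1) (arc α)ᶜ (arc β)ᶜ := by
      refine le_trans ?_ (circlePairing_arc_pi_sub_le hK α β)
      rw [hB.compl.circlePairing_indicator_arc _ hr0 hrπ,
        (isCircleSet_arc hB.compl.nonneg hB.compl.le_pi).circlePairing_indicator_arc _ hr0 hrπ]
      exact hB.compl.setLIntegral_arcOverlap_le hA.compl hr0 hrπ hmin hlevel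
    refine (ENNReal.add_le_add_iff_right
      (circlePairing_indicator_arc_ne_top r Aᶜ Set.univ)).1 ?_
    calc circlePairing ((arc r).indicator 1) A B + circlePairing ((arc r).indicator 1) Aᶜ Set.univ
        = circlePairing ((arc r).indicator 1) B Set.univ +
            circlePairing ((arc r).indicator 1) Aᶜ Bᶜ :=
          circlePairing_add_univ_eq hK hmeas hA.measurableSet hB.measurableSet
      _ ≤ circlePairing ((arc r).indicator 1) (arc β) Set.univ +
            circlePairing ((arc r).indicator 1) (arc α)ᶜ (arc β)ᶜ := by
          refine add_le_add (le_of_eq ?_) hcompl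
          rw [circlePairing_univ_right hK, circlePairing_univ_right hK, hB.circleVolume_eq,
            harcβ.circleVolume_eq]
      _ = circlePairing ((arc r).indicator 1) (arc α) (arc β) +
            circlePairing ((arc r).indicator 1) (arc α)ᶜ Set.univ :=
          (circlePairing_add_univ_eq hK hmeas harcα.measurableSet harcβ.measurableSet).symm
      _ = circlePairing ((arc r).indicator 1) (arc α) (arc β) +
            circlePairing ((arc r).indicator 1) Aᶜ Set.univ := by
          rw [circlePairing_univ_right hK, circlePairing_univ_right hK, hA.compl.circleVolume_eq,
            harcα.compl.circleVolume_eq]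

theorem IsCircleSet.circlePairing_indicator_arc_compl_le (hA : IsCircleSet A α)
    (hB : IsCircleSet B β) (hr0 : 0 ≤ r) (hrπ : r ≤ π) :
    circlePairing ((arc r).indicator 1) (arc α) (arc β)ᶜ ≤
      circlePairing ((arc r).indicator 1) A Bᶜ := by
  have hK := cosMonotone_indicator_arc r
  have hmeas := measurable_indicator_arc r
  refine (ENNReal.add_le_add_iff_left (circlePairing_indicator_arc_ne_top r A B)).1 ?_
  calc circlePairing ((arc r).indicator 1) A B +
          circlePairing ((arc r).indicator 1) (arc α) (arc β)ᶜ
      ≤ circlePairing ((arc r).indicator 1) (arc α) (arc β) +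
          circlePairing ((arc r).indicator 1) (arc α) (arc β)ᶜ := by
        gcongr
        exact hA.circlePairing_indicator_arc_le hB hr0 hrπ
    _ = circlePairing ((arc r).indicator 1) A B + circlePairing ((arc r).indicator 1) A Bᶜ := by
        rw [circlePairing_add_compl_right hmeas _ (measurableSet_arc β),
          circlePairing_add_compl_right hmeas _ hB.measurableSet, circlePairing_univ_right hK,
          circlePairing_univ_right hK, hA.circleVolume_eq, circleVolume_arc hA.nonneg hA.le_pi]

theorem measurableSet_ofReal_lt (c : ℝ≥0∞) : MeasurableSet {τ : ℝ | ENNReal.ofReal τ < c} :=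
  measurableSet_lt ENNReal.measurable_ofReal measurable_const

theorem volume_restrict_Ioi_ofReal_lt (c : ℝ≥0∞) :
    volume.restrict (Set.Ioi 0) {τ : ℝ | ENNReal.ofReal τ < c} = c := by
  rw [Measure.restrict_apply (measurableSet_ofReal_lt c)]
  induction c with
  | top => simp
  | coe c =>
    have hset : {τ : ℝ | ENNReal.ofReal τ < c} ∩ Set.Ioi 0 = Set.Ioo 0 (c : ℝ) := by
      ext τ
      simp only [Set.mem_inter_iff, Set.mem_ofPred_eq, Set.mem_Ioi, Set.mem_Ioo]
      rw [and_comm, and_congr_right_iff]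
      intro hτ
      rw [← ENNReal.ofReal_coe_nnreal, ENNReal.ofReal_lt_ofReal_iff_of_nonneg hτ.le]
    rw [hset, volume_Ioo, sub_zero, ENNReal.ofReal_coe_nnreal]

theorem circlePairing_eq_lintegral_superlevel (hK : Measurable K) (A B : Set ℝ) :
    circlePairing K A B =
      ∫⁻ τ in Set.Ioi (0 : ℝ), circlePairing ({z | ENNReal.ofReal τ < K z}.indicator 1) A B := by
  have hprod {L : ℝ → ℝ≥0∞} (hL : Measurable L) : circlePairing L A B =
      ∫⁻ z, L (z.1 - z.2) ∂((circleVolume.restrict A).prod (circleVolume.restrict B)) :=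
    (lintegral_prod _ (hL.comp measurable_sub).aemeasurable).symm
  have hlevel (τ : ℝ) : MeasurableSet {z | ENNReal.ofReal τ < K z} :=
    measurableSet_lt measurable_const hK
  have hjoint : Measurable fun q : (ℝ × ℝ) × ℝ =>
      {z | ENNReal.ofReal q.2 < K z}.indicator (1 : ℝ → ℝ≥0∞) (q.1.1 - q.1.2) :=
    measurable_one.indicator (measurableSet_lt (by fun_prop)
      (hK.comp (measurable_fst.fst.sub measurable_fst.snd)) :
        MeasurableSet {q : (ℝ × ℝ) × ℝ | ENNReal.ofReal q.2 < K (q.1.1 - q.1.2)})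
  simp only [hprod hK, fun τ => hprod (measurable_one.indicator (hlevel τ))]
  rw [← lintegral_lintegral_swap hjoint.aemeasurable]
  exact lintegral_congr fun z => ((lintegral_indicator_one (measurableSet_ofReal_lt _)).trans
    (volume_restrict_Ioi_ofReal_lt (K (z.1 - z.2)))).symm

theorem IsCircleSet.circlePairing_arc_compl_le (hA : IsCircleSet A α) (hB : IsCircleSet B β)
    (hK : CosMonotone K) (hlsc : LowerSemicontinuous K) :
    circlePairing K (arc α) (arc β)ᶜ ≤ circlePairing K A Bᶜ := by
  rw [circlePairing_eq_lintegral_superlevel hlsc.measurable,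
    circlePairing_eq_lintegral_superlevel hlsc.measurable]
  refine lintegral_mono fun τ => ?_
  rcases hK.superlevel_eq_univ_or_arc hlsc (ENNReal.ofReal τ) with huniv | ⟨r, hr, harc⟩
  · have harcα := isCircleSet_arc hA.nonneg hA.le_pi
    have harcβ := isCircleSet_arc hB.nonneg hB.le_pi
    simp only [huniv, Set.indicator_univ, circlePairing, Pi.one_apply, setLIntegral_one,
      setLIntegral_const, hA.circleVolume_eq, harcα.circleVolume_eq, hB.compl.circleVolume_eq,
      harcβ.compl.circleVolume_eq, le_refl]
  · rw [harc]
    exact hA.circlePairing_indicator_arc_compl_le hB hr.1 hr.2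

end CirclePairing

section Rearrangement

open Filter Topology

/-- The half-length of the superlevel set `{f > h}` on the circle; its rearrangement is
`arc (levelRadius f h)`. -/
noncomputable def levelRadius (f : ℝ → ℝ) (h : ℝ) : ℝ := circleVolume.real {x | h < f x} / 2

variable {f : ℝ → ℝ} {h x : ℝ}

theorem measurableSet_superlevel (hf : Measurable f) (h : ℝ) : MeasurableSet {x | h < f x} :=
  measurableSet_lt measurable_const hf

theorem isCircleSet_superlevel (hf : Measurable f) (hper : Function.Periodic f (2 * π)) (h : ℝ) :
    IsCircleSet {x | h < f x} (levelRadius f h) :=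
  isCircleSet_circleVolume_div_two (measurableSet_superlevel hf h) fun x => by
    simp only [Set.mem_ofPred_eq, hper x]

theorem antitone_levelRadius (f : ℝ → ℝ) : Antitone (levelRadius f) := fun h h' hh => by
  have hsub : {x | h' < f x} ⊆ {x | h < f x} := fun x (hx : h' < f x) => hh.trans_lt hx
  exact div_le_div_of_nonneg_right (measureReal_mono hsub (measure_ne_top _ _)) zero_le_two

theorem levelRadius_nonneg (f : ℝ → ℝ) (h : ℝ) : 0 ≤ levelRadius f h :=
  div_nonneg measureReal_nonneg zero_le_two

theorem levelRadius_le_pi (f : ℝ → ℝ) (h : ℝ) : levelRadius f h ≤ π := by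
  have hle : circleVolume.real {x | h < f x} ≤ circleVolume.real Set.univ :=
    measureReal_mono (Set.subset_univ _) (measure_ne_top _ _)
  rw [measureReal_def _ Set.univ, circleVolume_univ, ENNReal.toReal_ofReal two_pi_pos.le] at hle
  unfold levelRadius
  linarith

theorem tendsto_levelRadius_atTop (hf : Measurable f) :
    Tendsto (levelRadius f) atTop (𝓝 0) := by
  have hempty : ⋂ h : ℝ, {x | h < f x} = ∅ :=
    Set.eq_empty_of_forall_notMem fun x hx =>
      lt_irrefl (f x) (Set.mem_iInter.1 hx (f x))
  have hlim := tendsto_measure_iInter_atTop (μ := circleVolume)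
    (fun h => (measurableSet_superlevel hf h).nullMeasurableSet)
    (fun h h' hh x (hx : h' < f x) => hh.trans_lt hx) ⟨0, measure_ne_top _ _⟩
  rw [hempty, measure_empty] at hlim
  simpa only [ENNReal.toReal_zero, zero_div] using!
    ((ENNReal.tendsto_toReal ENNReal.zero_ne_top).comp hlim).div_const 2

theorem exists_gt_lt_levelRadius {c : ℝ} (hc : c < levelRadius f h) :
    ∃ h' > h, c < levelRadius f h' := by
  obtain ⟨u, hanti, hgt, hlim⟩ := exists_seq_strictAnti_tendsto h
  have hunion : ⋃ n, {x | u n < f x} = {x | h < f x} := by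
    ext x
    simp only [Set.mem_iUnion, Set.mem_ofPred_eq]
    exact ⟨fun ⟨n, hn⟩ => (hgt n).trans hn, fun hx => (hlim.eventually_lt_const hx).exists⟩
  have hmeas := tendsto_measure_iUnion_atTop (μ := circleVolume) (s := fun n => {x | u n < f x})
    fun n n' hn x (hx : u n < f x) => (hanti.antitone hn).trans_lt hx
  rw [hunion] at hmeas
  have hradius : Tendsto (fun n => levelRadius f (u n)) atTop (𝓝 (levelRadius f h)) :=
    ((ENNReal.tendsto_toReal (measure_ne_top _ _)).comp hmeas).div_const 2
  obtain ⟨n, hn⟩ := (hradius.eventually_const_lt hc).exists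
  exact ⟨u n, hgt n, hn⟩

theorem mem_symmSet_superlevel_iff (hf : Measurable f) :
    x ∈ symmSet {y | y ∈ Set.Ioo (-π) π ∧ h < f y} ↔ |x| < levelRadius f h := by
  rw [symmSet, Set.mem_Ioo, ← abs_lt, levelRadius, Measure.real,
    Measure.restrict_apply (measurableSet_superlevel hf h), Set.inter_comm]
  rfl

theorem symmRearr_eq_volume_real (hf : Measurable f) (x : ℝ) :
    symmRearr f x = volume.real ({h | |x| < levelRadius f h} ∩ Set.Ioi 0) := by
  classical
  have hmeas : MeasurableSet {h | |x| < levelRadius f h} :=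
    measurableSet_lt measurable_const (antitone_levelRadius f).measurable
  simp only [symmRearr, Set.indicator_apply, mem_symmSet_superlevel_iff hf]
  rw [← measureReal_restrict_apply hmeas, ← integral_indicator_one hmeas]
  simp only [Set.indicator_apply, Set.mem_ofPred_eq, Pi.one_apply]

theorem symmRearr_nonneg (f : ℝ → ℝ) (x : ℝ) : 0 ≤ symmRearr f x :=
  integral_nonneg fun _ => Set.indicator_nonneg (fun _ _ => zero_le_one) _

-- At `x = 0` the left-hand side fails when `f` is essentially unbounded: `symmRearr f 0` is then
-- the integral of a non-integrable function.
theorem lt_symmRearr_iff (hf : Measurable f) (hx : x ≠ 0) (hh : 0 ≤ h) :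
    h < symmRearr f x ↔ |x| < levelRadius f h := by
  have hbound {c : ℝ} (hc : levelRadius f c ≤ |x|) :
      {t | |x| < levelRadius f t} ∩ Set.Ioi 0 ⊆ Set.Ioo 0 c := fun t ht =>
    ⟨ht.2, (antitone_levelRadius f).reflect_lt (hc.trans_lt ht.1)⟩
  rw [symmRearr_eq_volume_real hf]
  constructor
  · intro hlt
    by_contra! hle
    have := measureReal_mono (μ := volume) (hbound hle) measure_Ioo_lt_top.ne
    rw [volume_real_Ioo_of_le hh] at this
    linarith
  · intro hlt
    obtain ⟨h', hh', hlt'⟩ := exists_gt_lt_levelRadius hlt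
    obtain ⟨c, hc⟩ := ((tendsto_levelRadius_atTop hf).eventually_le_const (abs_pos.2 hx)).exists
    have hsub : Set.Ioc 0 h' ⊆ {t | |x| < levelRadius f t} ∩ Set.Ioi 0 := fun t ht =>
      ⟨hlt'.trans_le (antitone_levelRadius f ht.2), ht.1⟩
    have := measureReal_mono (μ := volume) hsub
      ((measure_mono (hbound hc)).trans_lt measure_Ioo_lt_top).ne
    rw [volume_real_Ioc_of_le (by linarith)] at this
    linarith

theorem measurable_symmRearr_prod {α : Type*} [MeasurableSpace α] {F : ℝ × α → ℝ}
    (hF : Measurable F) : Measurable fun z : ℝ × α => symmRearr (fun t => F (t, z.2)) z.1 := by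
  classical
  have hslice (a : α) : Measurable fun t => F (t, a) := by fun_prop
  have hradius : Measurable fun q : α × ℝ => levelRadius (fun t => F (t, q.1)) q.2 := by
    have hset : MeasurableSet {w : (α × ℝ) × ℝ | w.1.2 < F (w.2, w.1.1)} :=
      measurableSet_lt (by fun_prop) (hF.comp (by fun_prop))
    exact (measurable_measure_prodMk_left hset).ennreal_toReal.div_const 2
  have hset : MeasurableSet
      {w : (ℝ × α) × ℝ | |w.1.1| < levelRadius (fun t => F (t, w.1.2)) w.2} :=
    measurableSet_lt (by fun_prop)
      (hradius.comp (by fun_prop : Measurable fun w : (ℝ × α) × ℝ => (w.1.2, w.2)))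
  simp only [symmRearr, Set.indicator_apply, mem_symmSet_superlevel_iff (hslice _)]
  exact ((measurable_const.ite hset measurable_const).stronglyMeasurable.integral_prod_right
    (ν := volume.restrict (Set.Ioi 0))).measurable

theorem periodic_periodize (f : ℝ → ℝ) : Function.Periodic (periodize f) (2 * π) := by
  intro x
  have hshift : (x + 2 * π + π) / (2 * π) = (x + π) / (2 * π) + 1 := by field_simp; ring
  rw [periodize, periodize, hshift, Int.floor_add_one]
  push_cast
  ring_nf

theorem periodize_eqOn_Ioo (f : ℝ → ℝ) : Set.EqOn (periodize f) f (Set.Ioo (-π) π) := by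
  intro x hx
  have hfloor : ⌊(x + π) / (2 * π)⌋ = 0 := by
    rw [Int.floor_eq_zero_iff]
    exact ⟨div_nonneg (by linarith [hx.1]) two_pi_pos.le,
      (div_lt_one two_pi_pos).2 (by linarith [hx.2])⟩
  simp [periodize, hfloor]

theorem perRearr_nonneg (f : ℝ → ℝ) (x : ℝ) : 0 ≤ perRearr f x :=
  symmRearr_nonneg _ _

theorem measurable_perRearr_prod {α : Type*} [MeasurableSpace α] {F : ℝ × α → ℝ}
    (hF : Measurable F) : Measurable fun z : ℝ × α => perRearr (fun t => F (t, z.2)) z.1 := by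
  have hfold : Measurable fun z : ℝ × α => (z.1 - 2 * π * (⌊(z.1 + π) / (2 * π)⌋ : ℝ), z.2) := by
    fun_prop
  exact (measurable_symmRearr_prod hF).comp hfold

theorem measurable_perRearr (hf : Measurable f) : Measurable (perRearr f) :=
  (measurable_perRearr_prod (α := Unit) (hf.comp measurable_fst)).comp
    (measurable_id.prodMk (measurable_const (a := ())))

theorem superlevel_perRearr_ae_eq_arc (hf : Measurable f) (hh : 0 ≤ h) :
    ({x | h < perRearr f x} : Set ℝ) =ᵐ[circleVolume] arc (levelRadius f h) := by
  filter_upwards [ae_restrict_mem measurableSet_Ioo, Measure.ae_ne _ 0] with x hx hx0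
  refine propext ?_
  change h < perRearr f x ↔ x ∈ arc (levelRadius f h)
  rw [perRearr, periodize_eqOn_Ioo _ hx, lt_symmRearr_iff hf hx0 hh,
    mem_arc_iff_abs_lt (levelRadius_nonneg f h) (levelRadius_le_pi f h) (abs_lt.2 hx).le]

end Rearrangement

section CircleEnergy

/-- The interaction energy of `f` and `g` on the circle with kernel `K` and cost `Φ`. -/
noncomputable def circleEnergy (Φ K : ℝ → ℝ≥0∞) (f g : ℝ → ℝ) : ℝ≥0∞ :=
  ∫⁻ x, ∫⁻ y, Φ (f x - g y) * K (x - y) ∂circleVolume ∂circleVolume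

variable {Φ Ψ K : ℝ → ℝ≥0∞} {f g : ℝ → ℝ}

theorem circlePairing_congr_ae {A A' B B' : Set ℝ} (hA : A =ᵐ[circleVolume] A')
    (hB : B =ᵐ[circleVolume] B') : circlePairing K A B = circlePairing K A' B' := by
  unfold circlePairing
  rw [setLIntegral_congr hA]
  exact lintegral_congr fun x => setLIntegral_congr hB

theorem circlePairing_eq_setLIntegral_prod (hK : Measurable K) (A B : Set ℝ) :
    circlePairing K A B =
      ∫⁻ z in A ×ˢ B, K (z.1 - z.2) ∂(circleVolume.prod circleVolume) := by
  rw [← Measure.prod_restrict]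
  exact (lintegral_prod _ (hK.comp measurable_sub).aemeasurable).symm

theorem superlevel_eq_empty_or_Ioi_of_monotone (hΨ : Monotone Ψ) (hlsc : LowerSemicontinuous Ψ)
    (hzero : Ψ 0 = 0) (c : ℝ≥0∞) :
    {t | c < Ψ t} = ∅ ∨ ∃ σ, 0 ≤ σ ∧ {t | c < Ψ t} = Set.Ioi σ := by
  refine or_iff_not_imp_left.2 fun hne => ?_
  obtain ⟨t₀, ht₀⟩ := Set.nonempty_iff_ne_empty.2 hne
  have hmem0 : (0 : ℝ) ∈ Ψ ⁻¹' Set.Iic c := by simp [hzero]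
  have hbdd : BddAbove (Ψ ⁻¹' Set.Iic c) :=
    ⟨t₀, fun t (ht : Ψ t ≤ c) => (hΨ.reflect_lt (lt_of_le_of_lt ht ht₀)).le⟩
  have hgreatest := (hlsc.isClosed_preimage c).isGreatest_csSup ⟨0, hmem0⟩ hbdd
  refine ⟨_, hgreatest.2 hmem0, Set.ext fun t => ⟨fun ht => ?_, fun ht => ?_⟩⟩
  · exact hΨ.reflect_lt (lt_of_le_of_lt hgreatest.1 ht)
  · exact lt_of_not_ge fun hle : Ψ t ≤ c => (hgreatest.2 hle).not_gt ht

theorem setLIntegral_Iic_sub_eq_prod_measure {a b : ℝ} (hΨ : Measurable Ψ) (hb : 0 ≤ b) :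
    ∫⁻ t in Set.Iic (a - b), Ψ t = (volume.restrict (Set.Ici 0)).prod (volume.restrict (Set.Ioi 0))
      {q : ℝ × ℝ | ENNReal.ofReal q.2 < Ψ (a - q.1) ∧ ¬ q.1 < b} := by
  have hsub := (Measure.measurePreserving_sub_left volume a).setLIntegral_comp_preimage_emb
    (MeasurableEquiv.subLeft a).measurableEmbedding Ψ (Set.Iic (a - b))
  have hset : MeasurableSet {q : ℝ × ℝ | ENNReal.ofReal q.2 < Ψ (a - q.1) ∧ ¬ q.1 < b} :=
    (measurableSet_lt (by fun_prop) (hΨ.comp (by fun_prop))).inter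
      (measurableSet_lt measurable_fst measurable_const).compl
  have hsection (h : ℝ) : volume.restrict (Set.Ioi 0)
      (Prod.mk h ⁻¹' {q : ℝ × ℝ | ENNReal.ofReal q.2 < Ψ (a - q.1) ∧ ¬ q.1 < b}) =
        (Set.Ici b).indicator (fun h => Ψ (a - h)) h := by
    by_cases hbh : b ≤ h
    · rw [Set.indicator_of_mem (Set.mem_Ici.2 hbh), ← volume_restrict_Ioi_ofReal_lt (Ψ (a - h))]
      simp only [Set.preimage_ofPred_eq, not_lt.2 hbh, not_false_eq_true, and_true]
    · rw [Set.indicator_of_notMem (Set.notMem_Ici.2 (not_le.1 hbh))]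
      simp only [Set.preimage_ofPred_eq, not_lt, hbh, and_false, Set.ofPred_false, measure_empty]
  rw [Measure.prod_apply hset, lintegral_congr hsection, setLIntegral_indicator measurableSet_Ici,
    Set.Ici_inter_Ici, sup_eq_left.2 hb, ← hsub, Set.preimage_const_sub_Iic, sub_sub_cancel]

theorem circleEnergy_eq_lintegral_circlePairing (hΨ : Measurable Ψ) (hK : Measurable K)
    (hf : Measurable f) (hg : Measurable g) (hg0 : ∀ x, 0 ≤ g x) :
    circleEnergy (fun s => ∫⁻ t in Set.Iic s, Ψ t) K f g =
      ∫⁻ q : ℝ × ℝ, circlePairing K {x | ENNReal.ofReal q.2 < Ψ (f x - q.1)} {y | q.1 < g y}ᶜ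
        ∂((volume.restrict (Set.Ici 0)).prod (volume.restrict (Set.Ioi 0))) := by
  let layer (z : ℝ × ℝ) : Set (ℝ × ℝ) :=
    {q | ENNReal.ofReal q.2 < Ψ (f z.1 - q.1) ∧ ¬ q.1 < g z.2}
  have hlayer : MeasurableSet {w : (ℝ × ℝ) × (ℝ × ℝ) | w.2 ∈ layer w.1} :=
    (measurableSet_lt (by fun_prop) (hΨ.comp (by fun_prop))).inter
      (measurableSet_lt measurable_snd.fst (hg.comp measurable_fst.snd)).compl
  have hjoint : Measurable (Function.uncurry fun z q =>
      (layer z).indicator (fun _ => K (z.1 - z.2)) q) :=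
    (hK.comp (by fun_prop : Measurable fun w : (ℝ × ℝ) × (ℝ × ℝ) => w.1.1 - w.1.2)).indicator hlayer
  have hprim : Measurable fun s => ∫⁻ t in Set.Iic s, Ψ t :=
    Monotone.measurable fun s s' hs => lintegral_mono_set (Set.Iic_subset_Iic.2 hs)
  have hcost : Measurable fun z : ℝ × ℝ =>
      (∫⁻ t in Set.Iic (f z.1 - g z.2), Ψ t) * K (z.1 - z.2) :=
    (hprim.comp (by fun_prop : Measurable fun z : ℝ × ℝ => f z.1 - g z.2)).mul
      (hK.comp measurable_sub)
  calc circleEnergy (fun s => ∫⁻ t in Set.Iic s, Ψ t) K f g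
      = ∫⁻ z : ℝ × ℝ, (∫⁻ t in Set.Iic (f z.1 - g z.2), Ψ t) * K (z.1 - z.2)
          ∂(circleVolume.prod circleVolume) := (lintegral_prod _ hcost.aemeasurable).symm
    _ = ∫⁻ z : ℝ × ℝ, ∫⁻ q : ℝ × ℝ, (layer z).indicator (fun _ => K (z.1 - z.2)) q
          ∂((volume.restrict (Set.Ici 0)).prod (volume.restrict (Set.Ioi 0)))
          ∂(circleVolume.prod circleVolume) := by
        refine lintegral_congr fun z => ?_
        rw [setLIntegral_Iic_sub_eq_prod_measure hΨ (hg0 z.2), mul_comm]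
        exact (lintegral_indicator_const (hlayer.preimage measurable_prodMk_left) _).symm
    _ = _ := by
        rw [lintegral_lintegral_swap hjoint.aemeasurable]
        refine lintegral_congr fun q => ?_
        rw [circlePairing_eq_setLIntegral_prod hK]
        exact lintegral_indicator (hlayer.preimage measurable_prodMk_right) _

theorem circleEnergy_perRearr_le_of_monotone (hΨ : Monotone Ψ) (hΨlsc : LowerSemicontinuous Ψ)
    (hzero : Ψ 0 = 0) (hK : CosMonotone K) (hKlsc : LowerSemicontinuous K) (hf : Measurable f)
    (hfper : Function.Periodic f (2 * π)) (hg : Measurable g)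
    (hgper : Function.Periodic g (2 * π)) (hg0 : ∀ x, 0 ≤ g x) :
    circleEnergy (fun s => ∫⁻ t in Set.Iic s, Ψ t) K (perRearr f) (perRearr g) ≤
      circleEnergy (fun s => ∫⁻ t in Set.Iic s, Ψ t) K f g := by
  rw [circleEnergy_eq_lintegral_circlePairing hΨ.measurable hKlsc.measurable
      (measurable_perRearr hf) (measurable_perRearr hg) (perRearr_nonneg g),
    circleEnergy_eq_lintegral_circlePairing hΨ.measurable hKlsc.measurable hf hg hg0]
  have hlevel (h : ℝ) (hh : 0 ≤ h) (τ : ℝ) :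
      circlePairing K {x | ENNReal.ofReal τ < Ψ (perRearr f x - h)} {y | h < perRearr g y}ᶜ ≤
        circlePairing K {x | ENNReal.ofReal τ < Ψ (f x - h)} {y | h < g y}ᶜ := by
    rcases superlevel_eq_empty_or_Ioi_of_monotone hΨ hΨlsc hzero (ENNReal.ofReal τ) with
      hempty | ⟨σ, hσ, hIoi⟩
    · have hnone (v : ℝ → ℝ) : {x | ENNReal.ofReal τ < Ψ (v x - h)} = ∅ :=
        Set.eq_empty_of_forall_notMem fun x => Set.eq_empty_iff_forall_notMem.1 hempty (v x - h)
      rw [hnone, hnone]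
      simp only [circlePairing, Measure.restrict_empty, lintegral_zero_measure, le_refl]
    · have hshift (v : ℝ → ℝ) : {x | ENNReal.ofReal τ < Ψ (v x - h)} = {x | h + σ < v x} := by
        ext x
        change v x - h ∈ {t | ENNReal.ofReal τ < Ψ t} ↔ _
        rw [hIoi]
        exact Set.mem_Ioi.trans lt_sub_iff_add_lt'
      rw [hshift, hshift, circlePairing_congr_ae (superlevel_perRearr_ae_eq_arc hf (by linarith))
        (superlevel_perRearr_ae_eq_arc hg hh).compl]
      exact (isCircleSet_superlevel hf hfper _).circlePairing_arc_compl_le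
        (isCircleSet_superlevel hg hgper h) hK hKlsc
  rw [Measure.prod_restrict]
  exact setLIntegral_mono_ae' (measurableSet_Ici.prod measurableSet_Ioi)
    (ae_of_all _ fun q hq => hlevel q.1 hq.1 q.2)

theorem lintegral_Iic_indicator_rpow_sub_one {p : ℝ} (hp : 0 < p) (s : ℝ) :
    ∫⁻ t in Set.Iic s, (Set.Ioi 0).indicator (fun t => ENNReal.ofReal (p * t ^ (p - 1))) t =
      ENNReal.ofReal (max s 0 ^ p) := by
  rcases le_or_gt s 0 with hs | hs
  · rw [setLIntegral_indicator measurableSet_Ioi, max_eq_right hs, zero_rpow hp.ne',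
      Set.Ioi_inter_Iic, Set.Ioc_eq_empty hs.not_gt]
    simp
  · have hint : IntervalIntegrable (fun t : ℝ => p * t ^ (p - 1)) volume 0 s :=
      (intervalIntegral.intervalIntegrable_rpow' (by linarith)).const_mul p
    rw [setLIntegral_indicator measurableSet_Ioi, Set.Ioi_inter_Iic, max_eq_left hs.le,
      ← ofReal_integral_eq_lintegral_ofReal
        ((intervalIntegrable_iff_integrableOn_Ioc_of_le hs.le).1 hint),
      ← intervalIntegral.integral_of_le hs.le, intervalIntegral.integral_const_mul,
      integral_rpow (Or.inl (by linarith)), sub_add_cancel, zero_rpow hp.ne', sub_zero,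
      mul_div_cancel₀ _ hp.ne']
    exact (ae_restrict_mem measurableSet_Ioc).mono fun t ht =>
      mul_nonneg hp.le (rpow_nonneg ht.1.le _)

theorem ofReal_abs_rpow_eq_add {p : ℝ} (hp : 0 < p) (s : ℝ) :
    ENNReal.ofReal (|s| ^ p) = ENNReal.ofReal (max s 0 ^ p) + ENNReal.ofReal (max (-s) 0 ^ p) := by
  rcases le_total s 0 with hs | hs
  · simp [abs_of_nonpos hs, max_eq_right hs, max_eq_left (neg_nonneg.2 hs), zero_rpow hp.ne']
  · simp [abs_of_nonneg hs, max_eq_left hs, max_eq_right (neg_nonpos.2 hs), zero_rpow hp.ne']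

theorem circleEnergy_add_swap (hΦ : Measurable Φ) (hK : CosMonotone K) (hKm : Measurable K)
    (hf : Measurable f) (hg : Measurable g) :
    circleEnergy (fun s => Φ s + Φ (-s)) K f g = circleEnergy Φ K f g + circleEnergy Φ K g f := by
  have hmeas {v w : ℝ → ℝ} (hv : Measurable v) (hw : Measurable w) :
      Measurable fun z : ℝ × ℝ => Φ (v z.1 - w z.2) * K (z.1 - z.2) :=
    (hΦ.comp (by fun_prop)).mul (hKm.comp measurable_sub)
  have hswap : circleEnergy Φ K g f =
      ∫⁻ x, ∫⁻ y, Φ (g y - f x) * K (x - y) ∂circleVolume ∂circleVolume := by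
    rw [circleEnergy, lintegral_lintegral_swap (hmeas hg hf).aemeasurable]
    simp only [hK.sub_comm]
  rw [hswap, circleEnergy, circleEnergy, ← lintegral_add_left (hmeas hf hg).lintegral_prod_right']
  refine lintegral_congr fun x => ?_
  simp only [neg_sub, add_mul]
  exact lintegral_add_left ((hmeas hf hg).comp measurable_prodMk_left) _

theorem monotone_indicator_rpow_sub_one {p : ℝ} (hp : 1 ≤ p) :
    Monotone ((Set.Ioi (0 : ℝ)).indicator fun t => ENNReal.ofReal (p * t ^ (p - 1))) := by
  intro s t hst
  by_cases hs : s ∈ Set.Ioi (0 : ℝ)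
  · have hs0 : 0 < s := hs
    rw [Set.indicator_of_mem hs, Set.indicator_of_mem (Set.mem_Ioi.2 (hs0.trans_le hst))]
    gcongr
  · rw [Set.indicator_of_notMem hs]
    exact zero_le

theorem lowerSemicontinuous_indicator_rpow_sub_one (p : ℝ) :
    LowerSemicontinuous
      ((Set.Ioi (0 : ℝ)).indicator fun t => ENNReal.ofReal (p * t ^ (p - 1))) := by
  intro t
  by_cases ht : t ∈ Set.Ioi (0 : ℝ)
  · refine ContinuousAt.lowerSemicontinuousAt (ContinuousAt.congr ?_
      (Set.eqOn_indicator.symm.eventuallyEq_of_mem (isOpen_Ioi.mem_nhds ht)))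
    have ht0 : t ≠ 0 := (Set.mem_Ioi.1 ht).ne'
    exact ENNReal.continuous_ofReal.continuousAt.comp (by fun_prop (disch := simp [ht0]))
  · intro c hc
    rw [Set.indicator_of_notMem ht] at hc
    exact absurd hc not_lt_zero

theorem circleEnergy_posPart_perRearr_le {p : ℝ} (hp : 1 ≤ p) (hK : CosMonotone K)
    (hKlsc : LowerSemicontinuous K) (hf : Measurable f) (hfper : Function.Periodic f (2 * π))
    (hg : Measurable g) (hgper : Function.Periodic g (2 * π)) (hg0 : ∀ x, 0 ≤ g x) :
    circleEnergy (fun s => ENNReal.ofReal (max s 0 ^ p)) K (perRearr f) (perRearr g) ≤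
      circleEnergy (fun s => ENNReal.ofReal (max s 0 ^ p)) K f g := by
  simp only [← lintegral_Iic_indicator_rpow_sub_one (zero_lt_one.trans_le hp)]
  exact circleEnergy_perRearr_le_of_monotone (monotone_indicator_rpow_sub_one hp)
    (lowerSemicontinuous_indicator_rpow_sub_one p) (Set.indicator_of_notMem (lt_irrefl 0) _)
    hK hKlsc hf hfper hg hgper hg0

theorem circleEnergy_perRearr_abs_le {p : ℝ} (hp : 1 ≤ p) (hK : CosMonotone K)
    (hKlsc : LowerSemicontinuous K) (hf : Measurable f) (hfper : Function.Periodic f (2 * π))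
    (hg : Measurable g) (hgper : Function.Periodic g (2 * π)) :
    circleEnergy (fun s => ENNReal.ofReal (|s| ^ p)) K (perRearr fun t => |f t|)
        (perRearr fun t => |g t|) ≤ circleEnergy (fun s => ENNReal.ofReal (|s| ^ p)) K f g := by
  have hp0 : 0 < p := zero_lt_one.trans_le hp
  have hsplit {v w : ℝ → ℝ} (hv : Measurable v) (hw : Measurable w) :=
    circleEnergy_add_swap (Φ := fun s => ENNReal.ofReal (max s 0 ^ p)) (by fun_prop) hK
      hKlsc.measurable hv hw
  have habsper {v : ℝ → ℝ} (hv : Function.Periodic v (2 * π)) :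
      Function.Periodic (fun t => |v t|) (2 * π) := hv.comp abs
  calc circleEnergy (fun s => ENNReal.ofReal (|s| ^ p)) K (perRearr fun t => |f t|)
        (perRearr fun t => |g t|)
      ≤ circleEnergy (fun s => ENNReal.ofReal (|s| ^ p)) K (fun t => |f t|) (fun t => |g t|) := by
        simp only [ofReal_abs_rpow_eq_add hp0]
        rw [hsplit (measurable_perRearr hf.abs) (measurable_perRearr hg.abs), hsplit hf.abs hg.abs]
        exact add_le_add
          (circleEnergy_posPart_perRearr_le hp hK hKlsc hf.abs (habsper hfper) hg.abs
            (habsper hgper) fun x => abs_nonneg _)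
          (circleEnergy_posPart_perRearr_le hp hK hKlsc hg.abs (habsper hgper) hf.abs
            (habsper hfper) fun x => abs_nonneg _)
    _ ≤ circleEnergy (fun s => ENNReal.ofReal (|s| ^ p)) K f g := by
        refine lintegral_mono fun x => lintegral_mono fun y => ?_
        change ENNReal.ofReal (|(|f x| - |g y|)| ^ p) * _ ≤ ENNReal.ofReal (|f x - g y| ^ p) * _
        gcongr ENNReal.ofReal (?_ ^ p) * _
        exact abs_abs_sub_abs_le_abs_sub _ _

end CircleEnergy

section Assembly

theorem lintegral_eq_lintegral_circleVolume_tsum {h : ℝ → ℝ≥0∞} (hh : Measurable h) :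
    ∫⁻ y, h y = ∫⁻ y, ∑' k : ℤ, h (y + 2 * π * k) ∂circleVolume := by
  rw [lintegral_tsum fun k => by fun_prop, ← setLIntegral_univ,
    ← iUnion_Ioc_add_zsmul two_pi_pos (-π), lintegral_iUnion (fun _ => measurableSet_Ioc)
      (Set.pairwise_disjoint_Ioc_add_zsmul _ _)]
  refine tsum_congr fun k => ?_
  have htranslate := (measurePreserving_add_right volume (2 * π * k)).setLIntegral_comp_preimage_emb
    (MeasurableEquiv.addRight (2 * π * k)).measurableEmbedding h
    (Set.Ioc (-π + k • (2 * π)) (-π + (k + 1) • (2 * π)))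
  rw [← htranslate, Set.preimage_add_const_Ioc, setLIntegral_congr Ioo_ae_eq_Ioc]
  congr 3 <;> simp only [zsmul_eq_mul, Int.cast_add, Int.cast_one] <;> ring

theorem circleEnergy_periodizedRieszKernel {Φ : ℝ → ℝ≥0∞} {f g : ℝ → ℝ} (hΦ : Measurable Φ)
    (hg : Measurable g) (hgper : Function.Periodic g (2 * π)) (q ρ : ℝ) :
    circleEnergy Φ (periodizedRieszKernel q ρ) f g = ∫⁻ x, (∫⁻ y,
      Φ (f x - g y) * ENNReal.ofReal ((x - y) ^ 2 + ρ ^ 2) ^ (-(q / 2))) ∂circleVolume := by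
  refine lintegral_congr fun x => ?_
  rw [lintegral_eq_lintegral_circleVolume_tsum (by fun_prop)]
  refine lintegral_congr fun y => ?_
  have hshift (k : ℤ) : g (y + 2 * π * k) = g y := by
    rw [mul_comm]
    exact hgper.int_mul k y
  simp only [hshift, ENNReal.tsum_mul_left, periodizedRieszKernel]
  rw [← (Equiv.neg ℤ).tsum_eq]
  congr! 6 with k
  rw [Equiv.neg_apply]
  push_cast
  ring

theorem lintegral_prod_lintegral_prod_comm {α β : Type*} [MeasurableSpace α] [MeasurableSpace β]
    {μ ν : Measure α} {ρ : Measure β} [SFinite μ] [SFinite ν] [SFinite ρ]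
    {H : α × β → α × β → ℝ≥0∞} (hH : Measurable (Function.uncurry H)) :
    ∫⁻ x, ∫⁻ y, H x y ∂(ν.prod ρ) ∂(μ.prod ρ) =
      ∫⁻ x', ∫⁻ y', ∫⁻ x, ∫⁻ y, H (x, x') (y, y') ∂ν ∂μ ∂ρ ∂ρ := by
  have hinner (x : α × β) : ∫⁻ y, H x y ∂(ν.prod ρ) = ∫⁻ y', ∫⁻ y, H x (y, y') ∂ν ∂ρ :=
    lintegral_prod_symm _ (hH.comp measurable_prodMk_left).aemeasurable
  have houter : Measurable fun x => ∫⁻ y, H x y ∂(ν.prod ρ) := hH.lintegral_prod_right'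
  rw [lintegral_prod_symm _ houter.aemeasurable]
  refine lintegral_congr fun x' => ?_
  simp only [hinner]
  refine lintegral_lintegral_swap (Measurable.aemeasurable ?_)
  have hslice : Measurable fun w : (α × β) × α => ((w.1.1, x'), (w.2, w.1.2)) := by fun_prop
  exact (hH.comp hslice).lintegral_prod_right'

theorem ofReal_div_sqrt_rpow {a w : ℝ} (ha : 0 ≤ a) (hw : 0 ≤ w) (h0 : w = 0 → a = 0) (q : ℝ) :
    ENNReal.ofReal (a / √w ^ q) = ENNReal.ofReal a * ENNReal.ofReal w ^ (-(q / 2)) := by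
  rcases hw.eq_or_lt with rfl | hw
  · simp [h0 rfl]
  · rw [ENNReal.ofReal_rpow_of_pos hw, ← ENNReal.ofReal_mul ha, rpow_neg hw.le, div_eq_mul_inv,
      sqrt_eq_rpow, ← rpow_mul hw.le]
    ring_nf

theorem gagP_eq_lintegral_circleEnergy {m : ℕ} {s p : ℝ} (hp : p ≠ 0)
    {v : ℝ × EuclideanSpace ℝ (Fin m) → ℝ} (hv : Measurable v)
    (hper : ∀ x', Function.Periodic (fun t => v (t, x')) (2 * π)) :
    gagP m s p v = ∫⁻ x', ∫⁻ y', circleEnergy (fun a => ENNReal.ofReal (|a| ^ p))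
      (periodizedRieszKernel (m + 1 + s * p) ‖x' - y'‖) (fun t => v (t, x'))
        (fun t => v (t, y')) := by
  have hstrip : volume.restrict {x : ℝ × EuclideanSpace ℝ (Fin m) | x.1 ∈ Set.Ioo (-π) π} =
      circleVolume.prod volume := by
    have hprod : {x : ℝ × EuclideanSpace ℝ (Fin m) | x.1 ∈ Set.Ioo (-π) π} =
        Set.Ioo (-π) π ×ˢ Set.univ := by ext; simp
    rw [hprod, Measure.volume_eq_prod, ← Measure.prod_restrict, Measure.restrict_univ]
  have hkernel (x y : ℝ × EuclideanSpace ℝ (Fin m)) :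
      ENNReal.ofReal (|v x - v y| ^ p /
          √((x.1 - y.1) ^ 2 + ‖x.2 - y.2‖ ^ 2) ^ ((m : ℝ) + 1 + s * p)) =
        ENNReal.ofReal (|v x - v y| ^ p) *
          ENNReal.ofReal ((x.1 - y.1) ^ 2 + ‖x.2 - y.2‖ ^ 2) ^ (-(((m : ℝ) + 1 + s * p) / 2)) := by
    refine ofReal_div_sqrt_rpow (by positivity) (by positivity) (fun h => ?_) _
    rw [add_eq_zero_iff_of_nonneg (sq_nonneg _) (sq_nonneg _), sq_eq_zero_iff, sq_eq_zero_iff,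
      norm_eq_zero, sub_eq_zero, sub_eq_zero] at h
    rw [Prod.ext h.1 h.2, sub_self, abs_zero, zero_rpow hp]
  have hmeas : Measurable (Function.uncurry fun x y : ℝ × EuclideanSpace ℝ (Fin m) =>
      ENNReal.ofReal (|v x - v y| ^ p) *
        ENNReal.ofReal ((x.1 - y.1) ^ 2 + ‖x.2 - y.2‖ ^ 2) ^ (-(((m : ℝ) + 1 + s * p) / 2))) := by
    unfold Function.uncurry
    fun_prop
  simp only [gagP, hstrip, hkernel]
  rw [Measure.volume_eq_prod, lintegral_prod_lintegral_prod_comm hmeas]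
  refine lintegral_congr fun x' => lintegral_congr fun y' => ?_
  rw [circleEnergy_periodizedRieszKernel (by fun_prop) (by fun_prop) (hper y')]

theorem gagP_perRearr1_le {m : ℕ} {s p : ℝ} (hp : 1 ≤ p) (hq : 0 < (m : ℝ) + 1 + s * p)
    {u : ℝ × EuclideanSpace ℝ (Fin m) → ℝ} (hu : Measurable u)
    (huper : ∀ x', Function.Periodic (fun t => u (t, x')) (2 * π)) :
    gagP m s p (perRearr1 m u) ≤ gagP m s p u := by
  have hp0 : p ≠ 0 := (zero_lt_one.trans_le hp).ne'
  have hmeas : Measurable (perRearr1 m u) :=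
    measurable_perRearr_prod (F := fun x => |u x|) (by fun_prop)
  have hslice (x' : EuclideanSpace ℝ (Fin m)) :
      (fun t => perRearr1 m u (t, x')) = perRearr fun t => |u (t, x')| := rfl
  have hper (x' : EuclideanSpace ℝ (Fin m)) :
      Function.Periodic (fun t => perRearr1 m u (t, x')) (2 * π) := by
    rw [hslice]
    exact periodic_periodize _
  rw [gagP_eq_lintegral_circleEnergy hp0 hmeas hper, gagP_eq_lintegral_circleEnergy hp0 hu huper]
  simp only [hslice]
  gcongr with x' y'
  exact circleEnergy_perRearr_abs_le (f := fun t => u (t, x')) (g := fun t => u (t, y')) hp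
    (cosMonotone_periodizedRieszKernel hq _) (lowerSemicontinuous_periodizedRieszKernel _ _)
    (by fun_prop) (huper x') (by fun_prop) (huper y')

end Assembly

theorem stmt_6_general (m : ℕ) (s p : ℝ) (hp : 1 ≤ p) (hq : 0 < (m : ℝ) + 1 + s * p)
    (u : ℝ × EuclideanSpace ℝ (Fin m) → ℝ) (hu : Measurable u)
    (huper : ∀ x : ℝ × EuclideanSpace ℝ (Fin m), u (x.1 + 2 * π, x.2) = u x) :
    gagSeminorm m s p (perRearr1 m u) ≤ gagSeminorm m s p u :=
  ENNReal.rpow_le_rpow (gagP_perRearr1_le hp hq hu fun x' t => huper (t, x'))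
    (by positivity)

theorem stmt_6 (m : ℕ) (s p : ℝ) (hs0 : 0 < s) (hs1 : s < 1) (hp : 1 ≤ p)
    (u : ℝ × EuclideanSpace ℝ (Fin m) → ℝ) (hu : Measurable u)
    (huper : ∀ x : ℝ × EuclideanSpace ℝ (Fin m), u (x.1 + 2 * π, x.2) = u x)
    (hfin : gagP m s p u ≠ ⊤) :
    gagSeminorm m s p (perRearr1 m u) ≤ gagSeminorm m s p u := by
  exact stmt_6_general m s p hp (by positivity) u hu huper
end
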